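/- arXiv:2007.05885 — 2 statements merged into one kernel-verified Lean document; each statement's English description precedes it below -/
import Mathlib

section
/- (Knight–Nadel) Every Scott set of cardinality at most ℵ₁ is the standard system of some non-standard model of Peano arithmetic. -/
open FirstOrder FirstOrder.Language

/-- Function symbols of the language of arithmetic: `0`, `1`, `+`, `·`. -/
inductive arithFunc : ℕ → Type
  | zero : arithFunc 0
  | one : arithFunc 0
  | add : arithFunc 2
  | mul : arithFunc 2
  deriving DecidableEq

/-- Relation symbols of the language of arithmetic: `<`. -/
inductive arithRel : ℕ → Type
  | lt : arithRel 2
  deriving DecidableEq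

/-- The first-order language of arithmetic `{0, 1, +, ·, <}`. -/
def arith : FirstOrder.Language := ⟨arithFunc, arithRel⟩

namespace Arith

variable {M : Type*} [arith.Structure M]

/-- The interpretation of `0`. -/
def zeroM (M : Type*) [arith.Structure M] : M :=
  Structure.funMap (L := arith) arithFunc.zero ![]

/-- The interpretation of `1`. -/
def oneM (M : Type*) [arith.Structure M] : M :=
  Structure.funMap (L := arith) arithFunc.one ![]

/-- The interpretation of `+`. -/
def addM (x y : M) : M := Structure.funMap (L := arith) arithFunc.add ![x, y]

/-- The interpretation of `·`. -/
def mulM (x y : M) : M := Structure.funMap (L := arith) arithFunc.mul ![x, y]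

/-- The interpretation of `<`. -/
def ltM (x y : M) : Prop := Structure.RelMap (L := arith) arithRel.lt ![x, y]

/-- Non-strict order. -/
def leM (x y : M) : Prop := ltM x y ∨ x = y

/-- The numeral `n` in `M`: `0`, or `1 + 1 + ⋯ + 1`. -/
def numeral (M : Type*) [arith.Structure M] : ℕ → M
  | 0 => zeroM M
  | n + 1 => addM (numeral M n) (oneM M)

/-- The standard `arith`-structure on `ℕ`. -/
instance : arith.Structure ℕ where
  funMap {n} f v :=
    match f with
    | .zero => 0
    | .one => 1
    | .add => v 0 + v 1
    | .mul => v 0 * v 1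
  RelMap {n} r v :=
    match r with
    | .lt => v 0 < v 1

/-- `M` is a model of Peano arithmetic: it satisfies the finitely many basic axioms of
`PA` together with induction for all parametrically definable sets (which is equivalent
to the usual first-order induction scheme). -/
def IsPAModel (M : Type*) [arith.Structure M] : Prop :=
  (∀ x : M, addM x (zeroM M) = x) ∧
  (∀ x y : M, addM x (addM y (oneM M)) = addM (addM x y) (oneM M)) ∧
  (∀ x : M, mulM x (zeroM M) = zeroM M) ∧
  (∀ x y : M, mulM x (addM y (oneM M)) = addM (mulM x y) x) ∧
  (∀ x : M, ¬ ltM x (zeroM M)) ∧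
  (∀ x y : M, ltM x (addM y (oneM M)) ↔ (ltM x y ∨ x = y)) ∧
  (∀ x : M, addM x (oneM M) ≠ zeroM M) ∧
  (∀ x y : M, addM x (oneM M) = addM y (oneM M) → x = y) ∧
  (∀ s : Set M, Set.Definable₁ (Set.univ : Set M) arith s →
    zeroM M ∈ s → (∀ x ∈ s, addM x (oneM M) ∈ s) → ∀ x : M, x ∈ s)

/-- An element of `M` is standard if it is a numeral. -/
def IsStd (x : M) : Prop := ∃ n : ℕ, x = numeral M n

/-- `M` is a non-standard model of `PA`: a model of `PA` not isomorphic to the standard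
model `ℕ`. -/
def NonstandardModel (M : Type*) [arith.Structure M] : Prop :=
  IsPAModel M ∧ ¬ Nonempty (M ≃[arith] ℕ)

/-- `(x)_i = 1`: the `i`-th binary digit of `x` is `1`, for standard `i`.  This is expressed
by saying that `x = u·2^(i+1) + (2^i + v)` with `v < 2^i`, where `2^i`, `2^(i+1)` are
numerals. -/
def digitB (x : M) (i : ℕ) : Prop :=
  ∃ u v : M, x = addM (mulM u (numeral M (2 ^ (i + 1)))) (addM (numeral M (2 ^ i)) v) ∧
    ltM v (numeral M (2 ^ i))

/-- The standard system of `M`: the collection of subsets of `ℕ` coded by some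
non-standard element of `M` (via its standard binary digits). -/
def SSy (M : Type*) [arith.Structure M] : Set (Set ℕ) :=
  {X | ∃ a : M, ¬ IsStd a ∧ ∀ i : ℕ, i ∈ X ↔ digitB a i}

/-- A function `M → M` is definable (with parameters) if its graph is a definable set. -/
def DefinableFun₁ (f : M → M) : Prop :=
  Set.Definable (Set.univ : Set M) arith {v : Fin 2 → M | f (v 0) = v 1}

/-- A `k`-ary function `M^k → M` is definable (with parameters) if its graph is a
definable set. -/
def DefinableFun {k : ℕ} (F : (Fin k → M) → M) : Prop :=
  Set.Definable (Set.univ : Set M) arith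
    {v : Fin (k + 1) → M | F (fun i => v i.castSucc) = v (Fin.last k)}

/-- `c` is the internal cardinality of the set `D ⊆ M`: there is an `M`-definable
bijection between `{x : x < c}` and `D`. -/
def InternalCard (D : Set M) (c : M) : Prop :=
  ∃ f : M → M, DefinableFun₁ f ∧ Set.BijOn f {x : M | ltM x c} D

/-- `y = 2^x` in the model `M`, expressed via the existence of a definable function
satisfying the recursion of the base-`2` exponential up to `x`. -/
def IsPow2 (x y : M) : Prop :=
  ∃ f : M → M, DefinableFun₁ f ∧ f (zeroM M) = oneM M ∧
    (∀ z : M, ltM z x → f (addM z (oneM M)) = addM (f z) (f z)) ∧ f x = y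

end Arith

namespace Arith

/-- Relativized partial recursiveness: `RecursiveIn O f` means the partial function `f`
is partial recursive in the total oracle `O`.  This mirrors `Nat.Partrec`, with an extra
constructor for the oracle. -/
inductive RecursiveIn (O : ℕ → ℕ) : (ℕ →. ℕ) → Prop
  | zero : RecursiveIn O (pure 0)
  | succ : RecursiveIn O Nat.succ
  | left : RecursiveIn O ↑fun n : ℕ => n.unpair.1
  | right : RecursiveIn O ↑fun n : ℕ => n.unpair.2
  | oracle : RecursiveIn O O
  | pair {f g} : RecursiveIn O f → RecursiveIn O g →
      RecursiveIn O fun n => Nat.pair <$> f n <*> g n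
  | comp {f g} : RecursiveIn O f → RecursiveIn O g → RecursiveIn O fun n => g n >>= f
  | prec {f g} : RecursiveIn O f → RecursiveIn O g → RecursiveIn O (Nat.unpaired fun a n =>
      n.rec (f a) fun y IH => do let i ← IH; g (Nat.pair a (Nat.pair y i)))
  | rfind {f} : RecursiveIn O f →
      RecursiveIn O fun a => Nat.rfind fun n => (fun m => m = 0) <$> f (Nat.pair a n)

open Classical in
/-- The characteristic function of a set of natural numbers. -/
noncomputable def charFn (X : Set ℕ) : ℕ → ℕ := fun n => if n ∈ X then 1 else 0

/-- Turing reducibility between sets of natural numbers. -/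
def TuringLE (Y X : Set ℕ) : Prop := RecursiveIn (charFn X) (charFn Y)

/-- The Turing join `X ⊕ Y = 2X ∪ (2Y + 1)`. -/
def turingJoin (X Y : Set ℕ) : Set ℕ :=
  {n | ∃ m ∈ X, n = 2 * m} ∪ {n | ∃ m ∈ Y, n = 2 * m + 1}

/-- A Turing ideal: a collection of subsets of `ℕ` closed under Turing join and Turing
reducibility. -/
def TuringIdeal (S : Set (Set ℕ)) : Prop :=
  (∀ X ∈ S, ∀ Y ∈ S, turingJoin X Y ∈ S) ∧
  (∀ X ∈ S, ∀ Y : Set ℕ, TuringLE Y X → Y ∈ S)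

/-- The Turing ideal generated by a collection of subsets of `ℕ`. -/
def tIdealGen (C : Set (Set ℕ)) : Set (Set ℕ) :=
  ⋂₀ {I | TuringIdeal I ∧ C ⊆ I}

/-- `T ⊆ ℕ` codes a binary tree: the set of finite binary sequences whose codes lie in
`T` is closed under initial segments. -/
def IsBinTreeSet (T : Set ℕ) : Prop :=
  ∀ s : List Bool, Encodable.encode s ∈ T → ∀ t : List Bool, t <+: s → Encodable.encode t ∈ T

/-- The tree coded by `T` is infinite. -/
def TreeInf (T : Set ℕ) : Prop := {s : List Bool | Encodable.encode s ∈ T}.Infinite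

/-- `P ⊆ ℕ`, viewed as an infinite branch via its characteristic function, is a path
through the tree coded by `T`. -/
def PathThrough (P T : Set ℕ) : Prop :=
  ∀ f : ℕ → Bool, (∀ i : ℕ, f i = true ↔ i ∈ P) →
    ∀ m : ℕ, Encodable.encode (List.ofFn fun i : Fin m => f i) ∈ T

/-- A Scott set: a nonempty Turing ideal such that every infinite binary tree in it has
an infinite path in it. -/
def ScottSet (S : Set (Set ℕ)) : Prop :=
  S.Nonempty ∧ TuringIdeal S ∧
  ∀ T ∈ S, IsBinTreeSet T → TreeInf T → ∃ P ∈ S, PathThrough P T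

open Classical in
/-- The characteristic function of a set, with values in `Bool`. -/
noncomputable def chi (X : Set ℕ) : ℕ → Bool := fun n => if n ∈ X then true else false

/-- The iterated Turing join `⊕_{i<k} X i`. -/
def joinMany : {k : ℕ} → (Fin k → Set ℕ) → Set ℕ
  | 0, _ => ∅
  | (k + 1), X => turingJoin (joinMany fun i => X i.castSucc) (X (Fin.last k))

end Arith

namespace KnightNadel

open Arith Encodable

section Computability

theorem RecursiveIn.of_eq {O : ℕ → ℕ} {f g : ℕ →. ℕ} (hf : Arith.RecursiveIn O f)
    (h : ∀ n, f n = g n) : Arith.RecursiveIn O g :=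
  (funext h : f = g) ▸ hf

theorem RecursiveIn.of_primrec {O : ℕ → ℕ} {f : ℕ → ℕ} (hf : Nat.Primrec f) :
    Arith.RecursiveIn O f := by
  induction hf with
  | zero => exact Arith.RecursiveIn.zero
  | succ => exact Arith.RecursiveIn.succ
  | left => exact Arith.RecursiveIn.left
  | right => exact Arith.RecursiveIn.right
  | pair _ _ ihf ihg =>
    exact RecursiveIn.of_eq (Arith.RecursiveIn.pair ihf ihg) fun n => by simp [Seq.seq]
  | comp _ _ ihf ihg =>
    exact RecursiveIn.of_eq (Arith.RecursiveIn.comp ihf ihg) fun _ => Part.bind_some _ _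
  | prec _ _ ihf ihg =>
    refine RecursiveIn.of_eq (Arith.RecursiveIn.prec ihf ihg) fun n => ?_
    simp only [Nat.unpaired, PFun.coe_val]
    induction n.unpair.2 with
    | zero => simp
    | succ m ih => simp only [ih]; simp

theorem RecursiveIn.comp_total {O f g : ℕ → ℕ} (hf : Arith.RecursiveIn O f)
    (hg : Arith.RecursiveIn O g) : Arith.RecursiveIn O (fun n => f (g n) : ℕ → ℕ) :=
  RecursiveIn.of_eq (Arith.RecursiveIn.comp hf hg) fun _ => Part.bind_some _ _

theorem RecursiveIn.pair_total {O f g : ℕ → ℕ} (hf : Arith.RecursiveIn O f)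
    (hg : Arith.RecursiveIn O g) : Arith.RecursiveIn O (fun n => Nat.pair (f n) (g n) : ℕ → ℕ) :=
  RecursiveIn.of_eq (Arith.RecursiveIn.pair hf hg) fun n => by simp [Seq.seq]

/-- The list of the first `m` values of the characteristic function of `Z`. -/
noncomputable def initSeg (Z : Set ℕ) (m : ℕ) : List ℕ := (List.range m).map (charFn Z)

theorem initSeg_getD {Z : Set ℕ} {m i : ℕ} (h : i < m) : (initSeg Z m).getD i 0 = charFn Z i := by
  simp [initSeg, List.getD, h]

theorem charFn_eq_one {Z : Set ℕ} {n : ℕ} : charFn Z n = 1 ↔ n ∈ Z := by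
  simp [charFn]

theorem recursiveIn_initSeg (Z : Set ℕ) :
    Arith.RecursiveIn (charFn Z) (fun m => encode (initSeg Z m) : ℕ → ℕ) := by
  let step : ℕ → ℕ := fun x =>
    encode ((Denumerable.ofNat (List ℕ) x.unpair.1.unpair.2.unpair.2) ++ [x.unpair.2])
  have hstep : Nat.Primrec step := by
    refine Primrec.nat_iff.1 ?_
    refine Primrec.encode.comp (Primrec.list_concat.comp ?_ ?_)
    · exact (Primrec.ofNat (List ℕ)).comp (Primrec.snd.comp (Primrec.unpair.comp
        (Primrec.snd.comp (Primrec.unpair.comp (Primrec.fst.comp Primrec.unpair)))))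
    · exact Primrec.snd.comp Primrec.unpair
  have hid : Arith.RecursiveIn (charFn Z) (fun n => n : ℕ → ℕ) :=
    RecursiveIn.of_primrec Nat.Primrec.id
  have hy : Arith.RecursiveIn (charFn Z) (fun n => charFn Z n.unpair.2.unpair.1 : ℕ → ℕ) :=
    RecursiveIn.comp_total Arith.RecursiveIn.oracle
      (RecursiveIn.of_primrec (Nat.Primrec.left.comp Nat.Primrec.right))
  have hg := RecursiveIn.comp_total (RecursiveIn.of_primrec (O := charFn Z) hstep)
    (RecursiveIn.pair_total hid hy)
  have hrec := Arith.RecursiveIn.prec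
    (RecursiveIn.of_primrec (O := charFn Z) (Nat.Primrec.const (encode ([] : List ℕ)))) hg
  have hp : Arith.RecursiveIn (charFn Z) (fun n => Nat.pair 0 n : ℕ → ℕ) :=
    RecursiveIn.of_primrec ((Nat.Primrec.const 0).pair Nat.Primrec.id)
  refine RecursiveIn.of_eq (Arith.RecursiveIn.comp hrec hp) fun m => ?_
  simp only [PFun.coe_val, Part.bind_eq_bind, Part.bind_some, Nat.unpaired, Nat.unpair_pair]
  induction m with
  | zero => simp [initSeg]
  | succ m ih =>
    simp only [ih]
    simp [step, initSeg, List.range_succ]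

theorem turingLE_of_primrec {Q : ℕ → List ℕ → Bool} (hQ : Primrec₂ Q) {b : ℕ → ℕ}
    (hb : Primrec b) (Z : Set ℕ) : TuringLE {n | Q n (initSeg Z (b n)) = true} Z := by
  let q : ℕ → ℕ := fun x => cond (Q x.unpair.1 (Denumerable.ofNat (List ℕ) x.unpair.2)) 1 0
  have hq : Nat.Primrec q := by
    refine Primrec.nat_iff.1 (Primrec.cond (hQ.comp ?_ ?_) (Primrec.const _) (Primrec.const _))
    · exact Primrec.fst.comp Primrec.unpair
    · exact (Primrec.ofNat (List ℕ)).comp (Primrec.snd.comp Primrec.unpair)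
  refine RecursiveIn.of_eq (RecursiveIn.comp_total (RecursiveIn.of_primrec hq)
    (RecursiveIn.pair_total (RecursiveIn.of_primrec Nat.Primrec.id)
      (RecursiveIn.comp_total (recursiveIn_initSeg Z)
        (RecursiveIn.of_primrec (Primrec.nat_iff.1 hb))))) fun n => ?_
  simp only [q, PFun.coe_val, charFn, Nat.unpair_pair, Denumerable.ofNat_encode, Set.mem_ofPred_eq,
    id]
  by_cases h : Q n (initSeg Z (b n)) = true <;> simp [h]

variable {S : Set (Set ℕ)}

theorem ScottSet.of_primrec (hS : ScottSet S) {Z : Set ℕ} (hZ : Z ∈ S) {Q : ℕ → List ℕ → Bool}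
    (hQ : Primrec₂ Q) {b : ℕ → ℕ} (hb : Primrec b) {Y : Set ℕ}
    (hY : ∀ n, n ∈ Y ↔ Q n (initSeg Z (b n)) = true) : Y ∈ S := by
  have : Y = {n | Q n (initSeg Z (b n)) = true} := Set.ext hY
  rw [this]
  exact hS.2.1.2 Z hZ _ (turingLE_of_primrec hQ hb Z)

theorem ScottSet.univ_mem (hS : ScottSet S) : Set.univ ∈ S := by
  obtain ⟨Z, hZ⟩ := hS.1
  exact ScottSet.of_primrec hS hZ (Q := fun _ _ => true) (Primrec.const true).to₂
    (b := fun _ => 0) (Primrec.const 0) (by simp)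

theorem ScottSet.preimage_mem (hS : ScottSet S) {Z : Set ℕ} (hZ : Z ∈ S) {f : ℕ → ℕ}
    (hf : Primrec f) : f ⁻¹' Z ∈ S := by
  refine ScottSet.of_primrec hS hZ (Q := fun n l => l.getD (f n) 0 == 1) ?_
    (b := fun n => f n + 1) (Primrec.succ.comp hf) fun n => ?_
  · exact Primrec.beq.comp ((Primrec.list_getD 0).comp Primrec.snd (hf.comp Primrec.fst))
      (Primrec.const 1)
  · simp only [beq_iff_eq, initSeg_getD (Nat.lt_succ_self _), charFn_eq_one, Set.mem_preimage]

/-- The literal `p` is not refuted by the finite binary sequence `s`. -/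
def LitOK (s : List Bool) (p : ℕ × Bool) : Prop := s[p.1]? ≠ some (!p.2)

/-- The finite binary sequence `s` refutes neither the first clauses of `K` nor the first
positive facts `pos x`, `x ∈ Z`. -/
def NodeOK (K : ℕ → List (List (ℕ × Bool))) (pos : ℕ → ℕ) (z : List ℕ) (s : List Bool) : Prop :=
  ∀ n < s.length, (∀ C ∈ K n, ∃ p ∈ C, LitOK s p) ∧ (z.getD n 0 = 1 → LitOK s (pos n, true))

theorem primrecRel_litOK : PrimrecRel LitOK := by
  refine PrimrecPred.not (Primrec.eq.comp (Primrec.list_getElem?.comp Primrec.fst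
    (Primrec.fst.comp Primrec.snd)) (Primrec.option_some.comp (Primrec.not.comp
      (Primrec.snd.comp Primrec.snd))))

theorem primrecRel_nodeOK {K : ℕ → List (List (ℕ × Bool))} (hK : Primrec K) {pos : ℕ → ℕ}
    (hpos : Primrec pos) : PrimrecRel (NodeOK K pos) := by
  have hlit : PrimrecRel fun (p : ℕ × Bool) (x : List ℕ × List Bool) => LitOK x.2 p :=
    primrecRel_litOK.comp (Primrec.snd.comp Primrec.snd) Primrec.fst
  have h1 := hlit.exists_mem_list.forall_mem_list
  have h2 : PrimrecRel fun (n : ℕ) (x : List ℕ × List Bool) =>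
      (∀ C ∈ K n, ∃ p ∈ C, LitOK x.2 p) ∧ (x.1.getD n 0 = 1 → LitOK x.2 (pos n, true)) := by
    refine PrimrecPred.and (h1.comp (hK.comp Primrec.fst) Primrec.snd) ?_
    refine PrimrecPred.of_eq (PrimrecPred.or (PrimrecPred.not (Primrec.eq.comp
      ((Primrec.list_getD 0).comp (Primrec.fst.comp Primrec.snd) Primrec.fst)
      (Primrec.const 1))) (primrecRel_litOK.comp (Primrec.snd.comp Primrec.snd)
        (Primrec.pair (hpos.comp Primrec.fst) (Primrec.const true)))) fun x => ?_
    exact imp_iff_not_or.symm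
  have h3 := h2.forall_mem_list
  refine PrimrecPred.of_eq (h3.comp (f := fun x : List ℕ × List Bool => List.range x.2.length)
    (g := fun x => x) (Primrec.list_range.comp (Primrec.list_length.comp Primrec.snd))
    Primrec.id) fun x => ?_
  simp [NodeOK]

/-- Effective compactness of propositional logic in a Scott set. -/
theorem ScottSet.exists_model (hS : ScottSet S) {Z : Set ℕ} (hZ : Z ∈ S)
    {K : ℕ → List (List (ℕ × Bool))} (hK : Primrec K) {pos : ℕ → ℕ} (hpos : Primrec pos)
    (hfin : ∀ N, ∃ D : Set ℕ, (∀ n < N, ∀ C ∈ K n, ∃ p ∈ C, p.1 ∈ D ↔ p.2 = true) ∧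
      ∀ n < N, n ∈ Z → pos n ∈ D) :
    ∃ D ∈ S, (∀ n, ∀ C ∈ K n, ∃ p ∈ C, p.1 ∈ D ↔ p.2 = true) ∧ ∀ n ∈ Z, pos n ∈ D := by
  classical
  let T : Set ℕ := {x | ∃ s : List Bool, decode x = some s ∧
    NodeOK K pos (initSeg Z s.length) s}
  have hT : T ∈ S := by
    obtain ⟨_, hdec⟩ := primrecRel_nodeOK hK hpos
    let len : ℕ → ℕ := fun x => (((decode x : Option (List Bool)).map List.length).getD 0)
    have hlen : Primrec len :=
      Primrec.option_getD.comp (Primrec.option_map Primrec.decode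
        (Primrec.list_length.comp Primrec.snd).to₂) (Primrec.const 0)
    let Q : ℕ → List ℕ → Bool := fun x z =>
      ((decode x : Option (List Bool)).map fun s => decide (NodeOK K pos z s)).getD false
    have hQ : Primrec₂ Q := by
      refine Primrec.option_getD.comp (Primrec.option_map (Primrec.decode.comp Primrec.fst) ?_)
        (Primrec.const false)
      exact (hdec.comp (Primrec.pair (Primrec.snd.comp Primrec.fst) Primrec.snd)).of_eq
        fun x => by simp
    refine ScottSet.of_primrec hS hZ hQ hlen fun x => ?_
    rcases h : (decode x : Option (List Bool)) with _ | s <;> simp [T, Q, len, h]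
  have hmem : ∀ s : List Bool, encode s ∈ T ↔ NodeOK K pos (initSeg Z s.length) s := by
    intro s; simp [T]
  have htree : IsBinTreeSet T := by
    intro s hs t hts
    rw [hmem] at hs ⊢
    have hlit : ∀ p, LitOK s p → LitOK t p := by
      intro p hp h
      obtain ⟨r, rfl⟩ := hts
      obtain ⟨hlt, -⟩ := List.getElem?_eq_some_iff.1 h
      exact hp (by rw [List.getElem?_append_left hlt]; exact h)
    intro n hn
    have hn' : n < s.length := hn.trans_le hts.length_le
    obtain ⟨h1, h2⟩ := hs n hn'
    refine ⟨fun C hC => ?_, fun hz => ?_⟩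
    · obtain ⟨p, hp, hp'⟩ := h1 C hC
      exact ⟨p, hp, hlit p hp'⟩
    · rw [initSeg_getD hn] at hz
      exact hlit _ (h2 (by rw [initSeg_getD hn']; exact hz))
  have hinf : TreeInf T := by
    have hnode : ∀ N, ∃ s : List Bool, s.length = N ∧ encode s ∈ T := by
      intro N
      obtain ⟨D, hD, hD'⟩ := hfin N
      let s := List.ofFn fun i : Fin N => decide ((i : ℕ) ∈ D)
      have hlit : ∀ p : ℕ × Bool, (p.1 ∈ D ↔ p.2 = true) → LitOK s p := by
        rintro ⟨i, b⟩ hp h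
        obtain ⟨hlt, h⟩ := List.getElem?_eq_some_iff.1 h
        cases b <;> simp_all [s]
      refine ⟨s, by simp [s], (hmem s).2 ?_⟩
      intro n hn
      have hn' : n < N := by simpa [s] using hn
      refine ⟨fun C hC => ?_, fun hz => ?_⟩
      · obtain ⟨p, hp, hp'⟩ := hD n hn' C hC
        exact ⟨p, hp, hlit p hp'⟩
      · rw [initSeg_getD hn, charFn_eq_one] at hz
        exact hlit _ (by simpa using hD' n hn' hz)
    intro hfin
    obtain ⟨N, hN⟩ := (hfin.image List.length).bddAbove
    obtain ⟨s, hs, hsT⟩ := hnode (N + 1)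
    have := hN ⟨s, hsT, rfl⟩
    omega
  obtain ⟨D, hDS, hD⟩ := hS.2.2 T hT htree hinf
  have hpath := fun m => (hmem _).1 (hD (fun i => decide (i ∈ D)) (by simp) m)
  have hlit : ∀ m (p : ℕ × Bool), p.1 < m →
      LitOK (List.ofFn fun i : Fin m => decide ((i : ℕ) ∈ D)) p → (p.1 ∈ D ↔ p.2 = true) := by
    rintro m ⟨i, b⟩ hi h
    simp only [LitOK, List.getElem?_ofFn] at h
    cases b <;> simp_all
  refine ⟨D, hDS, fun n C hC => ?_, fun n hn => ?_⟩
  · obtain ⟨m, hm⟩ : ∃ m, ∀ p ∈ C, p.1 < m := by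
      refine ⟨(C.map Prod.fst).sum + 1, fun p hp => Nat.lt_succ_of_le ?_⟩
      exact List.single_le_sum (by simp) _ (List.mem_map_of_mem hp)
    obtain ⟨p, hp, hp'⟩ := (hpath (max m (n + 1)) n (by simp)).1 C hC
    exact ⟨p, hp, hlit _ p (lt_max_of_lt_left (hm p hp)) hp'⟩
  · have := (hpath (max (pos n + 1) (n + 1)) n (by simp)).2
      (by rw [initSeg_getD (by simp), charFn_eq_one]; exact hn)
    simpa using hlit _ (pos n, true) (by simp) this

end Computability

section Logic

variable {M : Type}

/-- Extend an environment by a new value for the variable `0`. -/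
def scons (x : M) (v : ℕ → M) : ℕ → M
  | 0 => x
  | n + 1 => v n

/-- The code of the atomic formula `R_r (x_i, x_j, x_k)`. -/
def cAtom (r i j k : ℕ) : ℕ := 3 * Nat.pair (Nat.pair r i) (Nat.pair j k)

/-- The code of the negated conjunction. -/
def cNand (a b : ℕ) : ℕ := 3 * Nat.pair a b + 1

/-- The code of the universal quantification (with de Bruijn indices). -/
def cAll (a : ℕ) : ℕ := 3 * a + 2

/-- Satisfaction of the formula coded by `n`, for a structure with six ternary relations
`R 0, …, R 5` and no equality. -/
def Sat (R : ℕ → M → M → M → Prop) (n : ℕ) (v : ℕ → M) : Prop :=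
  if n % 3 = 0 then
    R ((n / 3).unpair.1.unpair.1 % 6) (v (n / 3).unpair.1.unpair.2) (v (n / 3).unpair.2.unpair.1)
      (v (n / 3).unpair.2.unpair.2)
  else if h : n % 3 = 1 then ¬ (Sat R (n / 3).unpair.1 v ∧ Sat R (n / 3).unpair.2 v)
  else ∀ x, Sat R (n / 3) (scons x v)
termination_by n
decreasing_by
  · have := Nat.unpair_left_le (n / 3); omega
  · have := Nat.unpair_right_le (n / 3); omega
  · omega

variable (R : ℕ → M → M → M → Prop)

@[simp] theorem sat_atom (r i j k : ℕ) (v : ℕ → M) :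
    Sat R (cAtom r i j k) v ↔ R (r % 6) (v i) (v j) (v k) := by
  rw [Sat, if_pos (by simp [cAtom])]
  simp [cAtom]

@[simp] theorem sat_nand (a b : ℕ) (v : ℕ → M) :
    Sat R (cNand a b) v ↔ ¬ (Sat R a v ∧ Sat R b v) := by
  have h : (cNand a b) / 3 = Nat.pair a b := by unfold cNand; omega
  rw [Sat, if_neg (by unfold cNand; omega), dif_pos (by unfold cNand; omega), h]
  simp

@[simp] theorem sat_all (a : ℕ) (v : ℕ → M) :
    Sat R (cAll a) v ↔ ∀ x, Sat R a (scons x v) := by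
  have h : (cAll a) / 3 = a := by unfold cAll; omega
  rw [Sat, if_neg (by unfold cAll; omega), dif_neg (by unfold cAll; omega), h]

theorem code_induction {P : ℕ → Prop} (atom : ∀ r i j k, P (cAtom r i j k))
    (nand : ∀ a b, P a → P b → P (cNand a b)) (all : ∀ a, P a → P (cAll a)) (n : ℕ) : P n := by
  induction n using Nat.strong_induction_on with
  | _ n ih =>
    have h3 : n % 3 = 0 ∨ n % 3 = 1 ∨ n % 3 = 2 := by omega
    rcases h3 with h | h | h
    · have : n = cAtom (n / 3).unpair.1.unpair.1 (n / 3).unpair.1.unpair.2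
        (n / 3).unpair.2.unpair.1 (n / 3).unpair.2.unpair.2 := by
        simp only [cAtom, Nat.pair_unpair]; omega
      rw [this]; exact atom _ _ _ _
    · have : n = cNand (n / 3).unpair.1 (n / 3).unpair.2 := by
        simp only [cNand, Nat.pair_unpair]; omega
      have h1 := Nat.unpair_left_le (n / 3)
      have h2 := Nat.unpair_right_le (n / 3)
      rw [this]; exact nand _ _ (ih _ (by omega)) (ih _ (by omega))
    · have : n = cAll (n / 3) := by unfold cAll; omega
      rw [this]; exact all _ (ih _ (by omega))

/-- The code of the negation. -/
def cNeg (a : ℕ) : ℕ := cNand a a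

/-- The code of the conjunction. -/
def cAnd (a b : ℕ) : ℕ := cNeg (cNand a b)

/-- The code of the implication. -/
def cImp (a b : ℕ) : ℕ := cNand a (cNeg b)

/-- The code of the existential quantification. -/
def cEx (a : ℕ) : ℕ := cNeg (cAll (cNeg a))

@[simp] theorem sat_neg (a : ℕ) (v : ℕ → M) : Sat R (cNeg a) v ↔ ¬ Sat R a v := by
  simp [cNeg]

@[simp] theorem sat_and (a b : ℕ) (v : ℕ → M) : Sat R (cAnd a b) v ↔ Sat R a v ∧ Sat R b v := by
  simp [cAnd]

@[simp] theorem sat_imp (a b : ℕ) (v : ℕ → M) : Sat R (cImp a b) v ↔ (Sat R a v → Sat R b v) := by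
  simp [cImp]

@[simp] theorem sat_ex (a : ℕ) (v : ℕ → M) : Sat R (cEx a) v ↔ ∃ x, Sat R a (scons x v) := by
  simp [cEx]

theorem exists_rename (φ : ℕ) : ∀ ρ : ℕ → ℕ, ∃ ψ : ℕ, ∀ {M : Type}
    (R : ℕ → M → M → M → Prop) (v : ℕ → M), Sat R ψ v ↔ Sat R φ (v ∘ ρ) := by
  induction φ using code_induction with
  | atom r i j k => exact fun ρ => ⟨cAtom r (ρ i) (ρ j) (ρ k), by simp⟩
  | nand a b iha ihb =>
    intro ρ
    obtain ⟨a', ha⟩ := iha ρ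
    obtain ⟨b', hb⟩ := ihb ρ
    exact ⟨cNand a' b', by simp [ha, hb]⟩
  | all a ih =>
    intro ρ
    obtain ⟨a', ha⟩ := ih (scons 0 fun n => ρ n + 1)
    refine ⟨cAll a', fun R v => ?_⟩
    simp only [sat_all, ha]
    refine forall_congr' fun x => ?_
    have : scons x v ∘ (scons 0 fun n => ρ n + 1) = scons x (v ∘ ρ) := by
      funext n; cases n <;> rfl
    rw [this]

theorem exists_support (φ : ℕ) : ∃ k : ℕ, ∀ {M : Type} (R : ℕ → M → M → M → Prop)
    (v v' : ℕ → M), (∀ i < k, v i = v' i) → (Sat R φ v ↔ Sat R φ v') := by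
  induction φ using code_induction with
  | atom r i j k =>
    refine ⟨i + j + k + 1, fun R v v' h => ?_⟩
    simp only [sat_atom]
    rw [h i (by omega), h j (by omega), h k (by omega)]
  | nand a b iha ihb =>
    obtain ⟨k, hk⟩ := iha
    obtain ⟨l, hl⟩ := ihb
    refine ⟨max k l, fun R v v' h => ?_⟩
    simp only [sat_nand]
    rw [hk R v v' fun i hi => h i (lt_max_of_lt_left hi),
      hl R v v' fun i hi => h i (lt_max_of_lt_right hi)]
  | all a ih =>
    obtain ⟨k, hk⟩ := ih
    refine ⟨k, fun R v v' h => ?_⟩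
    simp only [sat_all]
    refine forall_congr' fun x => hk R _ _ fun i hi => ?_
    cases i with
    | zero => rfl
    | succ i => exact h i (by omega)

/-- Every nonempty definable set has a minimal element with respect to `R 2`. -/
def LNP : Prop := ∀ (φ : ℕ) (v : ℕ → M), (∃ x, ¬ Sat R φ (scons x v)) →
  ∃ x, ¬ Sat R φ (scons x v) ∧ ∀ z, ¬ Sat R φ (scons z v) → ¬ R 2 z x z

end Logic

section Ultrapower

open Filter

variable {A : Type} (R : ℕ → A → A → A → Prop)

/-- The relations of the ultrapower, on sequences of elements of the original structure. -/
def ultraRel (r : ℕ) (x y z : ℕ → A) : Prop :=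
  ∀ᶠ i in (hyperfilter ℕ : Filter ℕ), R r (x i) (y i) (z i)

theorem sat_ultraRel (φ : ℕ) : ∀ v : ℕ → ℕ → A,
    Sat (ultraRel R) φ v ↔ ∀ᶠ i in (hyperfilter ℕ : Filter ℕ), Sat R φ fun k => v k i := by
  induction φ using code_induction with
  | atom r i j k => intro v; simp [ultraRel]
  | nand a b iha ihb =>
    intro v
    simp only [sat_nand, iha, ihb, ← eventually_and, Ultrafilter.eventually_not]
  | all a ih =>
    classical
    intro v
    have hsc : ∀ (x : ℕ → A) i, (fun k => scons x v k i) = scons (x i) fun k => v k i := by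
      intro x i; funext k; cases k <;> rfl
    simp only [sat_all, ih, hsc]
    refine ⟨fun h => ?_, fun h x => h.mono fun i hi => hi _⟩
    by_contra hcon
    rw [← Ultrafilter.eventually_not] at hcon
    simp only [not_forall] at hcon
    obtain ⟨i₀, x₀, -⟩ := hcon.exists
    have : ∃ x : ℕ → A, ∀ i, (∃ a', ¬ Sat R a (scons a' fun k => v k i)) →
        ¬ Sat R a (scons (x i) fun k => v k i) := by
      refine ⟨fun i => if h : ∃ a', ¬ Sat R a (scons a' fun k => v k i) then h.choose else x₀,
        fun i hi => ?_⟩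
      simp only [dif_pos hi]
      exact hi.choose_spec
    obtain ⟨x, hx⟩ := this
    obtain ⟨i, h1, h2⟩ := (hcon.and (h x)).exists
    exact hx i h1 h2

theorem lnp_ultraRel (h : LNP R) : LNP (ultraRel R) := by
  intro φ v ⟨y, hy⟩
  have hsc : ∀ (x : ℕ → A) i, (fun k => scons x v k i) = scons (x i) fun k => v k i := by
    intro x i; funext k; cases k <;> rfl
  simp only [sat_ultraRel, hsc, ← Ultrafilter.eventually_not] at hy ⊢
  have hx : ∀ i, ∃ x, (∃ a, ¬ Sat R φ (scons a fun k => v k i)) →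
      ¬ Sat R φ (scons x fun k => v k i) ∧
        ∀ z, ¬ Sat R φ (scons z fun k => v k i) → ¬ R 2 z x z := by
    intro i
    by_cases hi : ∃ a, ¬ Sat R φ (scons a fun k => v k i)
    · obtain ⟨x, hx⟩ := h φ _ hi
      exact ⟨x, fun _ => hx⟩
    · exact ⟨y i, fun h => absurd h hi⟩
  choose x hx using hx
  refine ⟨x, hy.mono fun i hi => (hx i ⟨_, hi⟩).1, fun z hz => ?_⟩
  rw [ultraRel, ← Ultrafilter.eventually_not]
  exact hz.mono fun i hi => (hx i ⟨_, hi⟩).2 _ hi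

/-- Countable saturation of ultrapowers. -/
theorem ultra_saturation [Nonempty A] (Q : ℕ → ℕ → A → Prop)
    (h : ∀ n, ∃ y : ℕ → A, ∀ m < n, ∀ᶠ i in (hyperfilter ℕ : Filter ℕ), Q m i (y i)) :
    ∃ y : ℕ → A, ∀ m, ∀ᶠ i in (hyperfilter ℕ : Filter ℕ), Q m i (y i) := by
  classical
  have hy : ∀ i, ∃ a, ∀ n ≤ i, (∃ a', ∀ m < n, Q m i a') → ∀ m < n, Q m i a := by
    intro i
    let P : ℕ → Prop := fun n => ∃ a', ∀ m < n, Q m i a'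
    obtain ⟨a, ha⟩ : P (Nat.findGreatest P i) :=
      Nat.findGreatest_spec (Nat.zero_le i) ⟨Classical.arbitrary A, by simp⟩
    exact ⟨a, fun n hn hP m hm => ha m (hm.trans_le (Nat.le_findGreatest hn hP))⟩
  choose y hy using hy
  refine ⟨y, fun m => ?_⟩
  obtain ⟨z, hz⟩ := h (m + 1)
  have hall : ∀ᶠ i in (hyperfilter ℕ : Filter ℕ), ∀ k < m + 1, Q k i (z i) := by
    have := (Filter.eventually_all_finset (Finset.range (m + 1))
      (p := fun k i => Q k i (z i)) (l := (hyperfilter ℕ : Filter ℕ))).2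
      (by simpa using hz)
    simpa using this
  have hge : ∀ᶠ i in (hyperfilter ℕ : Filter ℕ), m + 1 ≤ i :=
    (Nat.hyperfilter_le_atTop) (eventually_ge_atTop (m + 1))
  filter_upwards [hall, hge] with i h1 h2
  exact hy i (m + 1) h2 ⟨_, h1⟩ m (Nat.lt_succ_self m)

end Ultrapower

open Denumerable

section Diagrams

variable {M : Type} (R : ℕ → M → M → M → Prop)

/-- The code of the fact that the formula `φ` holds in the environment listed by `e`. -/
def fact (φ : ℕ) (e : List ℕ) : ℕ := encode (φ, e)

/-- The formula of a coded fact. -/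
def fForm (x : ℕ) : ℕ := (ofNat (ℕ × List ℕ) x).1

/-- The environment of a coded fact. -/
def fEnv (x : ℕ) : List ℕ := (ofNat (ℕ × List ℕ) x).2

@[simp] theorem fForm_fact (φ : ℕ) (e : List ℕ) : fForm (fact φ e) = φ := by
  simp only [fForm, fact, ofNat_encode]

@[simp] theorem fEnv_fact (φ : ℕ) (e : List ℕ) : fEnv (fact φ e) = e := by
  simp only [fEnv, fact, ofNat_encode]

theorem fact_eta (x : ℕ) : fact (fForm x) (fEnv x) = x := by
  simp only [fForm, fEnv, fact, Prod.mk.eta, encode_ofNat]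

theorem primrec_fForm : Primrec fForm := Primrec.fst.comp (Primrec.ofNat _)

theorem primrec_fEnv : Primrec fEnv := Primrec.snd.comp (Primrec.ofNat _)

theorem primrec_fact : Primrec₂ fact := Primrec.encode.comp (Primrec.pair Primrec.fst Primrec.snd)

/-- The environment in `u` listed by `e`. -/
def look (u : ℕ → M) (e : List ℕ) : ℕ → M := fun i => u (e.getD i 0)

theorem look_cons (u : ℕ → M) (x : ℕ) (e : List ℕ) :
    look u (x :: e) = scons (u x) (look u e) := by
  funext i; cases i <;> simp [look, scons]

/-- The set of all facts about the sequence `u`. -/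
def Diag (u : ℕ → M) : Set ℕ := {x | Sat R (fForm x) (look u (fEnv x))}

variable {R}

@[simp] theorem fact_mem_Diag {u : ℕ → M} {φ : ℕ} {e : List ℕ} :
    fact φ e ∈ Diag R u ↔ Sat R φ (look u e) := by
  simp [Diag]

/-- A diagram is complete, so that one cannot properly contain another. -/
theorem Diag_eq_of_subset {N : Type} {R' : ℕ → N → N → N → Prop} {u : ℕ → M} {u' : ℕ → N}
    (h : Diag R u ⊆ Diag R' u') : Diag R u = Diag R' u' := by
  refine h.antisymm fun x hx => ?_
  by_contra hcon
  rw [← fact_eta x] at hx hcon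
  have : fact (cNeg (fForm x)) (fEnv x) ∈ Diag R u := by simpa using hcon
  have := h this
  simp only [fact_mem_Diag, sat_neg] at this hx
  exact this hx

/-- The sequence which lists the values of `num` at the multiples of `3`, those of `w` at the
numbers congruent to `1`, and is trivial elsewhere. -/
def base (num w : ℕ → M) (k : ℕ) : M :=
  if k % 3 = 0 then num (k / 3) else if k % 3 = 1 then w (k / 3) else num 0

@[simp] theorem base_num (num w : ℕ → M) (j : ℕ) : base num w (3 * j) = num j := by
  simp [base]

@[simp] theorem base_zero (num w : ℕ → M) : base num w 0 = num 0 := by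
  simp [base]

@[simp] theorem base_var (num w : ℕ → M) (j : ℕ) : base num w (3 * j + 1) = w j := by
  have h : (3 * j + 1) / 3 = j := by omega
  rw [base, if_neg (by omega), if_pos (by omega), h]

/-- The map on indices which sends the variable `j` to the index `ρ j`. -/
def lift (ρ : ℕ → ℕ) (k : ℕ) : ℕ := if k % 3 = 0 then k else if k % 3 = 1 then ρ (k / 3) else 0

theorem base_lift {num w w' : ℕ → M} {ρ : ℕ → ℕ} (h : ∀ j, w' j = base num w (ρ j)) (k : ℕ) :
    base num w (lift ρ k) = base num w' k := by
  unfold lift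
  split_ifs with h1 h2
  · simp [base, h1]
  · simp [base, h2, h]
  · simp [base, h1, h2]

/-- The map on facts induced by `lift ρ`. -/
def remap (ρ : ℕ → ℕ) (x : ℕ) : ℕ := fact (fForm x) ((fEnv x).map (lift ρ))

theorem look_map {u : ℕ → M} {f : ℕ → ℕ} (hf : f 0 = 0) (e : List ℕ) :
    look u (e.map f) = look (u ∘ f) e := by
  funext i
  by_cases h : i < e.length
  · simp [look, List.getD, h]
  · simp [look, List.getD, h, hf]

theorem lift_zero (ρ : ℕ → ℕ) : lift ρ 0 = 0 := by simp [lift]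

theorem remap_mem_Diag {u : ℕ → M} {ρ : ℕ → ℕ} {x : ℕ} :
    remap ρ x ∈ Diag R u ↔ x ∈ Diag R (u ∘ lift ρ) := by
  simp [remap, look_map (lift_zero ρ), Diag]

theorem remap_mem_base {num w w' : ℕ → M} {ρ : ℕ → ℕ} (h : ∀ j, w' j = base num w (ρ j))
    {x : ℕ} : remap ρ x ∈ Diag R (base num w) ↔ x ∈ Diag R (base num w') := by
  rw [remap_mem_Diag, show base num w ∘ lift ρ = base num w' from funext (base_lift h)]

theorem primrec_mod_three : Primrec fun k : ℕ => k % 3 := Primrec.nat_mod.comp .id (.const 3)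

theorem primrec_div_three : Primrec fun k : ℕ => k / 3 := Primrec.nat_div.comp .id (.const 3)

theorem primrec_lift {ρ : ℕ → ℕ} (hρ : Primrec ρ) : Primrec (lift ρ) :=
  Primrec.ite (Primrec.eq.comp primrec_mod_three (.const 0)) .id
    (Primrec.ite (Primrec.eq.comp primrec_mod_three (.const 1)) (hρ.comp primrec_div_three)
      (.const 0))

theorem primrec_remap {ρ : ℕ → ℕ} (hρ : Primrec ρ) : Primrec (remap ρ) :=
  primrec_fact.comp primrec_fForm
    (Primrec.list_map primrec_fEnv ((primrec_lift hρ).comp Primrec.snd).to₂)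

theorem ScottSet.reindex {S : Set (Set ℕ)} (hS : ScottSet S) {num w w' : ℕ → M} {ρ : ℕ → ℕ}
    (hρ : Primrec ρ) (h : ∀ j, w' j = base num w (ρ j)) (hw : Diag R (base num w) ∈ S) :
    Diag R (base num w') ∈ S := by
  have : Diag R (base num w') = remap ρ ⁻¹' Diag R (base num w) :=
    Set.ext fun x => (remap_mem_base h).symm
  rw [this]
  exact ScottSet.preimage_mem hS hw (primrec_remap hρ)

end Diagrams

section Henkin

/-- The index of the canonical counterexample to `∀ x, a (x, e)`. -/
def wit (a : ℕ) (e : List ℕ) : ℕ := 3 * fact a e + 2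

/-- The clauses expressing that a set of facts is the diagram of a structure on `ℕ` in which
the index `wit a e` names a least counterexample to `∀ x, a (x, e)`. -/
def clausesOf (a b c d : ℕ) (e : List ℕ) : List (List (ℕ × Bool)) :=
  [ [(fact (cNand a b) e, false), (fact a e, false), (fact b e, false)],
   [(fact (cNand a b) e, true), (fact a e, true)],
   [(fact (cNand a b) e, true), (fact b e, true)],
   [(fact (cAll a) e, false), (fact a (b :: e), true)],
   [(fact (cAll a) e, true), (fact a (wit a e :: e), false)],
   [(fact a (b :: e), true), (fact (cAtom 2 0 1 0) [b, wit a e], false)],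
   [(fact (cAtom a b c d) e, false),
     (fact (cAtom (a % 6) 0 1 2) [e.getD b 0, e.getD c 0, e.getD d 0], true)],
   [(fact (cAtom a b c d) e, true),
     (fact (cAtom (a % 6) 0 1 2) [e.getD b 0, e.getD c 0, e.getD d 0], false)] ]

/-- The enumeration of all the clauses. -/
def clauses (n : ℕ) : List (List (ℕ × Bool)) :=
  clausesOf (ofNat (ℕ × ℕ × ℕ × ℕ × List ℕ) n).1 (ofNat (ℕ × ℕ × ℕ × ℕ × List ℕ) n).2.1
    (ofNat (ℕ × ℕ × ℕ × ℕ × List ℕ) n).2.2.1 (ofNat (ℕ × ℕ × ℕ × ℕ × List ℕ) n).2.2.2.1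
    (ofNat (ℕ × ℕ × ℕ × ℕ × List ℕ) n).2.2.2.2

theorem clauses_encode (a b c d : ℕ) (e : List ℕ) :
    clauses (encode (a, b, c, d, e)) = clausesOf a b c d e := by
  unfold clauses
  rw [ofNat_encode]

theorem primrec_cNand : Primrec₂ cNand :=
  Primrec.succ.comp (Primrec.nat_mul.comp (.const 3) Primrec₂.natPair)

theorem primrec_cAll : Primrec cAll :=
  Primrec.succ.comp (Primrec.succ.comp (Primrec.nat_mul.comp (.const 3) .id))

theorem primrec_cAtom {α : Type} [Primcodable α] {r i j k : α → ℕ} (hr : Primrec r)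
    (hi : Primrec i) (hj : Primrec j) (hk : Primrec k) :
    Primrec fun x => cAtom (r x) (i x) (j x) (k x) :=
  Primrec.nat_mul.comp (.const 3)
    (Primrec₂.natPair.comp (Primrec₂.natPair.comp hr hi) (Primrec₂.natPair.comp hj hk))

theorem primrec_wit : Primrec₂ wit :=
  Primrec.succ.comp (Primrec.succ.comp (Primrec.nat_mul.comp (.const 3) primrec_fact))

theorem primrec_clauses : Primrec clauses := by
  have ht : Primrec fun n => ofNat (ℕ × ℕ × ℕ × ℕ × List ℕ) n := Primrec.ofNat _
  have ha := Primrec.fst.comp ht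
  have hb := Primrec.fst.comp (Primrec.snd.comp ht)
  have hc := Primrec.fst.comp (Primrec.snd.comp (Primrec.snd.comp ht))
  have hd := Primrec.fst.comp (Primrec.snd.comp (Primrec.snd.comp (Primrec.snd.comp ht)))
  have he := Primrec.snd.comp (Primrec.snd.comp (Primrec.snd.comp (Primrec.snd.comp ht)))
  have two {α β : Type} [Primcodable α] [Primcodable β] {f g : α → β} (hf : Primrec f)
      (hg : Primrec g) : Primrec fun x => [f x, g x] :=
    Primrec.list_cons.comp hf (Primrec.list_cons.comp hg (.const []))
  have lit {α : Type} [Primcodable α] (v : Bool) {f : α → ℕ} {g : α → List ℕ} (hf : Primrec f)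
      (hg : Primrec g) : Primrec fun x => (fact (f x) (g x), v) :=
    Primrec.pair (primrec_fact.comp hf hg) (.const v)
  have hnand := primrec_cNand.comp ha hb
  have hall := primrec_cAll.comp ha
  have hbe := Primrec.list_cons.comp hb he
  have hw := primrec_wit.comp ha he
  have hatom := primrec_cAtom ha hb hc hd
  have hatom' := primrec_cAtom (Primrec.nat_mod.comp ha (.const 6)) (.const 0) (.const 1) (.const 2)
  have hargs := Primrec.list_cons.comp ((Primrec.list_getD 0).comp he hb)
    (two ((Primrec.list_getD 0).comp he hc) ((Primrec.list_getD 0).comp he hd))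
  have c0 := Primrec.list_cons.comp (lit false hnand he) (two (lit false ha he) (lit false hb he))
  have c1 := two (lit true hnand he) (lit true ha he)
  have c2 := two (lit true hnand he) (lit true hb he)
  have c3 := two (lit false hall he) (lit true ha hbe)
  have c4 := two (lit true hall he) (lit false ha (Primrec.list_cons.comp hw he))
  have c5 := two (lit true ha hbe) (lit false (.const (cAtom 2 0 1 0)) (two hb hw))
  have c6 := two (lit false hatom he) (lit true hatom' hargs)
  have c7 := two (lit true hatom he) (lit false hatom' hargs)
  exact Primrec.list_cons.comp c0 (Primrec.list_cons.comp c1 (Primrec.list_cons.comp c2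
    (Primrec.list_cons.comp c3 (Primrec.list_cons.comp c4 (Primrec.list_cons.comp c5
      (two c6 c7))))))

theorem mem_le_encode {e : List ℕ} {x : ℕ} (h : x ∈ e) : x ≤ encode e := by
  induction e with
  | nil => simp at h
  | cons y l ih =>
    rw [Encodable.encode_list_cons]
    rcases List.mem_cons.1 h with rfl | h
    · exact (Nat.left_le_pair _ _).trans (Nat.le_succ _)
    · exact ((ih h).trans (Nat.right_le_pair _ _)).trans (Nat.le_succ _)

theorem getD_lt_wit (a : ℕ) (e : List ℕ) (i : ℕ) : e.getD i 0 < wit a e := by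
  have h : e.getD i 0 ≤ encode e := by
    by_cases hi : i < e.length
    · rw [List.getD_eq_getElem _ _ hi]
      exact mem_le_encode (List.getElem_mem hi)
    · rw [List.getD_eq_default _ _ (by omega)]; exact Nat.zero_le _
  have h' : encode e ≤ fact a e := Nat.right_le_pair _ _
  unfold wit; omega

variable {M : Type} {R : ℕ → M → M → M → Prop}

/-- The diagram of a sequence extending `base num w` satisfies all the clauses. -/
theorem exists_henkin_sequence (hR : LNP R) (num w : ℕ → M) :
    ∃ u : ℕ → M, (∀ j, u (3 * j) = num j) ∧ (∀ j, u (3 * j + 1) = w j) ∧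
      ∀ a e, (∃ x, ¬ Sat R a (scons x (look u e))) →
        ¬ Sat R a (scons (u (wit a e)) (look u e)) ∧
          ∀ z, ¬ Sat R a (scons z (look u e)) → ¬ R 2 z (u (wit a e)) z := by
  classical
  let pick : ℕ → (ℕ → M) → M := fun a v =>
    if h : ∃ x, ¬ Sat R a (scons x v) then (hR a v h).choose else num 0
  have hpick : ∀ a v, (∃ x, ¬ Sat R a (scons x v)) → ¬ Sat R a (scons (pick a v) v) ∧
      ∀ z, ¬ Sat R a (scons z v) → ¬ R 2 z (pick a v) z := by
    intro a v h
    simp only [pick, dif_pos h]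
    exact (hR a v h).choose_spec
  let F : (k : ℕ) → ((j : ℕ) → j < k → M) → M := fun k prev =>
    if k % 3 = 0 then num (k / 3) else if k % 3 = 1 then w (k / 3) else
      pick (fForm (k / 3)) (look (fun j => if h : j < k then prev j h else num 0) (fEnv (k / 3)))
  let u : ℕ → M := WellFounded.fix Nat.lt_wfRel.wf F
  have hu : ∀ k, u k = F k fun j _ => u j := fun k => WellFounded.fix_eq Nat.lt_wfRel.wf F k
  refine ⟨u, fun j => ?_, fun j => ?_, fun a e h => ?_⟩
  · rw [hu]; simp [F]
  · rw [hu]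
    have h : (3 * j + 1) / 3 = j := by omega
    simp only [F]
    rw [if_neg (by omega), if_pos (by omega), h]
  · have hw : u (wit a e) = pick a (look u e) := by
      rw [hu]
      have h3 : wit a e / 3 = fact a e := by unfold wit; omega
      simp only [F]
      rw [if_neg (by unfold wit; omega), if_neg (by unfold wit; omega), h3, fForm_fact, fEnv_fact]
      congr 1
      funext i
      simp only [look, dif_pos (getD_lt_wit a e i)]
    rw [hw]
    exact hpick a _ h

/-- The diagram of a sequence with least witnesses satisfies all the clauses. -/
theorem Diag_clauses {u : ℕ → M} (hu : ∀ a e, (∃ x, ¬ Sat R a (scons x (look u e))) →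
      ¬ Sat R a (scons (u (wit a e)) (look u e)) ∧
        ∀ z, ¬ Sat R a (scons z (look u e)) → ¬ R 2 z (u (wit a e)) z) (a b c d : ℕ) (e : List ℕ) :
    ∀ C ∈ clausesOf a b c d e, ∃ p ∈ C, p.1 ∈ Diag R u ↔ p.2 = true := by
  intro C hC
  have hwit := hu a e
  simp only [clausesOf, List.mem_cons, List.not_mem_nil, or_false] at hC
  rcases hC with rfl | rfl | rfl | rfl | rfl | rfl | rfl | rfl <;>
    simp [look_cons]
  · by_cases h1 : Sat R a (look u e) <;> by_cases h2 : Sat R b (look u e) <;> simp [h1, h2]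
  · by_cases h1 : Sat R a (look u e) <;> simp [h1]
  · by_cases h2 : Sat R b (look u e) <;> simp [h2]
  · by_cases h : ∀ x, Sat R a (scons x (look u e))
    · exact Or.inr (h _)
    · exact Or.inl (not_forall.1 h)
  · by_cases h : ∀ x, Sat R a (scons x (look u e))
    · exact Or.inl h
    · exact Or.inr (hwit (not_forall.1 h)).1
  · by_cases h : Sat R a (scons (u b) (look u e))
    · exact Or.inl h
    · exact Or.inr ((hwit ⟨_, h⟩).2 _ h)
  · exact (em _).symm
  · exact em _

/-- A set of facts satisfying all the clauses is a diagram. -/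
theorem sat_of_clauses {D : Set ℕ}
    (hD : ∀ a b c d e, ∀ C ∈ clausesOf a b c d e, ∃ p ∈ C, p.1 ∈ D ↔ p.2 = true) (φ : ℕ) :
    ∀ e, Sat (fun r x y z => fact (cAtom r 0 1 2) [x, y, z] ∈ D) φ (look id e) ↔
      fact φ e ∈ D := by
  induction φ using code_induction with
  | atom r i j k =>
    intro e
    have h1 := hD r i j k e [(fact (cAtom r i j k) e, false),
      (fact (cAtom (r % 6) 0 1 2) [e.getD i 0, e.getD j 0, e.getD k 0], true)]
      (by simp only [clausesOf, List.mem_cons, true_or, or_true])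
    have h2 := hD r i j k e [(fact (cAtom r i j k) e, true),
      (fact (cAtom (r % 6) 0 1 2) [e.getD i 0, e.getD j 0, e.getD k 0], false)]
      (by simp only [clausesOf, List.mem_cons, true_or, or_true])
    simp only [List.exists_mem_cons_iff, List.not_mem_nil, false_and, exists_false, or_false,
      iff_true, iff_false, Bool.false_eq_true] at h1 h2
    rw [sat_atom]
    simp only [look, id]
    exact ⟨fun h => h2.resolve_right (not_not.2 h), fun h => h1.resolve_left (not_not.2 h)⟩
  | nand a b iha ihb =>
    intro e
    have h0 := hD a b 0 0 e [(fact (cNand a b) e, false), (fact a e, false), (fact b e, false)]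
      (by simp only [clausesOf, List.mem_cons, true_or])
    have h1 := hD a b 0 0 e [(fact (cNand a b) e, true), (fact a e, true)]
      (by simp only [clausesOf, List.mem_cons, true_or, or_true])
    have h2 := hD a b 0 0 e [(fact (cNand a b) e, true), (fact b e, true)]
      (by simp only [clausesOf, List.mem_cons, true_or, or_true])
    simp only [List.exists_mem_cons_iff, List.not_mem_nil, false_and, exists_false, or_false,
      iff_true, iff_false, Bool.false_eq_true] at h0 h1 h2
    rw [sat_nand, iha, ihb]
    refine ⟨fun h => ?_, fun h h' => ?_⟩
    · by_contra hcon
      exact h ⟨h1.resolve_left hcon, h2.resolve_left hcon⟩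
    · rcases h0 with h0 | h0 | h0
      · exact h0 h
      · exact h0 h'.1
      · exact h0 h'.2
  | all a ih =>
    intro e
    simp only [sat_all]
    constructor
    · intro h
      have h1 := hD a 0 0 0 e [(fact (cAll a) e, true), (fact a (wit a e :: e), false)]
        (by simp only [clausesOf, List.mem_cons, true_or, or_true])
      simp only [List.exists_mem_cons_iff, List.not_mem_nil, false_and, exists_false, or_false,
        iff_true, iff_false, Bool.false_eq_true] at h1
      refine h1.resolve_right (not_not.2 ((ih _).1 ?_))
      rw [look_cons]
      exact h _
    · intro h x
      have h1 := hD a x 0 0 e [(fact (cAll a) e, false), (fact a (x :: e), true)]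
        (by simp only [clausesOf, List.mem_cons, true_or, or_true])
      simp only [List.exists_mem_cons_iff, List.not_mem_nil, false_and, exists_false, or_false,
        iff_true, iff_false, Bool.false_eq_true] at h1
      have h2 := (ih _).2 (h1.resolve_left (not_not.2 h))
      rwa [look_cons] at h2

theorem exists_look_eq (v : ℕ → ℕ) (k : ℕ) : ∃ e : List ℕ, ∀ i < k, look id e i = v i :=
  ⟨(List.range k).map v, fun i hi => by simp [look, List.getD, hi]⟩

theorem lnp_of_clauses {D : Set ℕ}
    (hD : ∀ a b c d e, ∀ C ∈ clausesOf a b c d e, ∃ p ∈ C, p.1 ∈ D ↔ p.2 = true) :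
    LNP (fun r x y z => fact (cAtom r 0 1 2) [x, y, z] ∈ D) := by
  intro φ v hv
  obtain ⟨k, hk⟩ := exists_support φ
  obtain ⟨e, he⟩ := exists_look_eq v k
  have hsat : ∀ x, Sat (fun r x y z => fact (cAtom r 0 1 2) [x, y, z] ∈ D) φ (scons x v) ↔
      fact φ (x :: e) ∈ D := by
    intro x
    rw [← sat_of_clauses hD, look_cons]
    refine hk _ _ _ fun i hi => ?_
    cases i with
    | zero => rfl
    | succ i => exact (he i (by omega)).symm
  simp only [hsat] at hv ⊢
  obtain ⟨x, hx⟩ := hv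
  refine ⟨wit φ e, ?_, fun z hz => ?_⟩
  · have h1 := hD φ x 0 0 e [(fact (cAll φ) e, false), (fact φ (x :: e), true)]
      (by simp only [clausesOf, List.mem_cons, true_or, or_true])
    have h2 := hD φ 0 0 0 e [(fact (cAll φ) e, true), (fact φ (wit φ e :: e), false)]
      (by simp only [clausesOf, List.mem_cons, true_or, or_true])
    simp only [List.exists_mem_cons_iff, List.not_mem_nil, false_and, exists_false, or_false,
      iff_true, iff_false, Bool.false_eq_true] at h1 h2
    exact h2.resolve_left (h1.resolve_right hx)
  · have h1 := hD φ z 0 0 e [(fact φ (z :: e), true), (fact (cAtom 2 0 1 0) [z, wit φ e], false)]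
      (by simp only [clausesOf, List.mem_cons, true_or, or_true])
    simp only [List.exists_mem_cons_iff, List.not_mem_nil, false_and, exists_false, or_false,
      iff_true, iff_false, Bool.false_eq_true] at h1
    have h2 := h1.resolve_left hz
    rw [← sat_of_clauses hD, sat_atom, look_cons, look_cons] at h2
    exact h2

/-- A Scott set contains the diagram of a model of every finitely satisfiable set of facts
that is enumerated from one of its members. -/
theorem ScottSet.exists_diagram {S : Set (Set ℕ)} (hS : ScottSet S) {Z : Set ℕ} (hZ : Z ∈ S)
    {pos : ℕ → ℕ} (hpos : Primrec pos)
    (hfin : ∀ n, ∃ (M : Type) (R : ℕ → M → M → M → Prop) (num w : ℕ → M), LNP R ∧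
      ∀ x < n, x ∈ Z → pos x ∈ Diag R (base num w)) :
    ∃ (R : ℕ → ℕ → ℕ → ℕ → Prop) (num w : ℕ → ℕ), LNP R ∧ Diag R (base num w) ∈ S ∧
      ∀ x ∈ Z, pos x ∈ Diag R (base num w) := by
  let κ : ℕ → ℕ := fun j => 3 * j + 1
  have hκ : Primrec κ := Primrec.succ.comp (Primrec.nat_mul.comp (.const 3) .id)
  obtain ⟨D, hDS, hD, hDZ⟩ := ScottSet.exists_model hS hZ primrec_clauses
    (pos := fun x => remap κ (pos x)) ((primrec_remap hκ).comp hpos) (by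
      intro N
      obtain ⟨M, R, num, w, hR, hx⟩ := hfin N
      obtain ⟨u, hu0, hu1, hu⟩ := exists_henkin_sequence hR num w
      refine ⟨Diag R u, fun n _ => Diag_clauses hu _ _ _ _ _, fun x hxN hxZ => ?_⟩
      rw [remap_mem_Diag]
      have : u ∘ lift κ = base num w := by
        funext k
        simp only [Function.comp, lift, base, κ]
        split_ifs with h1 h2
        · rw [← hu0]; congr 1; omega
        · rw [hu1]
        · exact hu0 0
      rw [this]
      exact hx x hxN hxZ)
  have hcl : ∀ a b c d e, ∀ C ∈ clausesOf a b c d e, ∃ p ∈ C, p.1 ∈ D ↔ p.2 = true := by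
    intro a b c d e
    rw [← clauses_encode]
    exact hD _
  have hDiag : Diag (fun r x y z => fact (cAtom r 0 1 2) [x, y, z] ∈ D) id = D := by
    ext x
    rw [← fact_eta x, fact_mem_Diag, sat_of_clauses hcl]
  have hmem : ∀ x, x ∈ Diag (fun r x y z => fact (cAtom r 0 1 2) [x, y, z] ∈ D)
      (base (fun j => 3 * j) fun j => 3 * j + 1) ↔ remap κ x ∈ D := by
    intro x
    have : id ∘ lift κ = base (fun j => 3 * j) fun j => 3 * j + 1 := by
      funext k
      simp only [Function.comp, lift, base, κ, id]
      split_ifs <;> omega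
    rw [← this, ← remap_mem_Diag, hDiag]
  refine ⟨_, fun j => 3 * j, fun j => 3 * j + 1, lnp_of_clauses hcl, ?_, fun x hx => ?_⟩
  · rw [show Diag _ _ = remap κ ⁻¹' D from Set.ext hmem]
    exact ScottSet.preimage_mem hS hDS (primrec_remap hκ)
  · exact (hmem _).2 (hDZ x hx)

end Henkin

section Axioms

variable {M : Type}

theorem scons_succ (x : M) (v : ℕ → M) (n : ℕ) : scons x v (n + 1) = v n := rfl

/-- The relational form of the basic axioms of arithmetic.  The relations `R 0` to `R 5` are
the graphs of addition and multiplication, the order, equality, being zero and being one. -/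
structure IsArith (R : ℕ → M → M → M → Prop) : Prop where
  eq_refl : ∀ x, R 3 x x x
  eq_symm : ∀ x y, R 3 x y x → R 3 y x y
  eq_trans : ∀ x y z, R 3 x y x → R 3 y z y → R 3 x z x
  congr : ∀ r < 6, ∀ x x' y y' z z', R 3 x x' x → R 3 y y' y → R 3 z z' z → R r x y z → R r x' y' z'
  add_total : ∀ x y, ∃ z, R 0 x y z
  add_unique : ∀ x y z z', R 0 x y z → R 0 x y z' → R 3 z z' z
  mul_total : ∀ x y, ∃ z, R 1 x y z
  mul_unique : ∀ x y z z', R 1 x y z → R 1 x y z' → R 3 z z' z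
  zero_total : ∃ z, R 4 z z z
  zero_unique : ∀ z z', R 4 z z z → R 4 z' z' z' → R 3 z z' z
  one_total : ∃ z, R 5 z z z
  one_unique : ∀ z z', R 5 z z z → R 5 z' z' z' → R 3 z z' z
  add_zero : ∀ x o, R 4 o o o → R 0 x o x
  add_succ : ∀ x y o a b c, R 5 o o o → R 0 y o a → R 0 x a b → R 0 x y c → R 0 c o b
  mul_zero : ∀ x o, R 4 o o o → R 1 x o o
  mul_succ : ∀ x y o a b c, R 5 o o o → R 0 y o a → R 1 x a b → R 1 x y c → R 0 c x b
  not_lt_zero : ∀ x o, R 4 o o o → ¬ R 2 x o x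
  lt_succ : ∀ x y o a, R 5 o o o → R 0 y o a → R 2 x a x → ¬ R 2 x y x → R 3 x y x
  lt_succ_of_lt : ∀ x y o a, R 5 o o o → R 0 y o a → R 2 x y x → R 2 x a x
  lt_succ_of_eq : ∀ x y o a, R 5 o o o → R 0 y o a → R 3 x y x → R 2 x a x
  succ_ne_zero : ∀ x o a, R 5 o o o → R 0 x o a → ¬ R 4 a a a
  succ_inj : ∀ x y o a, R 5 o o o → R 0 x o a → R 0 y o a → R 3 x y x
  exists_pred : ∀ x, ¬ R 4 x x x → ∃ y o, R 5 o o o ∧ R 0 y o x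

/-- `a` prefixed by `n` universal quantifiers. -/
def cAlls : ℕ → ℕ → ℕ
  | 0, a => a
  | n + 1, a => cAlls n (cAll a)

/-- Codes of the axioms `IsArith`. -/
def arithAxioms : List ℕ :=
  [cAlls 1 (cAtom 3 0 0 0),
   cAlls 2 (cImp (cAtom 3 1 0 1) (cAtom 3 0 1 0)),
   cAlls 3 (cImp (cAtom 3 2 1 2) (cImp (cAtom 3 1 0 1) (cAtom 3 2 0 2))),
   cAlls 2 (cEx (cAtom 0 2 1 0)),
   cAlls 4 (cImp (cAtom 0 3 2 1) (cImp (cAtom 0 3 2 0) (cAtom 3 1 0 1))),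
   cAlls 2 (cEx (cAtom 1 2 1 0)),
   cAlls 4 (cImp (cAtom 1 3 2 1) (cImp (cAtom 1 3 2 0) (cAtom 3 1 0 1))),
   cEx (cAtom 4 0 0 0),
   cAlls 2 (cImp (cAtom 4 1 1 1) (cImp (cAtom 4 0 0 0) (cAtom 3 1 0 1))),
   cEx (cAtom 5 0 0 0),
   cAlls 2 (cImp (cAtom 5 1 1 1) (cImp (cAtom 5 0 0 0) (cAtom 3 1 0 1))),
   cAlls 2 (cImp (cAtom 4 0 0 0) (cAtom 0 1 0 1)),
   cAlls 6 (cImp (cAtom 5 3 3 3) (cImp (cAtom 0 4 3 2) (cImp (cAtom 0 5 2 1)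
    (cImp (cAtom 0 5 4 0) (cAtom 0 0 3 1))))),
   cAlls 2 (cImp (cAtom 4 0 0 0) (cAtom 1 1 0 0)),
   cAlls 6 (cImp (cAtom 5 3 3 3) (cImp (cAtom 0 4 3 2) (cImp (cAtom 1 5 2 1)
    (cImp (cAtom 1 5 4 0) (cAtom 0 0 5 1))))),
   cAlls 2 (cImp (cAtom 4 0 0 0) (cNeg (cAtom 2 1 0 1))),
   cAlls 4 (cImp (cAtom 5 1 1 1) (cImp (cAtom 0 2 1 0) (cImp (cAtom 2 3 0 3)
    (cImp (cNeg (cAtom 2 3 2 3)) (cAtom 3 3 2 3))))),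
   cAlls 4 (cImp (cAtom 5 1 1 1) (cImp (cAtom 0 2 1 0) (cImp (cAtom 2 3 2 3) (cAtom 2 3 0 3)))),
   cAlls 4 (cImp (cAtom 5 1 1 1) (cImp (cAtom 0 2 1 0) (cImp (cAtom 3 3 2 3) (cAtom 2 3 0 3)))),
   cAlls 3 (cImp (cAtom 5 1 1 1) (cImp (cAtom 0 2 1 0) (cNeg (cAtom 4 0 0 0)))),
   cAlls 4 (cImp (cAtom 5 1 1 1) (cImp (cAtom 0 3 1 0) (cImp (cAtom 0 2 1 0) (cAtom 3 3 2 3)))),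
   cAlls 1 (cImp (cNeg (cAtom 4 0 0 0)) (cEx (cEx (cAnd (cAtom 5 0 0 0) (cAtom 0 1 0 2)))))]
  ++ (List.range 6).map fun r => cAlls 6 (cImp (cAtom 3 5 4 5) (cImp (cAtom 3 3 2 3)
    (cImp (cAtom 3 1 0 1) (cImp (cAtom r 5 3 1) (cAtom r 4 2 0)))))

theorem sat_arithAxioms {R : ℕ → M → M → M → Prop} {v : ℕ → M} :
    (∀ a ∈ arithAxioms, Sat R a v) ↔ IsArith R := by
  simp only [arithAxioms, List.forall_mem_append, List.forall_mem_cons, List.not_mem_nil,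
    List.forall_mem_map, List.mem_range, cAlls, sat_all, sat_imp, sat_neg, sat_ex, sat_and,
    sat_atom, scons, Nat.reduceMod, IsEmpty.forall_iff, and_true, implies_true]
  constructor
  · rintro ⟨⟨h1, h2, h3, h4, h5, h6, h7, h8, h9, h10, h11, h12, h13, h14, h15, h16, h17, h18, h19,
      h20, h21, h22⟩, h⟩
    exact ⟨h1, h2, h3, fun r hr => by simpa [Nat.mod_eq_of_lt hr] using h r hr, h4, h5, h6, h7, h8,
      h9, h10, h11, h12, h13, h14, h15, h16, h17, h18, h19, h20, h21, h22⟩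
  · rintro ⟨h1, h2, h3, h, h4, h5, h6, h7, h8, h9, h10, h11, h12, h13, h14, h15, h16, h17, h18, h19,
      h20, h21, h22⟩
    exact ⟨⟨h1, h2, h3, h4, h5, h6, h7, h8, h9, h10, h11, h12, h13, h14, h15, h16, h17, h18, h19,
      h20, h21, h22⟩, fun r hr => by simpa [Nat.mod_eq_of_lt hr] using h r hr⟩

/-- The standard model. -/
def natRel (r x y z : ℕ) : Prop :=
  match r with
  | 0 => x + y = z
  | 1 => x * y = z
  | 2 => x < y
  | 3 => x = y
  | 4 => x = 0
  | _ => x = 1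

theorem isArith_natRel : IsArith natRel := by
  constructor <;> simp only [natRel]
  case congr => rintro r - x x' y y' z z' rfl rfl rfl h; exact h
  case add_succ => rintro x y o a b c rfl rfl rfl rfl; omega
  case mul_succ => rintro x y o a b c rfl rfl rfl rfl; ring
  case exists_pred => exact fun x hx => ⟨x - 1, 1, rfl, by omega⟩
  all_goals grind

theorem lnp_natRel : LNP natRel := by
  classical
  intro φ v h
  exact ⟨Nat.find h, Nat.find_spec h, fun z hz => by simpa [natRel] using Nat.find_min' h hz⟩

/-- The formula saying that, for `p = 2 ^ i` and `q = 2 ^ (i + 1)`, the `i`-th binary digit of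
`y` is one; the variables `0`, `1`, `2` stand for `y`, `p`, `q`. -/
def cDigit : ℕ :=
  cEx (cEx (cEx (cEx (cAnd (cAtom 1 3 6 1) (cAnd (cAtom 0 5 2 0) (cAnd (cAtom 0 1 0 4)
    (cAtom 2 2 5 2)))))))

/-- The relation defined by `cDigit`. -/
def Dig (R : ℕ → M → M → M → Prop) (y p q : M) : Prop :=
  ∃ u t a b, R 1 u q a ∧ R 0 p t b ∧ R 0 a b y ∧ R 2 t p t

@[simp] theorem sat_cDigit {R : ℕ → M → M → M → Prop} {v : ℕ → M} :
    Sat R cDigit v ↔ Dig R (v 0) (v 1) (v 2) := by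
  simp [cDigit, scons, Dig]

theorem digit_nat (y i : ℕ) : (∃ u t a b, u * 2 ^ (i + 1) = a ∧ 2 ^ i + t = b ∧ a + b = y ∧
    t < 2 ^ i) ↔ y / 2 ^ i % 2 = 1 := by
  have hp : 0 < 2 ^ i := by positivity
  constructor
  · rintro ⟨u, t, _, _, rfl, rfl, rfl, ht⟩
    have : u * 2 ^ (i + 1) + (2 ^ i + t) = t + 2 ^ i * (2 * u + 1) := by ring
    rw [this, Nat.add_mul_div_left _ _ hp, Nat.div_eq_of_lt ht]
    omega
  · intro h
    refine ⟨y / 2 ^ i / 2, y % 2 ^ i, _, _, rfl, rfl, ?_, Nat.mod_lt _ hp⟩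
    have h1 := Nat.div_add_mod y (2 ^ i)
    have h2 : y / 2 ^ i = 2 * (y / 2 ^ i / 2) + 1 := by omega
    generalize y / 2 ^ i / 2 = k at *
    rw [h2] at h1
    rw [pow_succ]
    linarith

/-- The code of the conjunction of a list of formulas. -/
def cConj (l : List ℕ) : ℕ := l.foldr cAnd (cImp 0 0)

@[simp] theorem sat_cConj {R : ℕ → M → M → M → Prop} {v : ℕ → M} (l : List ℕ) :
    Sat R (cConj l) v ↔ ∀ a ∈ l, Sat R a v := by
  induction l with
  | nil => simp [cConj]
  | cons b l ih => simpa [cConj] using fun _ => ih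

/-- The sequence `num` behaves like the sequence of numerals. -/
structure IsNum (R : ℕ → M → M → M → Prop) (num : ℕ → M) : Prop where
  zero : R 4 (num 0) (num 0) (num 0)
  one : R 5 (num 1) (num 1) (num 1)
  succ : ∀ a, R 0 (num a) (num 1) (num (a + 1))
  dig : ∀ a i, Dig R (num a) (num (2 ^ i)) (num (2 ^ (i + 1))) ↔ a / 2 ^ i % 2 = 1
  ne : ∀ a b, ¬ R 3 (num (a + b + 1)) (num a) (num (a + b + 1))

theorem isNum_natRel : IsNum natRel id where
  zero := rfl
  one := rfl
  succ _ := rfl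
  dig a i := digit_nat a i
  ne a b := by simp only [natRel, id]; omega

/-- An enumeration of the facts `IsArith` and `IsNum`. -/
def numFact (n : ℕ) : ℕ :=
  if n % 4 = 0 then fact (cConj (cAtom 4 0 0 0 :: cAtom 5 1 1 1 :: arithAxioms)) [0, 3]
  else if n % 4 = 1 then
    fact (if (n / 4).unpair.1 / 2 ^ (n / 4).unpair.2 % 2 = 1 then cDigit else cNeg cDigit)
      [3 * (n / 4).unpair.1, 3 * 2 ^ (n / 4).unpair.2, 3 * 2 ^ ((n / 4).unpair.2 + 1)]
  else if n % 4 = 2 then fact (cAtom 0 0 1 2) [3 * (n / 4), 3, 3 * (n / 4 + 1)]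
  else fact (cNeg (cAtom 3 0 1 0)) [3 * ((n / 4).unpair.1 + (n / 4).unpair.2 + 1),
    3 * (n / 4).unpair.1]

theorem primrec_two_pow : Primrec fun n : ℕ => 2 ^ n := by
  refine (Primrec.nat_rec' .id (.const 1) (Primrec.nat_mul.comp
    (Primrec.snd.comp Primrec.snd) (.const 2)).to₂).of_eq fun n => ?_
  induction n with
  | zero => rfl
  | succ n ih => simp only [id, pow_succ] at ih ⊢; rw [← ih]

theorem primrec_three_mul : Primrec fun n : ℕ => 3 * n := Primrec.nat_mul.comp (.const 3) .id

theorem primrec_numFact : Primrec numFact := by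
  have hm : Primrec fun n : ℕ => n % 4 := Primrec.nat_mod.comp .id (.const 4)
  have hd : Primrec fun n : ℕ => n / 4 := Primrec.nat_div.comp .id (.const 4)
  have ha : Primrec fun n : ℕ => (n / 4).unpair.1 := Primrec.fst.comp (Primrec.unpair.comp hd)
  have hb : Primrec fun n : ℕ => (n / 4).unpair.2 := Primrec.snd.comp (Primrec.unpair.comp hd)
  have one {f : ℕ → ℕ} (hf : Primrec f) : Primrec fun x => [f x] :=
    Primrec.list_cons.comp hf (.const [])
  refine Primrec.ite (Primrec.eq.comp hm (.const 0)) (.const _)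
    (Primrec.ite (Primrec.eq.comp hm (.const 1)) (primrec_fact.comp (Primrec.ite (Primrec.eq.comp
      (Primrec.nat_mod.comp (Primrec.nat_div.comp ha (primrec_two_pow.comp hb)) (.const 2))
      (.const 1)) (.const _) (.const _)) ?_)
    (Primrec.ite (Primrec.eq.comp hm (.const 2)) (primrec_fact.comp (.const _) ?_)
      (primrec_fact.comp (.const _) ?_)))
  · exact Primrec.list_cons.comp (primrec_three_mul.comp ha) (Primrec.list_cons.comp
      (primrec_three_mul.comp (primrec_two_pow.comp hb)) (one (primrec_three_mul.comp
        (primrec_two_pow.comp (Primrec.succ.comp hb)))))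
  · exact Primrec.list_cons.comp (primrec_three_mul.comp hd) (Primrec.list_cons.comp
      (.const 3) (one (primrec_three_mul.comp (Primrec.succ.comp hd))))
  · exact Primrec.list_cons.comp (primrec_three_mul.comp (Primrec.succ.comp (Primrec.nat_add.comp
      ha hb))) (one (primrec_three_mul.comp ha))

theorem numFact_mem {R : ℕ → M → M → M → Prop} {num w : ℕ → M} :
    (∀ n, numFact n ∈ Diag R (base num w)) ↔ IsArith R ∧ IsNum R num := by
  have b3 : base num w 3 = num 1 := base_num num w 1
  constructor
  · intro h
    have h0 := h 0
    have h1 := fun a b => h (4 * Nat.pair a b + 1)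
    have h2 := fun a => h (4 * a + 2)
    have h3 := fun a b => h (4 * Nat.pair a b + 3)
    have e1 : ∀ k, (4 * k + 1) % 4 = 1 ∧ (4 * k + 1) / 4 = k := by omega
    have e2 : ∀ k, (4 * k + 2) % 4 = 2 ∧ (4 * k + 2) / 4 = k := by omega
    have e3 : ∀ k, (4 * k + 3) % 4 = 3 ∧ (4 * k + 3) / 4 = k := by omega
    simp only [numFact, Nat.zero_mod, if_true, fact_mem_Diag, sat_cConj, List.forall_mem_cons,
      sat_arithAxioms] at h0
    simp only [numFact, e1] at h1
    simp only [numFact, e2] at h2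
    simp only [numFact, e3] at h3
    simp [look, b3] at h0 h1 h2 h3
    refine ⟨h0.2.2, ⟨h0.1, h0.2.1, h2, fun a i => ?_, h3⟩⟩
    have h1 := h1 a i
    split_ifs at h1 with hc
    · simp [look] at h1
      simp [h1, hc]
    · simp [look] at h1
      simp [h1, hc]
  · rintro ⟨hA, hN⟩ n
    unfold numFact
    split_ifs with c0 c1 c2 c3
    · simp only [fact_mem_Diag, sat_cConj, List.forall_mem_cons, sat_arithAxioms]
      simp [look, hA, hN.zero, hN.one, b3]
    · simpa [look, hN.dig] using c2
    · simpa [look, hN.dig] using c2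
    · simpa [look, b3] using hN.succ _
    · simpa [look] using hN.ne _ _

theorem ScottSet.exists_base {S : Set (Set ℕ)} (hS : ScottSet S) :
    ∃ (R : ℕ → ℕ → ℕ → ℕ → Prop) (num w : ℕ → ℕ), LNP R ∧ IsArith R ∧ IsNum R num ∧
      Diag R (base num w) ∈ S := by
  obtain ⟨R, num, w, h1, h2, h3⟩ := ScottSet.exists_diagram hS (ScottSet.univ_mem hS)
    primrec_numFact fun n => ⟨ℕ, natRel, id, id, lnp_natRel, fun x _ _ =>
      numFact_mem.2 ⟨isArith_natRel, isNum_natRel⟩ x⟩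
  obtain ⟨h4, h5⟩ := numFact_mem.1 fun n => h3 n trivial
  exact ⟨R, num, w, h1, h4, h5, h2⟩

end Axioms

section Extension

variable {M : Type} {R : ℕ → M → M → M → Prop} {S : Set (Set ℕ)}

/-- Realisation of countable types over countable sets. -/
def Saturated (R : ℕ → M → M → M → Prop) : Prop := ∀ (φ : ℕ → ℕ) (v : ℕ → ℕ → M),
  (∀ n, ∃ y, ∀ m < n, Sat R (φ m) (scons y (v m))) → ∃ y, ∀ m, Sat R (φ m) (scons y (v m))

theorem saturated_ultraRel {A : Type} [Nonempty A] (R : ℕ → A → A → A → Prop) :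
    Saturated (ultraRel R) := by
  intro φ v h
  have hsc : ∀ m (x : ℕ → A) i, (fun k => scons x (v m) k i) = scons (x i) fun k => v m k i := by
    intro m x i; funext k; cases k <;> rfl
  simp only [sat_ultraRel, hsc] at h ⊢
  exact ultra_saturation (fun m i a => Sat R (φ m) (scons a fun k => v m k i)) h

theorem exists_fact (χ : ℕ) : ∃ x : ℕ, ∀ {M : Type} (R : ℕ → M → M → M → Prop) (u : ℕ → M),
    x ∈ Diag R u ↔ Sat R χ u := by
  obtain ⟨k, hk⟩ := exists_support χ
  refine ⟨fact χ (List.range k), fun R u => ?_⟩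
  rw [fact_mem_Diag]
  exact hk R _ _ fun i hi => by simp [look, List.getD, hi]

theorem exists_cons_formula (x : ℕ) : ∃ ψ : ℕ, ∀ {M : Type} (R : ℕ → M → M → M → Prop)
    (num w : ℕ → M) (y : M),
    x ∈ Diag R (base num (scons y w)) ↔ Sat R ψ (scons y (base num w)) := by
  let ρ : ℕ → ℕ := fun k => if k = 1 then 0 else if k % 3 = 1 then k - 2 else k + 1
  obtain ⟨ψ, hψ⟩ := exists_rename (fForm x) fun i => ρ ((fEnv x).getD i 0)
  refine ⟨ψ, fun R num w y => ?_⟩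
  rw [hψ]
  have : ∀ k, scons y (base num w) (ρ k) = base num (scons y w) k := by
    intro k
    simp only [ρ]
    split_ifs with h1 h2
    · subst h1; simp [base, scons]
    · obtain ⟨j, rfl⟩ : ∃ j, k = 3 * (j + 1) + 1 := ⟨k / 3 - 1, by omega⟩
      rw [base_var, show 3 * (j + 1) + 1 - 2 = (3 * j + 1) + 1 by omega, scons_succ, base_var,
        scons_succ]
    · rw [scons_succ]
      simp [base, h2]
  have h : look (base num (scons y w)) (fEnv x) =
      scons y (base num w) ∘ fun i => ρ ((fEnv x).getD i 0) := by
    funext i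
    exact (this _).symm
  rw [← h]
  rfl

theorem Saturated.realize (hR : Saturated R) (num : ℕ → M) (x : ℕ → ℕ) (w : ℕ → ℕ → M)
    (h : ∀ n, ∃ y, ∀ m < n, x m ∈ Diag R (base num (scons y (w m)))) :
    ∃ y, ∀ m, x m ∈ Diag R (base num (scons y (w m))) := by
  choose ψ hψ using exists_cons_formula
  simp only [hψ] at h ⊢
  exact hR (fun m => ψ (x m)) _ h

theorem exists_of_Diag_eq {N : Type} {R' : ℕ → N → N → N → Prop} {num w : ℕ → M} {num' w' : ℕ → N}
    (h : Diag R (base num w) = Diag R' (base num' w')) (X : List ℕ)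
    (hX : ∃ y, ∀ x ∈ X, x ∈ Diag R' (base num' (scons y w'))) :
    ∃ y, ∀ x ∈ X, x ∈ Diag R (base num (scons y w)) := by
  choose ψ hψ using exists_cons_formula
  simp only [hψ] at hX ⊢
  obtain ⟨z, hz⟩ := exists_fact (cEx (cConj (X.map ψ)))
  have := Set.ext_iff.1 h z
  rw [hz, hz] at this
  simp only [sat_ex, sat_cConj, List.forall_mem_map] at this
  exact this.2 hX

theorem ScottSet.turingJoin_mem (hS : ScottSet S) {X Y : Set ℕ} (hX : X ∈ S) (hY : Y ∈ S) :
    turingJoin X Y ∈ S := hS.2.1.1 X hX Y hY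

theorem even_mem_turingJoin {X Y : Set ℕ} {m : ℕ} : 2 * m ∈ turingJoin X Y ↔ m ∈ X := by
  simp only [turingJoin, Set.mem_union, Set.mem_ofPred_eq]
  constructor
  · rintro (⟨k, hk, h⟩ | ⟨k, hk, h⟩)
    · rwa [show m = k by omega]
    · omega
  · exact fun h => Or.inl ⟨m, h, rfl⟩

theorem odd_mem_turingJoin {X Y : Set ℕ} {m : ℕ} : 2 * m + 1 ∈ turingJoin X Y ↔ m ∈ Y := by
  simp only [turingJoin, Set.mem_union, Set.mem_ofPred_eq]
  constructor
  · rintro (⟨k, hk, h⟩ | ⟨k, hk, h⟩)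
    · omega
    · rwa [show m = k by omega]
  · exact fun h => Or.inr ⟨m, h, rfl⟩

theorem mem_or_neg_mem_Diag (R : ℕ → M → M → M → Prop) (u : ℕ → M) (x : ℕ) :
    x ∈ Diag R u ∨ fact (cNeg (fForm x)) (fEnv x) ∈ Diag R u := by
  rw [fact_mem_Diag, sat_neg]
  exact em _

/-- A coded finitely satisfiable type over a tuple whose type lies in the Scott set has a
realisation whose type over the tuple lies in the Scott set. -/
theorem ScottSet.extend (hS : ScottSet S) (hL : LNP R) (hR : Saturated R) {num w : ℕ → M}
    (hw : Diag R (base num w) ∈ S) {Z : Set ℕ} (hZ : Z ∈ S) {pos : ℕ → ℕ} (hpos : Primrec pos)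
    (hfin : ∀ n, ∃ y, ∀ x < n, x ∈ Z → pos x ∈ Diag R (base num (scons y w))) :
    ∃ y, Diag R (base num (scons y w)) ∈ S ∧ ∀ x ∈ Z, pos x ∈ Diag R (base num (scons y w)) := by
  classical
  let σ : ℕ → ℕ := fun j => 3 * (j + 1) + 1
  have hσ : Primrec σ := Primrec.succ.comp (primrec_three_mul.comp Primrec.succ)
  have hdiv : Primrec fun n : ℕ => n / 2 := Primrec.nat_div.comp .id (.const 2)
  have hmod : Primrec fun n : ℕ => n % 2 := Primrec.nat_mod.comp .id (.const 2)
  let pos' : ℕ → ℕ := fun n => if n % 2 = 0 then pos (n / 2) else remap σ (n / 2)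
  have hpos' : Primrec pos' := Primrec.ite (Primrec.eq.comp hmod (.const 0)) (hpos.comp hdiv)
    ((primrec_remap hσ).comp hdiv)
  have p0 : ∀ m, pos' (2 * m) = pos m := fun m => by simp [pos']
  have p1 : ∀ m, pos' (2 * m + 1) = remap σ m := fun m => by
    simp only [pos']
    rw [if_neg (by omega), show (2 * m + 1) / 2 = m by omega]
  obtain ⟨R', num', w', -, hD, hD'⟩ := ScottSet.exists_diagram hS
    (ScottSet.turingJoin_mem hS hZ hw) hpos' fun n => by
      obtain ⟨y, hy⟩ := hfin n
      refine ⟨M, R, num, scons y w, hL, fun x hx hxZ => ?_⟩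
      obtain ⟨m, rfl | rfl⟩ : ∃ m, x = 2 * m ∨ x = 2 * m + 1 := ⟨x / 2, by omega⟩
      · rw [p0]
        exact hy m (by omega) (even_mem_turingJoin.1 hxZ)
      · rw [p1, remap_mem_base (w' := w) fun j => by simp only [σ]; rw [base_var]; rfl]
        exact odd_mem_turingJoin.1 hxZ
  have htail : Diag R (base num w) = Diag R' (base num' fun j => w' (j + 1)) := by
    refine Diag_eq_of_subset fun x hx => ?_
    have := hD' _ (odd_mem_turingJoin.2 hx)
    rwa [p1, remap_mem_base (w' := fun j => w' (j + 1)) fun j => by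
      simp only [σ]; rw [base_var] ] at this
  have hw' : scons (w' 0) (fun j => w' (j + 1)) = w' := by
    funext j; cases j <;> rfl
  let f : ℕ → ℕ := fun m =>
    if m ∈ Diag R' (base num' w') then m else fact (cNeg (fForm m)) (fEnv m)
  have hf : ∀ m, f m ∈ Diag R' (base num' w') := by
    intro m
    by_cases h : m ∈ Diag R' (base num' w')
    · simp only [f, if_pos h]; exact h
    · simp only [f, if_neg h]; exact (mem_or_neg_mem_Diag R' _ m).resolve_left h
  obtain ⟨y, hy⟩ := hR.realize num f (fun _ => w) fun n => by
    obtain ⟨y, hy⟩ := exists_of_Diag_eq htail ((List.range n).map f) ⟨w' 0, by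
      rw [hw']; simpa using fun m _ => hf m⟩
    exact ⟨y, fun m hm => hy _ (List.mem_map.2 ⟨m, by simpa using hm, rfl⟩)⟩
  have hEq : Diag R' (base num' w') = Diag R (base num (scons y w)) := by
    refine Diag_eq_of_subset fun m hm => ?_
    have := hy m
    simpa only [f, if_pos hm] using this
  refine ⟨y, hEq ▸ hD, fun x hx => ?_⟩
  rw [← hEq, ← p0]
  exact hD' _ (even_mem_turingJoin.2 hx)

/-- The sequence `W` cut off at `k`. -/
def trunc (d : M) (W : ℕ → M) (k j : ℕ) : M := if j < k then W j else d

theorem primrec_cut (k : ℕ) : Primrec fun j : ℕ => if j ≤ k then 3 * j + 1 else 0 :=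
  Primrec.ite (Primrec.nat_le.comp .id (.const k)) (Primrec.succ.comp primrec_three_mul) (.const 0)

theorem scons_trunc {num W : ℕ → M} {k n : ℕ} (h : k ≤ n) (y : M) (j : ℕ) :
    scons y (trunc (num 0) W k) j =
      base num (scons y (trunc (num 0) W n)) (if j ≤ k then 3 * j + 1 else 0) := by
  split_ifs with hj
  · rw [base_var]
    cases j with
    | zero => rfl
    | succ j => simp only [scons_succ, trunc, if_pos (show j < k by omega),
        if_pos (show j < n by omega)]
  · rw [base_zero]
    cases j with
    | zero => omega
    | succ j => simp only [scons_succ, trunc, if_neg (show ¬ j < k by omega)]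

theorem Diag_trunc_congr {num W : ℕ → M} {k n : ℕ} (h : k ≤ n) {y y' : M}
    (hy : Diag R (base num (scons y (trunc (num 0) W n))) =
      Diag R (base num (scons y' (trunc (num 0) W n)))) :
    Diag R (base num (scons y (trunc (num 0) W k))) =
      Diag R (base num (scons y' (trunc (num 0) W k))) := by
  ext x
  rw [← remap_mem_base (scons_trunc h y), ← remap_mem_base (scons_trunc h y'), hy]

/-- A coded finitely satisfiable type has a realisation whose types over all the initial parts
of a given sequence lie in the Scott set. -/
theorem ScottSet.extend_sequence (hS : ScottSet S) (hL : LNP R) (hR : Saturated R) {num W : ℕ → M}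
    (hW : ∀ k, Diag R (base num (trunc (num 0) W k)) ∈ S) (L : ℕ)
    {Z : Set ℕ} (hZ : Z ∈ S) {pos : ℕ → ℕ} (hpos : Primrec pos)
    (hfin : ∀ n, ∃ y, ∀ x < n, x ∈ Z →
      pos x ∈ Diag R (base num (scons y (trunc (num 0) W L)))) :
    ∃ y, (∀ k, Diag R (base num (scons y (trunc (num 0) W (L + k)))) ∈ S) ∧
      ∀ x ∈ Z, pos x ∈ Diag R (base num (scons y (trunc (num 0) W L))) := by
  classical
  let T : ℕ → M → Set ℕ := fun k y => Diag R (base num (scons y (trunc (num 0) W (L + k))))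
  obtain ⟨y₀, hy₀, hy₀Z⟩ := ScottSet.extend hS hL hR (hW L) hZ hpos hfin
  have hstep : ∀ k y, T k y ∈ S → ∃ y', T (k + 1) y' ∈ S ∧ T k y = T k y' := by
    intro k y hy
    obtain ⟨y', h1, h2⟩ := ScottSet.extend hS hL hR (hW (L + (k + 1))) hy
      (primrec_remap (primrec_cut (L + k))) fun n => ⟨y, fun x _ hx => by
        rwa [remap_mem_base (scons_trunc (by omega) y)]⟩
    refine ⟨y', h1, Diag_eq_of_subset fun x hx => ?_⟩
    have := h2 x hx
    rwa [remap_mem_base (scons_trunc (by omega) y')] at this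
  choose! g hg using hstep
  let y : ℕ → M := fun k => k.rec y₀ g
  have hyS : ∀ k, T k (y k) ∈ S := by
    intro k
    induction k with
    | zero => exact hy₀
    | succ k ih => exact (hg k _ ih).1
  have hyT : ∀ n k, k ≤ n → T k (y k) = T k (y n) := by
    intro n k hkn
    induction n, hkn using Nat.le_induction with
    | base => rfl
    | succ n hkn ih => exact ih.trans (Diag_trunc_congr (by omega) (hg n _ (hyS n)).2)
  let f : ℕ → ℕ → ℕ := fun k m =>
    if m ∈ T k (y k) then m else fact (cNeg (fForm m)) (fEnv m)
  have hf : ∀ k m, f k m ∈ T k (y k) := by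
    intro k m
    by_cases h : m ∈ T k (y k)
    · simp only [f, if_pos h]; exact h
    · simp only [f, if_neg h]; exact (mem_or_neg_mem_Diag R _ m).resolve_left h
  obtain ⟨z, hz⟩ := hR.realize num (fun m => f m.unpair.1 m.unpair.2)
    (fun m => trunc (num 0) W (L + m.unpair.1)) fun n => ⟨y n, fun m hm => by
      have h1 := hf m.unpair.1 m.unpair.2
      rwa [hyT n _ ((Nat.unpair_left_le m).trans hm.le)] at h1⟩
  have hEq : ∀ k, T k (y k) = T k z := by
    intro k
    refine Diag_eq_of_subset fun m hm => ?_
    have := hz (Nat.pair k m)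
    have hfm : f k m = m := if_pos hm
    simp only [Nat.unpair_pair, hfm] at this
    exact this
  refine ⟨z, fun k => ?_, fun x hx => ?_⟩
  · have := hyS k
    rwa [hEq] at this
  · have : pos x ∈ T 0 (y 0) := hy₀Z x hx
    rwa [hEq] at this

end Extension

section Good

variable {M : Type} {R : ℕ → M → M → M → Prop} {S : Set (Set ℕ)} {num : ℕ → M}

/-- The environment listed by `l`. -/
def listEnv (num : ℕ → M) (l : List M) (j : ℕ) : M := l.getD j (num 0)

/-- All the finite tuples of `B` have their type in `S`. -/
def Good (S : Set (Set ℕ)) (R : ℕ → M → M → M → Prop) (num : ℕ → M) (B : Set M) : Prop :=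
  ∀ l : List M, (∀ x ∈ l, x ∈ B) → Diag R (base num (listEnv num l)) ∈ S

theorem exists_listEnv_eq {u : ℕ → M} (hu : u 0 = num 0) {l : List M}
    (h : ∀ x ∈ l, ∃ i, x = u i) : ∃ r : List ℕ, ∀ j, listEnv num l j = u (r.getD j 0) := by
  choose! f hf using h
  refine ⟨l.map f, fun j => ?_⟩
  by_cases hj : j < l.length
  · simp only [listEnv, List.getD_eq_getElem _ _ hj,
      List.getD_eq_getElem _ _ (show j < (l.map f).length by simpa using hj), List.getElem_map]
    exact hf _ (List.getElem_mem hj)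
  · simp [listEnv, List.getD, hj, hu]

theorem good_of_trunc (hS : ScottSet S) {W : ℕ → M} {L : ℕ}
    (h : ∀ k, Diag R (base num (trunc (num 0) W (L + k))) ∈ S) :
    Good S R num (Set.range (base num W)) := by
  intro l hl
  obtain ⟨r, hr⟩ := exists_listEnv_eq (num := num) (u := base num W) (base_zero _ _) fun x hx => by
    obtain ⟨i, hi⟩ := hl x hx
    exact ⟨i, hi.symm⟩
  refine ScottSet.reindex hS (ρ := fun j => r.getD j 0) ?_ (fun j => ?_) (h (r.sum + 1))
  · exact (Primrec.list_getD 0).comp (.const r) .id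
  · rw [hr]
    have : r.getD j 0 ≤ r.sum := by
      by_cases hj : j < r.length
      · rw [List.getD_eq_getElem _ _ hj]
        exact List.le_sum_of_mem (List.getElem_mem hj)
      · simp [List.getD, hj]
    generalize r.getD j 0 = i at this
    unfold base trunc
    split_ifs <;> first | rfl | omega

/-- The extension step of the construction. -/
theorem Good.extend (hS : ScottSet S) (hL : LNP R) (hR : Saturated R) {B : Set M}
    (hB : Good S R num B) (hc : B.Countable) (t : List M) (ht : ∀ x ∈ t, x ∈ B)
    (h0 : num 0 ∈ B) {Z : Set ℕ} (hZ : Z ∈ S) {pos : ℕ → ℕ} (hpos : Primrec pos)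
    (hfin : ∀ n, ∃ y, ∀ x < n, x ∈ Z → pos x ∈ Diag R (base num (scons y (listEnv num t)))) :
    ∃ y, Good S R num (insert y B) ∧
      ∀ x ∈ Z, pos x ∈ Diag R (base num (scons y (listEnv num t))) := by
  obtain ⟨b, rfl⟩ := hc.exists_eq_range ⟨_, h0⟩
  let W : ℕ → M := fun j => if j < t.length then listEnv num t j else b (j - t.length)
  have hWB : ∀ j, W j ∈ Set.range b := by
    intro j
    simp only [W]
    split_ifs with h
    · rw [listEnv, List.getD_eq_getElem _ _ h]
      exact ht _ (List.getElem_mem h)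
    · exact ⟨_, rfl⟩
  have htr : trunc (num 0) W t.length = listEnv num t := by
    funext j
    simp only [trunc, W]
    split_ifs with h
    · rfl
    · simp [listEnv, List.getD, h]
  have hWS : ∀ k, Diag R (base num (trunc (num 0) W k)) ∈ S := by
    intro k
    have := hB ((List.range k).map W) (by simpa using fun j _ => hWB j)
    have he : listEnv num ((List.range k).map W) = trunc (num 0) W k := by
      funext j
      by_cases hj : j < k <;> simp [listEnv, List.getD, trunc, hj]
    rwa [he] at this
  rw [← htr] at hfin ⊢
  obtain ⟨y, hy, hyZ⟩ := ScottSet.extend_sequence hS hL hR hWS t.length hZ hpos hfin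
  refine ⟨y, fun l hl => ?_, hyZ⟩
  have htr' : ∀ k, scons y (trunc (num 0) W k) = trunc (num 0) (scons y W) (k + 1) := by
    intro k
    funext j
    cases j with
    | zero => rfl
    | succ j => simp [scons, trunc]
  refine good_of_trunc hS (W := scons y W) (L := t.length + 1) (fun k => ?_) l fun x hx => ?_
  · rw [add_right_comm, ← htr']
    exact hy k
  · rcases hl x hx with rfl | ⟨i, rfl⟩
    · exact ⟨3 * 0 + 1, base_var _ _ _⟩
    · refine ⟨3 * (t.length + i + 1) + 1, ?_⟩
      rw [base_var, scons_succ]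
      simp [W]

end Good

section Tasks

variable {M : Type} {R : ℕ → M → M → M → Prop} {S : Set (Set ℕ)} {num : ℕ → M}

theorem ScottSet.compl_mem (hS : ScottSet S) {X : Set ℕ} (hX : X ∈ S) : Xᶜ ∈ S := by
  refine ScottSet.of_primrec hS hX (Q := fun n l => !(l.getD n 0 == 1)) ?_
    (b := fun n => n + 1) Primrec.succ fun n => ?_
  · exact Primrec.not.comp (Primrec.beq.comp ((Primrec.list_getD 0).comp Primrec.snd Primrec.fst)
      (Primrec.const 1))
  · rw [initSeg_getD (Nat.lt_succ_self _)]
    simp [charFn_eq_one]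

theorem exists_digits (X : Set ℕ) (n : ℕ) :
    ∃ a, n ≤ a ∧ ∀ i < n, a / 2 ^ i % 2 = 1 ↔ i ∈ X := by
  classical
  let f : Fin (n + 1) → Bool := fun i => decide (i.1 = n ∨ i.1 ∈ X)
  refine ⟨Nat.ofBits f, ?_, fun i hi => ?_⟩
  · have : (Nat.ofBits f).testBit n = true := by
      rw [Nat.testBit_ofBits_lt _ _ (Nat.lt_succ_self n)]
      simp [f]
    exact (Nat.lt_two_pow_self).le.trans (Nat.ge_two_pow_of_testBit this)
  · have := Nat.testBit_ofBits_lt f i (by omega)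
    rw [Nat.testBit_eq_decide_div_mod_eq] at this
    simpa [f, hi.ne] using this

/-- `a` is a nonstandard code of `X`. -/
def Codes (R : ℕ → M → M → M → Prop) (num : ℕ → M) (X : Set ℕ) (a : M) : Prop :=
  (∀ j, ¬ R 3 a (num j) a) ∧ ∀ i, i ∈ X ↔ Dig R a (num (2 ^ i)) (num (2 ^ (i + 1)))

/-- The facts expressing that the variable `0` is a nonstandard code of a set. -/
def codeFact (n : ℕ) : ℕ :=
  if n % 2 = 0 then fact cDigit [1, 3 * 2 ^ (n / 2), 3 * 2 ^ (n / 2 + 1)]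
  else if n / 2 % 2 = 0 then fact (cNeg cDigit) [1, 3 * 2 ^ (n / 2 / 2), 3 * 2 ^ (n / 2 / 2 + 1)]
  else fact (cNeg (cAtom 3 0 1 0)) [1, 3 * (n / 2 / 2)]

theorem primrec_codeFact : Primrec codeFact := by
  have hd : Primrec fun n : ℕ => n / 2 := Primrec.nat_div.comp .id (.const 2)
  have hm : Primrec fun n : ℕ => n % 2 := Primrec.nat_mod.comp .id (.const 2)
  have one {f : ℕ → ℕ} (hf : Primrec f) : Primrec fun x => [1, f x] :=
    Primrec.list_cons.comp (.const 1) (Primrec.list_cons.comp hf (.const []))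
  have two {f : ℕ → ℕ} (hf : Primrec f) : Primrec fun x => [1, 3 * 2 ^ f x, 3 * 2 ^ (f x + 1)] :=
    Primrec.list_cons.comp (.const 1) (Primrec.list_cons.comp
      (primrec_three_mul.comp (primrec_two_pow.comp hf)) (Primrec.list_cons.comp
      (primrec_three_mul.comp (primrec_two_pow.comp (Primrec.succ.comp hf))) (.const [])))
  exact Primrec.ite (Primrec.eq.comp hm (.const 0)) (primrec_fact.comp (.const _) (two hd))
    (Primrec.ite (Primrec.eq.comp (hm.comp hd) (.const 0))
      (primrec_fact.comp (.const _) (two (hd.comp hd)))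
      (primrec_fact.comp (.const _) (one (primrec_three_mul.comp (hd.comp hd)))))

theorem codeFact_mem {w : ℕ → M} {y : M} :
    (∀ i, codeFact (2 * i) ∈ Diag R (base num (scons y w)) ↔
      Dig R y (num (2 ^ i)) (num (2 ^ (i + 1)))) ∧
    (∀ i, codeFact (2 * (2 * i) + 1) ∈ Diag R (base num (scons y w)) ↔
      ¬ Dig R y (num (2 ^ i)) (num (2 ^ (i + 1)))) ∧
    ∀ j, codeFact (2 * (2 * j + 1) + 1) ∈ Diag R (base num (scons y w)) ↔ ¬ R 3 y (num j) y := by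
  have h1 : base num (scons y w) 1 = y := base_var _ _ 0
  have e1 : ∀ i, (2 * i + 1) / 2 = i := by omega
  have e2 : ∀ i, (2 * i + 1) % 2 = 1 := by omega
  refine ⟨fun i => ?_, fun i => ?_, fun i => ?_⟩
  · simp [codeFact, look, h1]
  · simp [codeFact, e1, look, h1]
  · simp [codeFact, e1, e2, look, h1]

/-- Every member of the Scott set is coded by some element extending a good set. -/
theorem Good.exists_codes (hS : ScottSet S) (hL : LNP R) (hR : Saturated R) (hN : IsNum R num)
    {B : Set M} (hB : Good S R num B) (hc : B.Countable) (h0 : num 0 ∈ B) {X : Set ℕ}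
    (hX : X ∈ S) : ∃ y, Good S R num (insert y B) ∧ Codes R num X y := by
  have hZ := ScottSet.turingJoin_mem hS hX
    (ScottSet.turingJoin_mem hS (ScottSet.compl_mem hS hX) (ScottSet.univ_mem hS))
  obtain ⟨y, hy, hyZ⟩ := hB.extend hS hL hR hc [] (by simp) h0 hZ primrec_codeFact fun n => by
    obtain ⟨a, hna, ha⟩ := exists_digits X n
    refine ⟨num a, fun x hx hxZ => ?_⟩
    obtain ⟨i, rfl | rfl | rfl⟩ :
        ∃ i, x = 2 * i ∨ x = 2 * (2 * i) + 1 ∨ x = 2 * (2 * i + 1) + 1 := by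
      by_cases h : x % 2 = 0
      · exact ⟨x / 2, by omega⟩
      · exact ⟨x / 2 / 2, by omega⟩
    · rw [codeFact_mem.1, hN.dig, ha i (by omega)]
      exact even_mem_turingJoin.1 hxZ
    · rw [codeFact_mem.2.1, hN.dig, ha i (by omega)]
      exact even_mem_turingJoin.1 (odd_mem_turingJoin.1 hxZ)
    · rw [codeFact_mem.2.2]
      have := hN.ne i (a - i - 1)
      rwa [show i + (a - i - 1) + 1 = a by omega] at this
  refine ⟨y, hy, fun j => ?_, fun i => ⟨fun h => ?_, fun h => ?_⟩⟩
  · exact codeFact_mem.2.2 j |>.1 (hyZ _ (odd_mem_turingJoin.2 (odd_mem_turingJoin.2 trivial)))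
  · exact (codeFact_mem.1 i).1 (hyZ _ (even_mem_turingJoin.2 h))
  · by_contra hcon
    exact (codeFact_mem.2.1 i).1
      (hyZ _ (odd_mem_turingJoin.2 (even_mem_turingJoin.2 hcon))) h

/-- Every failing universal statement has a counterexample extending a good set. -/
theorem Good.exists_counterexample (hS : ScottSet S) (hL : LNP R) (hR : Saturated R)
    {B : Set M} (hB : Good S R num B) (hc : B.Countable) (h0 : num 0 ∈ B) (φ : ℕ) (t : List M)
    (ht : ∀ x ∈ t, x ∈ B) (hφ : ∃ x, ¬ Sat R φ (scons x (listEnv num t))) :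
    ∃ y, Good S R num (insert y B) ∧ ¬ Sat R φ (scons y (listEnv num t)) := by
  obtain ⟨k, hk⟩ := exists_support φ
  have hfact : ∀ y, fact (cNeg φ) ((List.range k).map fun j => 3 * j + 1) ∈
      Diag R (base num (scons y (listEnv num t))) ↔ ¬ Sat R φ (scons y (listEnv num t)) := by
    intro y
    rw [fact_mem_Diag, sat_neg, not_iff_not]
    refine hk R _ _ fun i hi => ?_
    have : ((List.range k).map fun j => 3 * j + 1).getD i 0 = 3 * i + 1 := by
      simp [List.getD, hi]
    rw [look, this, base_var]
  obtain ⟨x, hx⟩ := hφ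
  obtain ⟨y, hy, hyZ⟩ := hB.extend hS hL hR hc t ht h0 (ScottSet.univ_mem hS)
    (Primrec.const (fact (cNeg φ) ((List.range k).map fun j => 3 * j + 1)))
    fun n => ⟨x, fun _ _ _ => (hfact x).2 hx⟩
  exact ⟨y, hy, (hfact y).1 (hyZ 0 trivial)⟩

end Tasks

section Construction

theorem exists_transfinite {I M : Type} [LinearOrder I] [WellFoundedLT I] [Nonempty M]
    (P : I → (I → M) → M → Prop)
    (hcongr : ∀ i f g y, (∀ j < i, f j = g j) → P i f y → P i g y)
    (hP : ∀ i f, ∃ y, P i f y) : ∃ f : I → M, ∀ i, P i f (f i) := by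
  classical
  choose g hg using hP
  let F : (i : I) → ((j : I) → j < i → M) → M := fun i prev =>
    g i fun j => if h : j < i then prev j h else Classical.arbitrary M
  let f : I → M := WellFounded.fix (wellFounded_lt) F
  have hf : ∀ i, f i = F i fun j _ => f j := fun i => WellFounded.fix_eq _ F i
  refine ⟨f, fun i => ?_⟩
  rw [hf i]
  exact hcongr i _ _ _ (fun j hj => by simp [hj]) (hg i _)

theorem exists_schedule {I W : Type} (hI : Cardinal.mk I = Cardinal.aleph 1)
    (hW : Cardinal.mk W ≤ Cardinal.aleph 1) [Nonempty W] :
    ∃ τ : I → W, ∀ w, ¬ {i | τ i = w}.Countable := by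
  have : Nonempty I := by
    rw [← Cardinal.mk_ne_zero_iff, hI]
    exact (Cardinal.aleph_pos 1).ne'
  have hle : Cardinal.mk (W × I) ≤ Cardinal.mk I := by
    rw [Cardinal.mk_prod, Cardinal.lift_id, Cardinal.lift_id, hI]
    exact (mul_le_mul' hW le_rfl).trans (Cardinal.mul_eq_self (Cardinal.aleph0_le_aleph 1)).le
  obtain ⟨e⟩ := hle
  let σ := Function.invFun e
  have hσ : Function.Surjective σ := Function.invFun_surjective e.injective
  refine ⟨fun i => (σ i).1, fun w hw => ?_⟩
  have himg : (fun i => (σ i).2) '' {i | (σ i).1 = w} = Set.univ := by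
    refine Set.eq_univ_of_forall fun j => ?_
    obtain ⟨i, hi⟩ := hσ (w, j)
    exact ⟨i, by simp [hi], by simp [hi]⟩
  have hc := hw.image fun i => (σ i).2
  rw [himg, Set.countable_univ_iff, ← Cardinal.mk_le_aleph0_iff, hI,
    ← Cardinal.lt_aleph_one_iff] at hc
  exact lt_irrefl _ hc

variable {M : Type} {R : ℕ → M → M → M → Prop} {S : Set (Set ℕ)} {num : ℕ → M}

/-- The elements constructed before stage `i`. -/
def stage {I : Type} [LinearOrder I] (num : ℕ → M) (f : I → M) (i : I) : Set M :=
  Set.range num ∪ f '' Set.Iio i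

/-- The two kinds of requirements met in the construction. -/
def Meets {I : Type} (S : Set (Set ℕ)) (R : ℕ → M → M → M → Prop) (num : ℕ → M) (f : I → M)
    (y : M) : S ⊕ (ℕ × List (ℕ ⊕ I)) → Prop
  | .inl X => Codes R num X y
  | .inr (φ, l) => (∃ x, ¬ Sat R φ (scons x (listEnv num (l.map (Sum.elim num f))))) →
      ¬ Sat R φ (scons y (listEnv num (l.map (Sum.elim num f))))

/-- The requirement refers only to elements constructed before stage `i`. -/
def Admissible {I : Type} [LinearOrder I] (S : Set (Set ℕ)) (i : I) :
    S ⊕ (ℕ × List (ℕ ⊕ I)) → Prop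
  | .inl _ => True
  | .inr (_, l) => ∀ j, Sum.inr j ∈ l → j < i

theorem good_union {I : Type} [LinearOrder I] {f : I → M} (h0 : Good S R num (Set.range num))
    {J : Set I} (hf : ∀ i ∈ J, Good S R num (insert (f i) (stage num f i))) :
    Good S R num (Set.range num ∪ f '' J) := by
  intro l hl
  have : (∀ x ∈ l, x ∈ Set.range num) ∨ ∃ i ∈ J, ∀ x ∈ l, x ∈ insert (f i) (stage num f i) := by
    induction l with
    | nil => simp
    | cons x l ih =>
      have ih := ih fun y hy => hl y (List.mem_cons_of_mem _ hy)
      have hmono : ∀ i j, i ≤ j → insert (f i) (stage num f i) ⊆ insert (f j) (stage num f j) := by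
        intro i j hij y hy
        rcases hij.eq_or_lt with rfl | hij
        · exact hy
        · rcases hy with rfl | hy | ⟨k, hk, rfl⟩
          · exact Or.inr (Or.inr ⟨i, hij, rfl⟩)
          · exact Or.inr (Or.inl hy)
          · exact Or.inr (Or.inr ⟨k, lt_trans hk hij, rfl⟩)
      rcases hl x (List.mem_cons_self) with hx | ⟨i, hi, rfl⟩
      · rcases ih with ih | ⟨i, hi, ih⟩
        · exact Or.inl (List.forall_mem_cons.2 ⟨hx, ih⟩)
        · exact Or.inr ⟨i, hi, List.forall_mem_cons.2 ⟨Or.inr (Or.inl hx), ih⟩⟩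
      · rcases ih with ih | ⟨j, hj, ih⟩
        · exact Or.inr ⟨i, hi, List.forall_mem_cons.2 ⟨Or.inl rfl, fun y hy =>
            Or.inr (Or.inl (ih y hy))⟩⟩
        · rcases le_total i j with hij | hij
          · exact Or.inr ⟨j, hj, List.forall_mem_cons.2 ⟨hmono i j hij (Or.inl rfl), ih⟩⟩
          · exact Or.inr ⟨i, hi, List.forall_mem_cons.2 ⟨Or.inl rfl, fun y hy =>
              hmono j i hij (ih y hy)⟩⟩
  rcases this with h | ⟨i, hi, h⟩
  · exact h0 l h
  · exact hf i hi l h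

/-- Every Scott set of size at most `ℵ₁` is the set of sets coded in a subset which is closed
under counterexamples and whose types lie in the Scott set. -/
theorem exists_good_subset (hS : ScottSet S) (hcard : Cardinal.mk S ≤ Cardinal.aleph 1)
    (hL : LNP R) (hR : Saturated R) (hN : IsNum R num)
    (hG : Good S R num (Set.range num)) :
    ∃ B : Set M, Set.range num ⊆ B ∧ Good S R num B ∧
      (∀ φ (l : List M), (∀ x ∈ l, x ∈ B) → (∃ x, ¬ Sat R φ (scons x (listEnv num l))) →
        ∃ x ∈ B, ¬ Sat R φ (scons x (listEnv num l))) ∧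
      ∀ X ∈ S, ∃ a ∈ B, Codes R num X a := by
  let I := (Cardinal.aleph 1).ord.ToType
  have hI : Cardinal.mk I = Cardinal.aleph 1 := Cardinal.mk_ord_toType _
  have hIio : ∀ i : I, (Set.Iio i).Countable := fun i => by
    rw [← Cardinal.le_aleph0_iff_set_countable, ← Cardinal.lt_aleph_one_iff]
    exact (Cardinal.mk_Iio_lt i (by rw [hI]; exact (Ordinal.type_toType _).symm)).trans_eq hI
  have hW : Cardinal.mk (S ⊕ (ℕ × List (ℕ ⊕ I))) ≤ Cardinal.aleph 1 := by
    have h1 : Cardinal.mk (ℕ ⊕ I) ≤ Cardinal.aleph 1 := by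
      rw [Cardinal.mk_sum, Cardinal.lift_id, Cardinal.lift_id, Cardinal.mk_nat, hI]
      exact Cardinal.add_le_of_le (Cardinal.aleph0_le_aleph 1) (Cardinal.aleph0_le_aleph 1) le_rfl
    have h2 : Cardinal.mk (List (ℕ ⊕ I)) ≤ Cardinal.aleph 1 := by
      rw [Cardinal.mk_list_eq_mk]; exact h1
    have h3 : Cardinal.mk (ℕ × List (ℕ ⊕ I)) ≤ Cardinal.aleph 1 := by
      rw [Cardinal.mk_prod, Cardinal.lift_id, Cardinal.lift_id, Cardinal.mk_nat]
      exact (mul_le_mul' (Cardinal.aleph0_le_aleph 1) h2).trans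
        (Cardinal.mul_eq_self (Cardinal.aleph0_le_aleph 1)).le
    rw [Cardinal.mk_sum, Cardinal.lift_id, Cardinal.lift_id]
    exact Cardinal.add_le_of_le (Cardinal.aleph0_le_aleph 1) hcard h3
  have : Nonempty M := ⟨num 0⟩
  obtain ⟨τ, hτ⟩ := exists_schedule hI hW
  obtain ⟨f, hf⟩ := exists_transfinite (I := I) (M := M) (fun i f y =>
      Good S R num (stage num f i) → Good S R num (insert y (stage num f i)) ∧
        (Admissible S i (τ i) → Meets S R num f y (τ i))) (by
    intro i f g y hfg h
    have hst : stage num f i = stage num g i := by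
      simp only [stage]
      rw [show f '' Set.Iio i = g '' Set.Iio i from Set.image_congr fun j hj => hfg j hj]
    rw [← hst]
    intro hgood
    refine ⟨(h hgood).1, fun hadm => ?_⟩
    have := (h hgood).2 hadm
    generalize τ i = w at hadm this
    rcases w with X | ⟨φ, l⟩
    · exact this
    · have hl : l.map (Sum.elim num f) = l.map (Sum.elim num g) := by
        refine List.map_congr_left fun q hq => ?_
        rcases q with q | q
        · rfl
        · exact hfg q (hadm q hq)
      simp only [Meets, hl] at this ⊢
      exact this) (by
    intro i f
    by_cases hgood : Good S R num (stage num f i)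
    swap
    · exact ⟨num 0, fun h => absurd h hgood⟩
    have hc : (stage num f i).Countable := (Set.countable_range num).union ((hIio i).image f)
    have h0 : num 0 ∈ stage num f i := Or.inl ⟨0, rfl⟩
    have htriv : Good S R num (insert (num 0) (stage num f i)) := by
      rwa [Set.insert_eq_of_mem h0]
    generalize τ i = w
    rcases w with X | ⟨φ, l⟩
    · obtain ⟨y, hy, hyX⟩ := hgood.exists_codes hS hL hR hN hc h0 X.2
      exact ⟨y, fun _ => ⟨hy, fun _ => hyX⟩⟩
    · by_cases hadm : Admissible S i (.inr (φ, l))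
      swap
      · exact ⟨num 0, fun _ => ⟨htriv, fun h => absurd h hadm⟩⟩
      by_cases hex : ∃ x, ¬ Sat R φ (scons x (listEnv num (l.map (Sum.elim num f))))
      swap
      · exact ⟨num 0, fun _ => ⟨htriv, fun _ h => absurd h hex⟩⟩
      obtain ⟨y, hy, hyφ⟩ := hgood.exists_counterexample hS hL hR hc h0 φ
        (l.map (Sum.elim num f)) (by
          intro x hx
          obtain ⟨q, hq, rfl⟩ := List.mem_map.1 hx
          rcases q with q | q
          · exact Or.inl ⟨q, rfl⟩
          · exact Or.inr ⟨q, hadm q hq, rfl⟩) hex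
      exact ⟨y, fun _ => ⟨hy, fun _ _ => hyφ⟩⟩)
  have hstage : ∀ i, Good S R num (stage num f i) := by
    intro i
    induction i using WellFoundedLT.induction with
    | _ i ih => exact good_union hG fun j hj => (hf j (ih j hj)).1
  have hschedule : ∀ w, (∀ C : Set I, C.Countable → ∃ i, i ∉ C ∧ τ i = w) := by
    intro w C hC
    by_contra hcon
    push Not at hcon
    exact hτ w (hC.mono fun i hi => by_contra fun h => hcon i h hi)
  refine ⟨Set.range num ∪ f '' Set.univ, Set.subset_union_left,
    good_union hG fun i _ => (hf i (hstage i)).1, fun φ l hl hφ => ?_, fun X hX => ?_⟩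
  · have hl' : ∃ l' : List (ℕ ⊕ I), l = l'.map (Sum.elim num f) := by
      have : l ∈ Set.range (List.map (Sum.elim num f)) := by
        rw [Set.range_list_map]
        intro x hx
        rw [Set.Sum.elim_range, ← Set.image_univ (f := f)]
        exact hl x hx
      obtain ⟨l', h'⟩ := this
      exact ⟨l', h'.symm⟩
    obtain ⟨l', rfl⟩ := hl'
    obtain ⟨i, hi, hτi⟩ := hschedule (.inr (φ, l'))
      (⋃ q ∈ {q | q ∈ l'}, {i | ∃ j, q = Sum.inr j ∧ i ≤ j}) (by
        refine (l'.finite_toSet.countable).biUnion fun q _ => ?_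
        rcases q with q | q
        · simp
        · refine ((hIio q).insert q).mono ?_
          rintro i ⟨j, hj, hij⟩
          cases hj
          exact hij.eq_or_lt)
    have hadm : Admissible S i (τ i) := by
      rw [hτi]
      intro j hj
      by_contra hcon
      exact hi (Set.mem_biUnion (x := Sum.inr j) hj ⟨j, rfl, not_lt.1 hcon⟩)
    have := (hf i (hstage i)).2 hadm
    rw [hτi] at this
    exact ⟨f i, Or.inr ⟨i, trivial, rfl⟩, this hφ⟩
  · obtain ⟨i, -, hτi⟩ := hschedule (.inl ⟨X, hX⟩) ∅ Set.countable_empty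
    have := (hf i (hstage i)).2 (by rw [hτi]; trivial)
    rw [hτi] at this
    exact ⟨f i, Or.inr ⟨i, trivial, rfl⟩, this⟩

end Construction

section Ambient

open Filter

theorem Diag_ultraRel {A : Type} (R : ℕ → A → A → A → Prop) (u : ℕ → A) :
    Diag (ultraRel R) (fun k _ => u k) = Diag R u := by
  ext x
  simp only [Diag, Set.mem_ofPred_eq, sat_ultraRel, look]
  exact eventually_const

/-- A saturated model with numerals whose tuples of numerals have their type in `S`. -/
theorem ScottSet.exists_ambient {S : Set (Set ℕ)} (hS : ScottSet S) :
    ∃ (M : Type) (R : ℕ → M → M → M → Prop) (num : ℕ → M), LNP R ∧ Saturated R ∧ IsArith R ∧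
      IsNum R num ∧ Good S R num (Set.range num) := by
  obtain ⟨R, num, w, hL, hA, hN, hD⟩ := ScottSet.exists_base hS
  have hb : base (fun j (_ : ℕ) => num j) (fun j (_ : ℕ) => w j) = fun k _ => base num w k := by
    funext k i
    simp only [base]
    split_ifs <;> rfl
  have hE : Diag (ultraRel R) (base (fun j (_ : ℕ) => num j) fun j (_ : ℕ) => w j) =
      Diag R (base num w) := by
    rw [hb, Diag_ultraRel]
  obtain ⟨hA', hN'⟩ := numFact_mem.1 fun n => hE.symm ▸ numFact_mem.2 ⟨hA, hN⟩ n
  refine ⟨ℕ → ℕ, ultraRel R, fun j _ => num j, lnp_ultraRel R hL, saturated_ultraRel R, hA', hN',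
    fun l hl => ?_⟩
  obtain ⟨r, hr⟩ := exists_listEnv_eq (num := fun j (_ : ℕ) => num j)
    (u := base (fun j (_ : ℕ) => num j) fun j (_ : ℕ) => w j) (base_zero _ _) (l := l)
    fun x hx => by
      obtain ⟨j, rfl⟩ := hl x hx
      exact ⟨3 * j, (base_num (fun j (_ : ℕ) => num j) _ j).symm⟩
  exact ScottSet.reindex hS ((Primrec.list_getD 0).comp (.const r) .id) hr (hE ▸ hD)

end Ambient

section Elementary

variable {M Q : Type} {R : ℕ → M → M → M → Prop}

theorem comp_scons (g : Q → M) (x : Q) (v : ℕ → Q) : g ∘ scons x v = scons (g x) (g ∘ v) := by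
  funext k; cases k <;> rfl

theorem IsArith.sat_congr (hA : IsArith R) (φ : ℕ) : ∀ {v v' : ℕ → M},
    (∀ i, R 3 (v i) (v' i) (v i)) → (Sat R φ v ↔ Sat R φ v') := by
  induction φ using code_induction with
  | atom r i j k =>
    intro v v' h
    have hr := Nat.mod_lt r (show 6 > 0 by decide)
    simp only [sat_atom]
    exact ⟨hA.congr _ hr _ _ _ _ _ _ (h i) (h j) (h k), hA.congr _ hr _ _ _ _ _ _
      (hA.eq_symm _ _ (h i)) (hA.eq_symm _ _ (h j)) (hA.eq_symm _ _ (h k))⟩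
  | nand a b iha ihb => intro v v' h; rw [sat_nand, sat_nand, iha h, ihb h]
  | all a ih =>
    intro v v' h
    simp only [sat_all]
    refine forall_congr' fun x => ih fun i => ?_
    cases i
    · exact hA.eq_refl x
    · exact h _

/-- The pullback of the relations `R` along `g`. -/
def pullRel (g : Q → M) (R : ℕ → M → M → M → Prop) (r : ℕ) (x y z : Q) : Prop :=
  R r (g x) (g y) (g z)

theorem sat_pullRel {g : Q → M} (hg : ∀ φ (v : ℕ → Q), (∃ x, ¬ Sat R φ (scons x (g ∘ v))) →
    ∃ y, ¬ Sat R φ (scons (g y) (g ∘ v))) (φ : ℕ) :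
    ∀ v : ℕ → Q, Sat (pullRel g R) φ v ↔ Sat R φ (g ∘ v) := by
  induction φ using code_induction with
  | atom r i j k => intro v; simp [pullRel]
  | nand a b iha ihb => intro v; rw [sat_nand, sat_nand, iha, ihb]
  | all a ih =>
    intro v
    simp only [sat_all, ih, comp_scons]
    refine ⟨fun h => ?_, fun h x => h _⟩
    by_contra! hc
    obtain ⟨y, hy⟩ := hg a v hc
    exact hy (h y)

theorem IsArith.pullRel [Nonempty Q] {g : Q → M}
    (hg : ∀ φ (v : ℕ → Q), Sat (pullRel g R) φ v ↔ Sat R φ (g ∘ v)) (hA : IsArith R) :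
    IsArith (pullRel g R) := by
  have v : ℕ → Q := fun _ => Classical.arbitrary Q
  exact (sat_arithAxioms (v := v)).1 fun a ha => (hg a v).2 (sat_arithAxioms.2 hA a ha)

theorem LNP.pullRel {g : Q → M}
    (hg : ∀ φ (v : ℕ → Q), Sat (pullRel g R) φ v ↔ Sat R φ (g ∘ v)) (hL : LNP R) :
    LNP (pullRel g R) := by
  intro φ v ⟨x, hx⟩
  obtain ⟨φ', hφ'⟩ := exists_rename φ fun n => if n = 0 then 0 else n + 1
  have hs : ∀ {N : Type} (z x : N) (v : ℕ → N),
      scons z (scons x v) ∘ (fun n => if n = 0 then 0 else n + 1) = scons z v := by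
    intro N z x v
    funext n
    cases n <;> simp [scons]
  have key : ∀ {N : Type} (R : ℕ → N → N → N → Prop) (v : ℕ → N),
      Sat R (cEx (cAnd (cNeg φ) (cAll (cImp (cNeg φ') (cNeg (cAtom 2 0 1 0)))))) v ↔
      ∃ x, ¬ Sat R φ (scons x v) ∧ ∀ z, ¬ Sat R φ (scons z v) → ¬ R 2 z x z := by
    intro N R v
    simp [hφ', hs, scons]
  rw [← key, hg, key]
  exact hL φ _ ⟨g x, by rwa [← comp_scons, ← hg]⟩

theorem dig_pullRel {g : Q → M}
    (hg : ∀ φ (v : ℕ → Q), Sat (pullRel g R) φ v ↔ Sat R φ (g ∘ v)) (x y z : Q) :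
    Dig (pullRel g R) x y z ↔ Dig R (g x) (g y) (g z) := by
  have := hg cDigit (scons x (scons y (scons z fun _ => x)))
  simpa [scons] using this

end Elementary

section Model

variable {Q : Type} {R : ℕ → Q → Q → Q → Prop}

/-- The structure for the language of arithmetic given by relations satisfying `IsArith`. -/
@[reducible]
noncomputable def IsArith.toStructure (hA : IsArith R) : arith.Structure Q where
  funMap f v :=
    match f with
    | .zero => hA.zero_total.choose
    | .one => hA.one_total.choose
    | .add => (hA.add_total (v 0) (v 1)).choose
    | .mul => (hA.mul_total (v 0) (v 1)).choose
  RelMap r v :=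
    match r with
    | .lt => R 2 (v 0) (v 1) (v 0)

/-- The structure `Q` has the graphs of its operations among the relations `R`. -/
structure Matches (R : ℕ → Q → Q → Q → Prop) [arith.Structure Q] : Prop where
  add : ∀ x y z, R 0 x y z ↔ addM x y = z
  mul : ∀ x y z, R 1 x y z ↔ mulM x y = z
  lt : ∀ x y, R 2 x y x ↔ ltM x y
  eq : ∀ x y, R 3 x y x ↔ x = y
  zero : ∀ x, R 4 x x x ↔ zeroM Q = x
  one : ∀ x, R 5 x x x ↔ oneM Q = x

theorem IsArith.matches_toStructure (hA : IsArith R) (heq : ∀ x y, R 3 x y x → x = y) :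
    letI := hA.toStructure
    Matches R := by
  let _ := hA.toStructure
  have h4 : R 4 (zeroM Q) (zeroM Q) (zeroM Q) := hA.zero_total.choose_spec
  have h5 : R 5 (oneM Q) (oneM Q) (oneM Q) := hA.one_total.choose_spec
  have h0 : ∀ x y : Q, R 0 x y (addM x y) := fun x y => (hA.add_total x y).choose_spec
  have h1 : ∀ x y : Q, R 1 x y (mulM x y) := fun x y => (hA.mul_total x y).choose_spec
  exact
    { add := fun x y z => ⟨fun h => heq _ _ (hA.add_unique _ _ _ _ (h0 x y) h), fun h => h ▸ h0 x y⟩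
      mul := fun x y z => ⟨fun h => heq _ _ (hA.mul_unique _ _ _ _ (h1 x y) h), fun h => h ▸ h1 x y⟩
      lt := fun x y => Iff.rfl
      eq := fun x y => ⟨heq x y, fun h => h ▸ hA.eq_refl x⟩
      zero := fun x => ⟨fun h => heq _ _ (hA.zero_unique _ _ h4 h), fun h => h ▸ h4⟩
      one := fun x => ⟨fun h => heq _ _ (hA.one_unique _ _ h5 h), fun h => h ▸ h5⟩ }

variable [arith.Structure Q]

theorem funMap_add (v : Fin 2 → Q) :
    Structure.funMap (L := arith) arithFunc.add v = addM (v 0) (v 1) := by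
  rw [addM]; congr 1; funext i; fin_cases i <;> rfl

theorem funMap_mul (v : Fin 2 → Q) :
    Structure.funMap (L := arith) arithFunc.mul v = mulM (v 0) (v 1) := by
  rw [mulM]; congr 1; funext i; fin_cases i <;> rfl

theorem funMap_zero (v : Fin 0 → Q) :
    Structure.funMap (L := arith) arithFunc.zero v = zeroM Q := by
  rw [zeroM]; congr 1; exact Subsingleton.elim _ _

theorem funMap_one (v : Fin 0 → Q) :
    Structure.funMap (L := arith) arithFunc.one v = oneM Q := by
  rw [oneM]; congr 1; exact Subsingleton.elim _ _

theorem relMap_lt (v : Fin 2 → Q) :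
    Structure.RelMap (L := arith) arithRel.lt v ↔ ltM (v 0) (v 1) := by
  rw [ltM]; apply iff_of_eq; congr 1; funext i; fin_cases i <;> rfl

theorem exists_term_code (hM : Matches R) {β : Type} (t : arith.Term β) : ∀ (ι : β → ℕ) (k : ℕ),
    ∃ ψ, ∀ v : ℕ → Q, t.realize (fun i => v (ι i)) = v k ↔ Sat R ψ v := by
  induction t with
  | var i => exact fun ι k => ⟨cAtom 3 (ι i) k (ι i), fun v => by simp [hM.eq]⟩
  | func f ts ih =>
    intro ι k
    have binary (r : ℕ) (ts : Fin 2 → arith.Term β)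
        (ih : ∀ a (ι : β → ℕ) (k : ℕ), ∃ ψ, ∀ v : ℕ → Q,
          (ts a).realize (fun i => v (ι i)) = v k ↔ Sat R ψ v) :
        ∃ ψ, ∀ v : ℕ → Q, R (r % 6) ((ts 0).realize fun i => v (ι i))
          ((ts 1).realize fun i => v (ι i)) (v k) ↔ Sat R ψ v := by
      obtain ⟨ψ₀, h₀⟩ := ih 0 (fun i => ι i + 2) 0
      obtain ⟨ψ₁, h₁⟩ := ih 1 (fun i => ι i + 2) 1
      refine ⟨cEx (cEx (cAnd ψ₀ (cAnd ψ₁ (cAtom r 0 1 (k + 2))))), fun v => ?_⟩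
      simp [← h₀, ← h₁, scons]
    cases f with
    | zero => exact ⟨cAtom 4 k k k, fun v => by simp [Term.realize, funMap_zero, hM.zero]⟩
    | one => exact ⟨cAtom 5 k k k, fun v => by simp [Term.realize, funMap_one, hM.one]⟩
    | add =>
      obtain ⟨ψ, h⟩ := binary 0 ts ih
      exact ⟨ψ, fun v => by rw [← h, hM.add]; exact Eq.congr_left (funMap_add _)⟩
    | mul =>
      obtain ⟨ψ, h⟩ := binary 1 ts ih
      exact ⟨ψ, fun v => by rw [← h, hM.mul]; exact Eq.congr_left (funMap_mul _)⟩

theorem exists_formula_code (hM : Matches R) {α : Type} {n : ℕ} (φ : arith.BoundedFormula α n) :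
    ∀ (ι : α → ℕ) (κ : Fin n → ℕ), ∃ ψ, ∀ v : ℕ → Q,
      φ.Realize (fun i => v (ι i)) (fun i => v (κ i)) ↔ Sat R ψ v := by
  have hs (v : ℕ → Q) {n : ℕ} (ι : α → ℕ) (κ : Fin n → ℕ) :
      Sum.elim (fun i => v (ι i)) (fun i => v (κ i)) = fun i => v (Sum.elim ι κ i) := by
    funext i; cases i <;> rfl
  have binary (r : ℕ) {n : ℕ} (t₁ t₂ : arith.Term (α ⊕ Fin n)) (ι : α ⊕ Fin n → ℕ) :
      ∃ ψ, ∀ v : ℕ → Q, R (r % 6) (t₁.realize fun i => v (ι i)) (t₂.realize fun i => v (ι i))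
        (t₁.realize fun i => v (ι i)) ↔ Sat R ψ v := by
    obtain ⟨ψ₀, h₀⟩ := exists_term_code hM t₁ (fun i => ι i + 2) 0
    obtain ⟨ψ₁, h₁⟩ := exists_term_code hM t₂ (fun i => ι i + 2) 1
    refine ⟨cEx (cEx (cAnd ψ₀ (cAnd ψ₁ (cAtom r 0 1 0)))), fun v => ?_⟩
    simp [← h₀, ← h₁, scons]
  induction φ with
  | falsum => exact fun ι κ => ⟨cAnd 0 (cNeg 0), fun v => by simp [BoundedFormula.Realize]⟩
  | equal t₁ t₂ =>
    intro ι κ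
    obtain ⟨ψ, h⟩ := binary 3 t₁ t₂ (Sum.elim ι κ)
    exact ⟨ψ, fun v => by rw [← h, hM.eq, BoundedFormula.Realize, hs]⟩
  | rel r ts =>
    intro ι κ
    cases r
    obtain ⟨ψ, h⟩ := binary 2 (ts 0) (ts 1) (Sum.elim ι κ)
    exact ⟨ψ, fun v => by 
      rw [← h, hM.lt, ← hs]
      exact relMap_lt _⟩
  | imp φ₁ φ₂ ih₁ ih₂ =>
    intro ι κ
    obtain ⟨ψ₁, h₁⟩ := ih₁ ι κ
    obtain ⟨ψ₂, h₂⟩ := ih₂ ι κ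
    exact ⟨cImp ψ₁ ψ₂, fun v => by rw [sat_imp, ← h₁, ← h₂, BoundedFormula.realize_imp]⟩
  | @all n φ ih =>
    intro ι κ
    obtain ⟨ψ, h⟩ := ih (fun i => ι i + 1) (Fin.snoc (α := fun _ => ℕ) (fun i => κ i + 1) 0)
    refine ⟨cAll ψ, fun v => ?_⟩
    simp only [sat_all, ← h, BoundedFormula.realize_all]
    refine forall_congr' fun x => iff_of_eq ?_
    congr 1
    funext i
    refine Fin.lastCases ?_ (fun j => ?_) i <;> simp [scons]

theorem exists_code_of_definable (hM : Matches R) {s : Set Q}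
    (hs : Set.Definable₁ (Set.univ : Set Q) arith s) :
    ∃ (ψ : ℕ) (v : ℕ → Q), ∀ x, x ∈ s ↔ Sat R ψ (scons x v) := by
  classical
  rw [Set.Definable₁, Set.definable_iff_exists_formula_sum] at hs
  obtain ⟨φ, hφ⟩ := hs
  let e := φ.freeVarFinset.equivFin
  let f : φ.freeVarFinset → ℕ := fun a => if a.1.isLeft then e a + 1 else 0
  obtain ⟨ψ, hψ⟩ := exists_formula_code hM (φ.restrictFreeVar f) id Fin.elim0
  let d := zeroM Q
  refine ⟨ψ, fun k => if h : k < φ.freeVarFinset.card then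
    Sum.elim (↑) (fun _ => d) (e.symm ⟨k, h⟩).1 else d, fun x => ?_⟩
  have hx : x ∈ s ↔ (fun _ : Fin 1 => x) ∈ {y : Fin 1 → Q | y 0 ∈ s} := Iff.rfl
  rw [hx, hφ, ← hψ, Set.mem_ofPred_eq, Formula.Realize,
    Subsingleton.elim (default : Fin 0 → Q)]
  refine (BoundedFormula.realize_restrictFreeVar _ fun a => ?_).symm
  obtain ⟨a | a, ha⟩ := a <;> simp [f, scons]

theorem isPAModel (hA : IsArith R) (hM : Matches R) (hL : LNP R) : IsPAModel Q := by
  have z : R 4 (zeroM Q) (zeroM Q) (zeroM Q) := (hM.zero _).2 rfl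
  have o : R 5 (oneM Q) (oneM Q) (oneM Q) := (hM.one _).2 rfl
  have a : ∀ x y : Q, R 0 x y (addM x y) := fun x y => (hM.add _ _ _).2 rfl
  have m : ∀ x y : Q, R 1 x y (mulM x y) := fun x y => (hM.mul _ _ _).2 rfl
  refine ⟨fun x => (hM.add _ _ _).1 (hA.add_zero x _ z), fun x y => ?_,
    fun x => (hM.mul _ _ _).1 (hA.mul_zero x _ z), fun x y => ?_,
    fun x h => hA.not_lt_zero x _ z ((hM.lt _ _).2 h), fun x y => ⟨fun h => ?_, ?_⟩, fun x h => ?_,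
    fun x y h => ?_, fun s hs h0 h1 x => ?_⟩
  · exact ((hM.add _ _ _).1 (hA.add_succ x y _ _ _ _ o (a _ _) (a _ _) (a _ _))).symm
  · exact ((hM.add _ _ _).1 (hA.mul_succ x y _ _ _ _ o (a _ _) (m _ _) (m _ _))).symm
  · rw [or_iff_not_imp_left, ← hM.lt, ← hM.eq]
    exact hA.lt_succ x y _ _ o (a _ _) ((hM.lt _ _).2 h)
  · rw [← hM.lt, ← hM.eq, ← hM.lt]
    exact fun h => h.elim (hA.lt_succ_of_lt x y _ _ o (a _ _)) (hA.lt_succ_of_eq x y _ _ o (a _ _))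
  · exact hA.succ_ne_zero x _ _ o (a _ _) ((hM.zero _).2 h.symm)
  · exact (hM.eq _ _).1 (hA.succ_inj x y _ _ o (a _ _) (h ▸ a _ _))
  · obtain ⟨ψ, v, hψ⟩ := exists_code_of_definable hM hs
    by_contra hx
    obtain ⟨y, hy, hmin⟩ := hL ψ v ⟨x, fun h => hx ((hψ x).2 h)⟩
    simp only [← hψ] at hy hmin
    by_cases hy0 : R 4 y y y
    · exact hy ((hM.zero y).1 hy0 ▸ h0)
    · obtain ⟨p, e, he, hp⟩ := hA.exists_pred y hy0
      refine hmin p (fun hps => hy ?_) (hA.lt_succ_of_eq p p e y he hp (hA.eq_refl p))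
      rw [← (hM.add _ _ _).1 hp, ← (hM.one _).1 he]
      exact h1 p hps

theorem Matches.dig (hM : Matches R) {a : Q} {i : ℕ} :
    Dig R a (numeral Q (2 ^ i)) (numeral Q (2 ^ (i + 1))) ↔ digitB a i := by
  simp only [Dig, digitB, hM.add, hM.mul, hM.lt]
  constructor
  · rintro ⟨u, t, _, _, rfl, rfl, h, ht⟩
    exact ⟨u, t, h.symm, ht⟩
  · rintro ⟨u, t, h, ht⟩
    exact ⟨u, t, _, _, rfl, rfl, h.symm, ht⟩

theorem map_numeral (e : Q ≃[arith] ℕ) (n : ℕ) : e (numeral Q n) = n := by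
  induction n with
  | zero =>
    exact e.map_fun (arithFunc.zero : arith.Functions 0) ![]
  | succ n ih =>
    have h1 : e (oneM Q) = 1 := e.map_fun (arithFunc.one : arith.Functions 0) ![]
    have := e.map_fun (arithFunc.add : arith.Functions 2) ![numeral Q n, oneM Q]
    refine this.trans ?_
    change e (numeral Q n) + e (oneM Q) = n + 1
    rw [ih, h1]

theorem not_nonempty_equiv_nat {a : Q} (ha : ¬ IsStd a) : ¬ Nonempty (Q ≃[arith] ℕ) := by
  rintro ⟨e⟩
  exact ha ⟨e a, e.injective (map_numeral e _).symm⟩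

end Model

section Quotient

variable {M Q : Type} {R : ℕ → M → M → M → Prop} {num : ℕ → M} {B : Set M}

theorem IsArith.exists_transversal (hA : IsArith R) (B : Set M) :
    ∃ (Q : Type) (g : Q → M), (∀ q, g q ∈ B) ∧ (∀ b ∈ B, ∃ q, R 3 (g q) b (g q)) ∧
      ∀ x y, R 3 (g x) (g y) (g x) → x = y := by
  let s : Setoid B := ⟨fun x y => R 3 x y x, fun x => hA.eq_refl x, fun h => hA.eq_symm _ _ h,
    fun h h' => hA.eq_trans _ _ _ h h'⟩
  refine ⟨Quotient s, fun q => q.out.1, fun q => q.out.2, fun b hb => ⟨Quotient.mk s ⟨b, hb⟩, ?_⟩,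
    fun x y h => ?_⟩
  · exact Quotient.mk_out (s := s) ⟨b, hb⟩
  · exact Quotient.out_equiv_out.1 h

theorem exists_not_sat_transversal (hA : IsArith R)
    (hB : ∀ φ (l : List M), (∀ x ∈ l, x ∈ B) → (∃ x, ¬ Sat R φ (scons x (listEnv num l))) →
      ∃ x ∈ B, ¬ Sat R φ (scons x (listEnv num l)))
    {g : Q → M} (hgB : ∀ q, g q ∈ B) (hg : ∀ b ∈ B, ∃ q, R 3 (g q) b (g q)) (φ : ℕ) (v : ℕ → Q)
    (h : ∃ x, ¬ Sat R φ (scons x (g ∘ v))) : ∃ y, ¬ Sat R φ (scons (g y) (g ∘ v)) := by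
  obtain ⟨k, hk⟩ := exists_support φ
  let l := (List.range k).map (g ∘ v)
  have hl : ∀ x ∈ l, x ∈ B := by
    intro x hx
    obtain ⟨i, -, rfl⟩ := List.mem_map.1 hx
    exact hgB _
  have hs (x : M) : Sat R φ (scons x (g ∘ v)) ↔ Sat R φ (scons x (listEnv num l)) := by
    refine hk R _ _ fun i hi => ?_
    cases i with
    | zero => rfl
    | succ i =>
      have : i < k := by omega
      simp [scons, listEnv, l, this]
  simp only [hs] at h ⊢
  obtain ⟨b, hbB, hb⟩ := hB φ l hl h
  obtain ⟨q, hq⟩ := hg b hbB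
  refine ⟨q, fun hc => hb ((hA.sat_congr φ fun i => ?_).1 hc)⟩
  cases i with
  | zero => exact hq
  | succ i => exact hA.eq_refl _

theorem IsArith.dig_congr (hA : IsArith R) {x y z x' y' z' : M} (hx : R 3 x x' x) (hy : R 3 y y' y)
    (hz : R 3 z z' z) : Dig R x y z ↔ Dig R x' y' z' := by
  have := hA.sat_congr cDigit (v := scons x (scons y fun _ => z))
    (v' := scons x' (scons y' fun _ => z')) (by
      rintro (_ | _ | i)
      exacts [hx, hy, hz])
  simpa [scons] using this

theorem eq_numeral (hA : IsArith R) (hN : IsNum R num) {g : Q → M} [arith.Structure Q]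
    (hM : Matches (pullRel g R)) (j : ℕ) :
    R 3 (g (numeral Q j)) (num j) (g (numeral Q j)) := by
  induction j with
  | zero => exact hA.zero_unique _ _ ((hM.zero _).2 rfl) hN.zero
  | succ j ih =>
    have h1 : R 3 (g (oneM Q)) (num 1) (g (oneM Q)) :=
      hA.one_unique _ _ ((hM.one _).2 rfl) hN.one
    have h : R 0 (g (numeral Q j)) (g (oneM Q)) (g (numeral Q (j + 1))) := (hM.add _ _ _).2 rfl
    exact hA.add_unique _ _ _ _ (hA.congr 0 (by decide) _ _ _ _ _ _ ih h1 (hA.eq_refl _) h)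
      (hN.succ j)

theorem isStd_iff (hA : IsArith R) (hN : IsNum R num) {g : Q → M} [arith.Structure Q]
    (hM : Matches (pullRel g R)) (a : Q) : IsStd a ↔ ∃ j, R 3 (g a) (num j) (g a) := by
  refine exists_congr fun j => ⟨?_, fun h => ?_⟩
  · rintro rfl
    exact eq_numeral hA hN hM j
  · exact (hM.eq _ _).1 (hA.eq_trans _ _ _ h (hA.eq_symm _ _ (eq_numeral hA hN hM j)))

theorem Good.digits_mem {S : Set (Set ℕ)} (hS : ScottSet S) (hG : Good S R num B) {a : M}
    (ha : a ∈ B) : {i | Dig R a (num (2 ^ i)) (num (2 ^ (i + 1)))} ∈ S := by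
  have hf : Primrec fun i : ℕ => fact cDigit [1, 3 * 2 ^ i, 3 * 2 ^ (i + 1)] :=
    primrec_fact.comp (.const _) (Primrec.list_cons.comp (.const 1) (Primrec.list_cons.comp
      (primrec_three_mul.comp primrec_two_pow) (Primrec.list_cons.comp
      (primrec_three_mul.comp (primrec_two_pow.comp Primrec.succ)) (.const []))))
  convert ScottSet.preimage_mem hS (hG [a] (by simpa using ha)) hf using 1
  ext i
  have h1 : base num (listEnv num [a]) 1 = a := by simp [base, listEnv]
  simp [look, h1]

end Quotient

end KnightNadel

open Arith in
/-- **Knight–Nadel.** Every Scott set of cardinality at most `ℵ₁` is the standard system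
of some non-standard model of `PA`. -/
theorem statement_3 (S : Set (Set ℕ)) (hS : ScottSet S)
    (hcard : Cardinal.mk S ≤ Cardinal.aleph 1) :
    ∃ (M : Type) (_ : arith.Structure M), NonstandardModel M ∧ SSy M = S := by
  obtain ⟨M, R, num, hL, hR, hA, hN, hG⟩ := KnightNadel.ScottSet.exists_ambient hS
  obtain ⟨B, hnum, hGB, hB, hC⟩ := KnightNadel.exists_good_subset hS hcard hL hR hN hG
  obtain ⟨Q, g, hgB, hg, hinj⟩ := hA.exists_transversal B
  have hE := KnightNadel.sat_pullRel (KnightNadel.exists_not_sat_transversal hA hB hgB hg)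
  obtain ⟨q, -⟩ := hg _ (hnum ⟨0, rfl⟩)
  have : Nonempty Q := ⟨q⟩
  have hAQ := KnightNadel.IsArith.pullRel hE hA
  let _ := hAQ.toStructure
  have hM : KnightNadel.Matches (KnightNadel.pullRel g R) := hAQ.matches_toStructure hinj
  have hdig (a : Q) (i : ℕ) :
      digitB a i ↔ KnightNadel.Dig R (g a) (num (2 ^ i)) (num (2 ^ (i + 1))) := by
    rw [← hM.dig, KnightNadel.dig_pullRel hE]
    exact hA.dig_congr (hA.eq_refl _) (KnightNadel.eq_numeral hA hN hM _)
      (KnightNadel.eq_numeral hA hN hM _)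
  have hcode : ∀ X ∈ S, ∃ a : Q, ¬ IsStd a ∧ ∀ i, i ∈ X ↔ digitB a i := by
    intro X hX
    obtain ⟨b, hb, hns, hbX⟩ := hC X hX
    obtain ⟨a, ha⟩ := hg b hb
    refine ⟨a, fun h => ?_, fun i => ?_⟩
    · obtain ⟨j, hj⟩ := (KnightNadel.isStd_iff hA hN hM a).1 h
      exact hns j (hA.eq_trans _ _ _ (hA.eq_symm _ _ ha) hj)
    · rw [hbX, hdig]
      exact (hA.dig_congr ha (hA.eq_refl _) (hA.eq_refl _)).symm
  obtain ⟨X, hX⟩ := hS.1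
  obtain ⟨a, ha, -⟩ := hcode X hX
  refine ⟨Q, _, ⟨KnightNadel.isPAModel hAQ hM (KnightNadel.LNP.pullRel hE hL),
    KnightNadel.not_nonempty_equiv_nat ha⟩, Set.ext fun X => ⟨?_, hcode X⟩⟩
  rintro ⟨a, -, haX⟩
  have := KnightNadel.Good.digits_mem hS hGB (hgB a)
  simp only [← hdig, ← haX] at this
  exact this
end

section
/- Let N be a non-standard model of PA, a ∈ N − ω, p a condition with n = n_p and N ⊨ |p(N)| > r·(2^a)^{2^n} for a positive rational r, F : N^k → N definable in N, and (σ, σ₁, …, σ_k) a tuple from 2^n with σ ∉ {σ₁, …, σ_k}. Then for each m ∈ ω, in N the cardinality of the set {(b_τ : τ ∈ 2^n) ∈ p(N) : for all i < m, (b_σ)_i = (F(b_{σ₁}, …, b_{σ_k}))_i} is at most 2^{−m}·(2^a)^{2^n}; consequently there exist i ∈ ω and a positive rational ε such that N ⊨ |{(b_τ : τ ∈ 2^n) ∈ p(N) : (b_σ)_i ≠ (F(b_{σ₁}, …, b_{σ_k}))_i}| > ε·(2^a)^{2^n}. -/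
open FirstOrder FirstOrder.Language

namespace Arith

variable {N : Type*} [arith.Structure N]

/-- Formulas with constants for all elements of `N`, in free variables `x_σ` indexed by
binary sequences `σ ∈ 2^n`. -/
abbrev CFormula (N : Type*) [arith.Structure N] (n : ℕ) : Type _ :=
  (arith[[N]]).Formula (Fin n → Bool)

/-- `d^k` for standard `k`. -/
def powStd (d : N) : ℕ → N
  | 0 => oneM N
  | k + 1 => mulM (powStd d k) d

/-- The binary sequence of length `n` coded by `j < 2^n`. -/
def binOfFin {n : ℕ} (j : Fin (2 ^ n)) : Fin n → Bool := fun i => j.val.testBit i.val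

/-- The code `∑_σ b_σ · d^(rank σ)` of a tuple `(b_σ : σ ∈ 2^n)` of elements below `d`,
in base `d`. -/
def tupleCode (d : N) {n : ℕ} (b : (Fin n → Bool) → N) : N :=
  (List.finRange (2 ^ n)).foldr
    (fun j acc => addM (mulM (b (binOfFin j)) (powStd d j.val)) acc) (zeroM N)

/-- `b` realizes all formulas in `fmls`. -/
def RealizesAll {n : ℕ} (fmls : Set (CFormula N n)) (b : (Fin n → Bool) → N) : Prop :=
  ∀ φ ∈ fmls, φ.Realize b

/-- The set of codes of tuples realizing `fmls` in `N`; this represents the internal set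
`p(N)` of realizations of a condition. -/
def realizationCodes (d : N) {n : ℕ} (fmls : Set (CFormula N n)) : Set N :=
  {e | ∃ b : (Fin n → Bool) → N, RealizesAll fmls b ∧ e = tupleCode d b}

/-- A condition: a finite type `p` of `N` in the variables `(x_σ : σ ∈ 2^{n_p})`
(with parameters from `N`, and no quantifiers over any `x_σ`), such that `p ⊢ x_σ < d`
(where `d = 2^a`), and such that for some positive rational `r = u/v`, internally in `N`,
`|p(N)| > r · d^(2^{n_p})`. -/
structure Condition (N : Type*) [arith.Structure N] (d : N) : Type _ where
  n : ℕ
  fmls : Set (CFormula N n)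
  finite : fmls.Finite
  realizable : ∃ b : (Fin n → Bool) → N, RealizesAll fmls b
  bounded : ∀ b : (Fin n → Bool) → N, RealizesAll fmls b → ∀ σ : Fin n → Bool, ltM (b σ) d
  large : ∃ (u v : ℕ) (c : N), 0 < u ∧ 0 < v ∧
    InternalCard (realizationCodes d fmls) c ∧
    ltM (mulM (numeral N u) (powStd d (2 ^ n))) (mulM (numeral N v) c)

/-- The `m`-reduct of a formula in the variables `(x_σ : σ ∈ 2^n)`: substitute
`x_{σ↾m}` for `x_σ`. -/
def reduct {n m : ℕ} (h : m ≤ n) (φ : CFormula N n) : CFormula N m :=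
  φ.relabel fun σ => fun i => σ (Fin.castLE h i)

/-- The order on conditions: `q ≤ p` iff `n_q ≥ n_p` and `q` contains every
`n_q`-ramification of every formula in `p` (i.e. every formula whose `n_p`-reduct lies
in `p`). -/
def CondLE {d : N} (q p : Condition N d) : Prop :=
  ∃ h : p.n ≤ q.n, ∀ ψ : CFormula N q.n, reduct h ψ ∈ p.fmls → ψ ∈ q.fmls

/-- Formulas in the variables `(x_f : f ∈ 2^ω)` with constants from `N`. -/
abbrev CFormulaInf (N : Type*) [arith.Structure N] : Type _ :=
  (arith[[N]]).Formula (ℕ → Bool)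

/-- The `m`-reduct of a formula in the variables `(x_f : f ∈ 2^ω)`: substitute
`x_{f↾m}` for `x_f`. -/
def reductInf {m : ℕ} (φ : CFormulaInf N) : CFormula N m :=
  φ.relabel fun f => fun i => f i.val

end Arith

namespace Arith

section Definability

variable {N : Type*} [arith.Structure N] {α β : Type*}

/-- A predicate on tuples of elements of `N` is definable with parameters. -/
class DefPred (P : (α → N) → Prop) : Prop where
  definable : (Set.univ : Set N).Definable arith {v | P v}

/-- A function from tuples to `N` is definable with parameters: its graph is. -/
class DefFun (f : (α → N) → N) : Prop where
  graph : DefPred fun w : Option α → N => f (fun i => w (some i)) = w none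

theorem DefPred.of_iff {P Q : (α → N) → Prop} (hQ : DefPred Q) (h : ∀ v, P v ↔ Q v) :
    DefPred P := by
  rwa [funext fun v => propext (h v)]

theorem DefPred.reindex {P : (α → N) → Prop} (hP : DefPred P) (g : α → β) :
    DefPred fun w : β → N => P fun i => w (g i) :=
  ⟨hP.definable.preimage_comp g⟩

instance DefPred.and {P Q : (α → N) → Prop} [hP : DefPred P] [hQ : DefPred Q] :
    DefPred fun v => P v ∧ Q v :=
  ⟨hP.definable.inter hQ.definable⟩

instance DefPred.or {P Q : (α → N) → Prop} [hP : DefPred P] [hQ : DefPred Q] :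
    DefPred fun v => P v ∨ Q v :=
  ⟨hP.definable.union hQ.definable⟩

instance DefPred.not {P : (α → N) → Prop} [hP : DefPred P] : DefPred fun v => ¬ P v :=
  ⟨hP.definable.compl⟩

instance DefPred.imp {P Q : (α → N) → Prop} [DefPred P] [DefPred Q] :
    DefPred fun v => P v → Q v :=
  DefPred.of_iff (Q := fun v => ¬ P v ∨ Q v) inferInstance fun _ => imp_iff_not_or

instance DefPred.iff {P Q : (α → N) → Prop} [DefPred P] [DefPred Q] :
    DefPred fun v => (P v ↔ Q v) :=
  DefPred.of_iff (Q := fun v => (P v → Q v) ∧ (Q v → P v)) inferInstance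
    fun _ => iff_iff_implies_and_implies

instance DefPred.const (p : Prop) : DefPred fun _ : α → N => p := by
  by_cases hp : p
  · exact ⟨by simp [hp]⟩
  · exact ⟨by simp [hp]⟩

instance DefPred.forall_finite {ι : Type*} [Finite ι] {P : ι → (α → N) → Prop}
    [hP : ∀ i, DefPred (P i)] : DefPred fun v => ∀ i, P i v := by
  refine ⟨?_⟩
  have := Set.definable_iInter_of_finite fun i => (hP i).definable
  simpa [Set.iInter_ofPred] using this

instance DefPred.exists_tuple [Finite β] {P : (α → N) → (β → N) → Prop}
    [hP : DefPred fun w : α ⊕ β → N => P (fun i => w (.inl i)) fun j => w (.inr j)] :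
    DefPred fun v => ∃ x, P v x := by
  obtain ⟨φ, hφ⟩ := hP.definable
  refine ⟨φ.iExs β, ?_⟩
  ext v
  simp only [Set.mem_ofPred_eq, Formula.realize_iExs]
  refine exists_congr fun x => ?_
  have := Set.ext_iff.mp hφ (Sum.elim v x)
  simpa using this

instance DefPred.exists {P : (α → N) → N → Prop}
    [hP : DefPred fun w : Option α → N => P (fun i => w (some i)) (w none)] :
    DefPred fun v => ∃ x, P v x := by
  have := hP.reindex (β := α ⊕ Unit) fun i => i.elim (.inr ()) .inl
  refine (DefPred.exists_tuple (P := fun v x => P v (x ())) (hP := this)).of_iff fun v => ?_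
  exact ⟨fun ⟨x, hx⟩ => ⟨fun _ => x, hx⟩, fun ⟨x, hx⟩ => ⟨_, hx⟩⟩

instance DefPred.forall {P : (α → N) → N → Prop}
    [hP : DefPred fun w : Option α → N => P (fun i => w (some i)) (w none)] :
    DefPred fun v => ∀ x, P v x :=
  DefPred.of_iff (Q := fun v => ¬ ∃ x, ¬ P v x) inferInstance fun v => by push Not; rfl

theorem DefPred.subst [Finite β] {P : (β → N) → Prop} (hP : DefPred P)
    {g : β → (α → N) → N} (hg : ∀ j, DefFun (g j)) : DefPred fun v => P fun j => g j v := by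
  have h₁ : DefPred fun w : α ⊕ β → N => ∀ j, g j (fun i => w (.inl i)) = w (.inr j) :=
    DefPred.forall_finite (hP := fun j =>
      (hg j).graph.reindex (β := α ⊕ β) fun i => i.elim (.inr j) .inl)
  have h₂ : DefPred fun w : α ⊕ β → N => P fun j => w (.inr j) := hP.reindex _
  refine (DefPred.exists_tuple (P := fun v x => (∀ j, g j v = x j) ∧ P x)).of_iff
    fun v => ⟨fun h => ⟨_, fun _ => rfl, h⟩, fun ⟨x, hx, h⟩ => ?_⟩
  rwa [funext hx]

theorem DefPred.subst₂ {R : N → N → Prop} (hR : DefPred fun v : Fin 2 → N => R (v 0) (v 1))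
    {f g : (α → N) → N} [hf : DefFun f] [hg : DefFun g] : DefPred fun v => R (f v) (g v) :=
  hR.subst (g := ![f, g]) fun j => by fin_cases j <;> assumption

theorem DefPred.subst₁ {R : N → Prop} (hR : DefPred fun v : Fin 1 → N => R (v 0))
    {f : (α → N) → N} [hf : DefFun f] : DefPred fun v => R (f v) :=
  hR.subst (g := ![f]) fun j => by fin_cases j; assumption

theorem DefPred.of_formula (φ : arith.Formula α) : DefPred fun v : α → N => φ.Realize v :=
  ⟨(Set.empty_definable_iff.mpr ⟨φ, rfl⟩).mono (Set.empty_subset _)⟩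

theorem DefPred.var_eq (i j : α) : DefPred fun v : α → N => v i = v j :=
  (DefPred.of_formula ((Term.var i).equal (.var j))).of_iff fun v => by simp

theorem DefFun.reindex {f : (α → N) → N} (hf : DefFun f) (g : α → β) :
    DefFun fun w : β → N => f fun i => w (g i) :=
  ⟨hf.graph.reindex (β := Option β) (Option.map g)⟩

instance DefFun.var (i : α) : DefFun fun v : α → N => v i :=
  ⟨DefPred.var_eq _ _⟩

instance DefFun.const (c : N) : DefFun fun _ : α → N => c := by
  refine ⟨⟨((Language.con arith (⟨c, trivial⟩ : (Set.univ : Set N))).term).equal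
    (Term.var none), ?_⟩⟩
  ext v
  simp

instance DefPred.eq {f g : (α → N) → N} [DefFun f] [DefFun g] : DefPred fun v => f v = g v :=
  (DefPred.var_eq 0 1).subst₂

instance DefPred.ne {f g : (α → N) → N} [DefFun f] [DefFun g] : DefPred fun v => f v ≠ g v :=
  DefPred.not

instance DefPred.ltM {f g : (α → N) → N} [DefFun f] [DefFun g] :
    DefPred fun v => ltM (f v) (g v) := by
  refine DefPred.subst₂ ((DefPred.of_formula (Relations.formula₂
    (arithRel.lt : arith.Relations 2) (Term.var 0) (Term.var 1))).of_iff fun v => ?_)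
  erw [Formula.realize_rel₂]
  rfl

theorem DefFun.of_graph [Finite β] {F : (β → N) → N}
    (hF : DefPred fun w : Option β → N => F (fun i => w (some i)) = w none)
    {g : β → (α → N) → N} (hg : ∀ j, DefFun (g j)) : DefFun fun v => F fun j => g j v := by
  refine ⟨hF.subst (g := fun j w => j.elim (w none) fun i => g i fun i => w (some i)) ?_⟩
  rintro (_ | j)
  · exact DefFun.var _
  · exact (hg j).reindex some

theorem DefFun.comp₂ {F : N → N → N}
    (hF : DefPred fun w : Fin 3 → N => F (w 0) (w 1) = w 2)
    {f g : (α → N) → N} [hf : DefFun f] [hg : DefFun g] : DefFun fun v => F (f v) (g v) :=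
  DefFun.of_graph (F := fun v : Fin 2 → N => F (v 0) (v 1)) (g := ![f, g])
    (hF.reindex ![some 0, some 1, none]) fun j => by fin_cases j <;> assumption

instance DefFun.addM {f g : (α → N) → N} [DefFun f] [DefFun g] :
    DefFun fun v => addM (f v) (g v) := by
  refine DefFun.comp₂ ((DefPred.of_formula ((Functions.apply₂
    (arithFunc.add : arith.Functions 2) (Term.var 0) (Term.var 1)).equal
      (Term.var 2))).of_iff fun v => ?_)
  rw [Formula.realize_equal]
  erw [Term.realize_functions_apply₂]
  rfl

instance DefFun.mulM {f g : (α → N) → N} [DefFun f] [DefFun g] :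
    DefFun fun v => mulM (f v) (g v) := by
  refine DefFun.comp₂ ((DefPred.of_formula ((Functions.apply₂
    (arithFunc.mul : arith.Functions 2) (Term.var 0) (Term.var 1)).equal
      (Term.var 2))).of_iff fun v => ?_)
  rw [Formula.realize_equal]
  erw [Term.realize_functions_apply₂]
  rfl

theorem DefinableFun₁.defFun {F : N → N} (hF : DefinableFun₁ F) {f : (α → N) → N}
    [hf : DefFun f] : DefFun fun v => F (f v) :=
  DefFun.of_graph (F := fun v : Fin 1 → N => F (v 0)) (g := ![f])
    (DefPred.reindex ⟨hF⟩ ![some 0, none]) fun j => by fin_cases j; assumption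

theorem DefinableFun.defFun {k : ℕ} {F : (Fin k → N) → N} (hF : DefinableFun F)
    {g : Fin k → (α → N) → N} (hg : ∀ j, DefFun (g j)) : DefFun fun v => F fun j => g j v := by
  refine DefFun.of_graph (((DefPred.mk hF).reindex (Fin.lastCases none some)).of_iff fun w => ?_) hg
  simp

theorem DefPred.realize {n : ℕ} (φ : CFormula N n) :
    DefPred fun v : (Fin n → Bool) → N => φ.Realize v := by
  let g : N → (Set.univ : Set N) := fun x => ⟨x, trivial⟩
  have h : (LHom.constantsOnMap g).IsExpansionOn N := constantsOnMap_isExpansionOn rfl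
  have h' : (arith.lhomWithConstantsMap g).IsExpansionOn N := LHom.sumMap_isExpansionOn _ _ _
  exact ⟨(arith.lhomWithConstantsMap g).onFormula φ, by ext v; simp⟩

theorem DefPred.realizesAll {n : ℕ} {fmls : Set (CFormula N n)} (h : fmls.Finite) :
    DefPred fun v : (Fin n → Bool) → N => RealizesAll fmls v := by
  have := h.to_subtype
  refine (DefPred.forall_finite (hP := fun φ : fmls => DefPred.realize φ.1)).of_iff fun v => ?_
  simp [RealizesAll]

theorem DefPred.exists_lt_nat {P : ℕ → (α → N) → Prop} (hP : ∀ i, DefPred (P i))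
    (m : ℕ) : DefPred fun v => ∃ i < m, P i v :=
  DefPred.of_iff (Q := fun v => ¬ ∀ i : Fin m, ¬ P i v) inferInstance fun v => by
    simp [Fin.exists_iff]

end Definability

end Arith

namespace Arith

section Arithmetic

/-- Class form of `IsPAModel`, from which the ordered semiring structure is inferred. -/
class PAModel (N : Type*) [arith.Structure N] : Prop where
  isPAModel : IsPAModel N

variable {N : Type*} [arith.Structure N] [PAModel N] {α : Type*}

theorem induction_on' {P : N → Prop} [hP : DefPred fun v : Fin 1 → N => P (v 0)] (x : N)
    (zero : P (zeroM N)) (succ : ∀ x, P x → P (addM x (oneM N))) : P x :=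
  (PAModel.isPAModel (N := N)).2.2.2.2.2.2.2.2 {x | P x} hP.definable zero succ x

theorem addM_zeroM (x : N) : addM x (zeroM N) = x := PAModel.isPAModel.1 x

theorem addM_succ (x y : N) : addM x (addM y (oneM N)) = addM (addM x y) (oneM N) :=
  PAModel.isPAModel.2.1 x y

theorem mulM_zeroM (x : N) : mulM x (zeroM N) = zeroM N := PAModel.isPAModel.2.2.1 x

theorem mulM_succ (x y : N) : mulM x (addM y (oneM N)) = addM (mulM x y) x :=
  PAModel.isPAModel.2.2.2.1 x y

theorem addM_assoc (x y z : N) : addM (addM x y) z = addM x (addM y z) := by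
  refine induction_on' (P := fun z => addM (addM x y) z = addM x (addM y z)) z ?_ ?_
  · simp only [addM_zeroM]
  · intro z hz
    simp only [addM_succ, hz]

theorem zeroM_addM (x : N) : addM (zeroM N) x = x := by
  refine induction_on' (P := fun x => addM (zeroM N) x = x) x (addM_zeroM _) ?_
  intro x hx
  rw [addM_succ, hx]

theorem succ_addM (x y : N) : addM (addM x (oneM N)) y = addM (addM x y) (oneM N) := by
  refine induction_on' (P := fun y => addM (addM x (oneM N)) y = addM (addM x y) (oneM N)) y ?_ ?_
  · simp only [addM_zeroM]
  · intro y hy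
    simp only [addM_succ, hy]

theorem addM_comm (x y : N) : addM x y = addM y x := by
  refine induction_on' (P := fun y => addM x y = addM y x) y ?_ ?_
  · rw [addM_zeroM, zeroM_addM]
  · intro y hy
    rw [addM_succ, hy, succ_addM]

theorem zeroM_mulM (x : N) : mulM (zeroM N) x = zeroM N := by
  refine induction_on' (P := fun x => mulM (zeroM N) x = zeroM N) x (mulM_zeroM _) ?_
  intro x hx
  rw [mulM_succ, hx, addM_zeroM]

theorem succ_mulM (x y : N) : mulM (addM x (oneM N)) y = addM (mulM x y) y := by
  refine induction_on' (P := fun y => mulM (addM x (oneM N)) y = addM (mulM x y) y) y ?_ ?_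
  · simp only [mulM_zeroM, addM_zeroM]
  · intro y hy
    rw [mulM_succ, mulM_succ, hy, addM_succ, addM_succ, addM_assoc (mulM x y) y x,
      addM_assoc (mulM x y) x y, addM_comm x y]

theorem mulM_comm (x y : N) : mulM x y = mulM y x := by
  refine induction_on' (P := fun y => mulM x y = mulM y x) y ?_ ?_
  · rw [mulM_zeroM, zeroM_mulM]
  · intro y hy
    rw [mulM_succ, hy, succ_mulM]

theorem mulM_addM (x y z : N) : mulM x (addM y z) = addM (mulM x y) (mulM x z) := by
  refine induction_on' (P := fun z => mulM x (addM y z) = addM (mulM x y) (mulM x z)) z ?_ ?_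
  · simp only [mulM_zeroM, addM_zeroM]
  · intro z hz
    rw [addM_succ, mulM_succ, mulM_succ, hz, addM_assoc]

theorem mulM_assoc (x y z : N) : mulM (mulM x y) z = mulM x (mulM y z) := by
  refine induction_on' (P := fun z => mulM (mulM x y) z = mulM x (mulM y z)) z ?_ ?_
  · simp only [mulM_zeroM]
  · intro z hz
    rw [mulM_succ, mulM_succ, mulM_addM, hz]

theorem mulM_oneM (x : N) : mulM x (oneM N) = x := by
  have := mulM_succ x (zeroM N)
  rwa [zeroM_addM, mulM_zeroM, zeroM_addM] at this

instance : CommSemiring N where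
  add := addM
  zero := zeroM N
  mul := mulM
  one := oneM N
  nsmul := @nsmulRec N ⟨zeroM N⟩ ⟨addM⟩
  natCast := numeral N
  npow n x := powStd x n
  add_assoc := addM_assoc
  zero_add := zeroM_addM
  add_zero := addM_zeroM
  add_comm := addM_comm
  left_distrib := mulM_addM
  right_distrib x y z := by
    change mulM (addM x y) z = addM (mulM x z) (mulM y z)
    rw [mulM_comm, mulM_addM, mulM_comm x, mulM_comm y]
  zero_mul := zeroM_mulM
  mul_zero := mulM_zeroM
  mul_assoc := mulM_assoc
  one_mul x := (mulM_comm _ _).trans (mulM_oneM x)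
  mul_one := mulM_oneM
  mul_comm := mulM_comm

instance DefFun.add {f g : (α → N) → N} [DefFun f] [DefFun g] : DefFun fun v => f v + g v :=
  DefFun.addM

instance DefFun.mul {f g : (α → N) → N} [DefFun f] [DefFun g] : DefFun fun v => f v * g v :=
  DefFun.mulM

theorem induction_on {P : N → Prop} [DefPred fun v : Fin 1 → N => P (v 0)] (x : N)
    (zero : P 0) (succ : ∀ x, P x → P (x + 1)) : P x :=
  induction_on' x zero succ

theorem add_one_ne_zero (x : N) : x + 1 ≠ 0 := PAModel.isPAModel.2.2.2.2.2.2.1 x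

theorem add_one_cancel {x y : N} (h : x + 1 = y + 1) : x = y :=
  PAModel.isPAModel.2.2.2.2.2.2.2.1 x y h

theorem eq_zero_or_succ (x : N) : x = 0 ∨ ∃ y, x = y + 1 := by
  refine induction_on (P := fun x => x = 0 ∨ ∃ y, x = y + 1) x (.inl rfl) ?_
  exact fun x _ => .inr ⟨x, rfl⟩

theorem ltM_iff_exists {x y : N} : ltM x y ↔ ∃ z, y = x + z + 1 := by
  refine induction_on (P := fun y => ltM x y ↔ ∃ z, y = x + z + 1) y ?_ ?_
  · exact iff_of_false (PAModel.isPAModel.2.2.2.2.1 x) fun ⟨z, hz⟩ => add_one_ne_zero _ hz.symm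
  · intro y hy
    refine (PAModel.isPAModel.2.2.2.2.2.1 x y).trans ?_
    rw [hy]
    constructor
    · rintro (⟨z, rfl⟩ | rfl)
      · exact ⟨z + 1, by ring⟩
      · exact ⟨0, by ring⟩
    · rintro ⟨z, hz⟩
      have hz := add_one_cancel hz
      obtain rfl | ⟨w, rfl⟩ := eq_zero_or_succ z
      · exact .inr (by rw [hz, add_zero])
      · exact .inl ⟨w, by rw [hz, add_assoc]⟩

protected theorem add_right_cancel_of_eq {x y z : N} (h : x + z = y + z) : x = y := by
  refine induction_on (P := fun z => x + z = y + z → x = y) z (by simp) ?_ h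
  intro z hz h
  rw [← add_assoc, ← add_assoc] at h
  exact hz (add_one_cancel h)

theorem leM_iff_exists {x y : N} : leM x y ↔ ∃ z, y = x + z := by
  rw [leM, ltM_iff_exists]
  constructor
  · rintro (⟨z, rfl⟩ | rfl)
    · exact ⟨z + 1, by ring⟩
    · exact ⟨0, by ring⟩
  · rintro ⟨z, rfl⟩
    obtain rfl | ⟨w, rfl⟩ := eq_zero_or_succ z
    · exact .inr (by rw [add_zero])
    · exact .inl ⟨w, by ring⟩

theorem eq_zero_of_add_eq_zero {x y : N} (h : x + y = 0) : y = 0 := by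
  obtain rfl | ⟨w, rfl⟩ := eq_zero_or_succ y
  · rfl
  · exact absurd ((add_assoc x w 1).trans h) (add_one_ne_zero _)

theorem eq_zero_of_add_eq_self {x z : N} (h : x + z = x) : z = 0 :=
  Arith.add_right_cancel_of_eq (z := x) (by rw [add_comm, h, zero_add])

theorem leM_antisymm {x y : N} (h₁ : leM x y) (h₂ : leM y x) : x = y := by
  obtain ⟨z, rfl⟩ := leM_iff_exists.mp h₁
  obtain ⟨w, hw⟩ := leM_iff_exists.mp h₂
  rw [add_assoc] at hw
  have := eq_zero_of_add_eq_zero ((add_comm _ _).trans (eq_zero_of_add_eq_self hw.symm))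
  rw [this, add_zero]

instance DefPred.leM {f g : (α → N) → N} [DefFun f] [DefFun g] :
    DefPred fun v => leM (f v) (g v) :=
  DefPred.or

theorem leM_total (x y : N) : leM x y ∨ leM y x := by
  refine induction_on (P := fun x => leM x y ∨ leM y x) x ?_ ?_
  · exact .inl (leM_iff_exists.mpr ⟨y, (zero_add y).symm⟩)
  · rintro x (h | h)
    · obtain h | rfl := h
      · obtain ⟨z, rfl⟩ := ltM_iff_exists.mp h
        exact .inl (leM_iff_exists.mpr ⟨z, by ring⟩)
      · exact .inr (leM_iff_exists.mpr ⟨1, rfl⟩)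
    · obtain ⟨z, rfl⟩ := leM_iff_exists.mp h
      exact .inr (leM_iff_exists.mpr ⟨z + 1, by ring⟩)

open Classical in
noncomputable instance : LinearOrder N where
  le := leM
  lt := ltM
  le_refl _ := .inr rfl
  le_trans _ _ _ h₁ h₂ := by
    obtain ⟨u, rfl⟩ := leM_iff_exists.mp h₁
    obtain ⟨w, rfl⟩ := leM_iff_exists.mp h₂
    exact leM_iff_exists.mpr ⟨u + w, by ring⟩
  lt_iff_le_not_ge x y := by
    constructor
    · refine fun h => ⟨.inl h, fun h' => ?_⟩
      obtain rfl := leM_antisymm (.inl h) h'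
      obtain ⟨z, hz⟩ := ltM_iff_exists.mp h
      rw [add_assoc] at hz
      exact add_one_ne_zero _ (eq_zero_of_add_eq_self hz.symm)
    · rintro ⟨h | rfl, h'⟩
      · exact h
      · exact absurd (.inr rfl) h'
  le_antisymm _ _ := leM_antisymm
  le_total := leM_total
  toDecidableLE := Classical.decRel _

instance : CanonicallyOrderedAdd N where
  exists_add_of_le h := leM_iff_exists.mp h
  le_add_self x y := leM_iff_exists.mpr ⟨y, add_comm y x⟩
  le_self_add _ y := leM_iff_exists.mpr ⟨y, rfl⟩

theorem lt_add_one_iff' {x y : N} : x < y + 1 ↔ x ≤ y := PAModel.isPAModel.2.2.2.2.2.1 x y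

instance : IsStrictOrderedRing N where
  add_le_add_left _ _ h _ := by
    obtain ⟨u, rfl⟩ := exists_add_of_le h
    exact leM_iff_exists.mpr ⟨u, by ring⟩
  le_of_add_le_add_left x _ _ h := by
    obtain ⟨u, hu⟩ := exists_add_of_le h
    refine leM_iff_exists.mpr ⟨u, Arith.add_right_cancel_of_eq (z := x) ?_⟩
    rw [add_comm, hu]
    ring
  zero_le_one := zero_le
  exists_pair_ne := ⟨0, 1, fun h => add_one_ne_zero (0 : N) (by rw [zero_add, ← h])⟩
  mul_lt_mul_of_pos_left x hx y z h := by
    obtain ⟨u, rfl⟩ := ltM_iff_exists.mp h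
    obtain ⟨w, rfl⟩ := ltM_iff_exists.mp hx
    change ltM _ _
    exact ltM_iff_exists.mpr ⟨(w + 1) * u + w, by ring⟩
  mul_lt_mul_of_pos_right x hx y z h := by
    obtain ⟨u, rfl⟩ := ltM_iff_exists.mp h
    obtain ⟨w, rfl⟩ := ltM_iff_exists.mp hx
    change ltM _ _
    exact ltM_iff_exists.mpr ⟨(w + 1) * u + w, by ring⟩

instance DefPred.lt {f g : (α → N) → N} [DefFun f] [DefFun g] : DefPred fun v => f v < g v :=
  DefPred.ltM

instance DefPred.le {f g : (α → N) → N} [DefFun f] [DefFun g] : DefPred fun v => f v ≤ g v :=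
  DefPred.leM

end Arithmetic

end Arith

namespace Arith

section Coding

variable {N : Type*} [arith.Structure N] [PAModel N] {α : Type*}

theorem exists_quotient_remainder (x : N) {y : N} (hy : 0 < y) :
    ∃ q r, x = q * y + r ∧ r < y := by
  refine induction_on (P := fun x => ∃ q r, x = q * y + r ∧ r < y) x ⟨0, 0, by ring, hy⟩ ?_
  rintro x ⟨q, r, rfl, hr⟩
  obtain h | h := le_iff_lt_or_eq.mp (lt_add_one_iff'.mp (add_lt_add_left hr 1))
  · exact ⟨q, r + 1, by ring, h⟩
  · exact ⟨q + 1, 0, by rw [← h]; ring, hy⟩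

theorem quotient_le_of_eq {y q r q' r' : N} (h : q * y + r = q' * y + r') (hr : r < y) :
    q' ≤ q := by
  by_contra! hq
  obtain ⟨u, rfl⟩ := ltM_iff_exists.mp hq
  have : r = y + (u * y + r') := add_left_cancel (a := q * y) (by rw [h]; ring)
  exact absurd hr (not_lt.mpr (this ▸ le_self_add))

theorem quotient_remainder_unique {y q r q' r' : N} (h : q * y + r = q' * y + r') (hr : r < y)
    (hr' : r' < y) : q = q' ∧ r = r' := by
  obtain rfl := le_antisymm (quotient_le_of_eq h.symm hr') (quotient_le_of_eq h hr)
  exact ⟨rfl, add_left_cancel h⟩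

open Classical in
/-- The remainder of `x` modulo `y`, with value `0` when `y = 0`. -/
noncomputable def rem (x y : N) : N :=
  if h : ∃ r, r < y ∧ ∃ q, x = q * y + r then h.choose else 0

theorem rem_spec (x : N) {y : N} (hy : 0 < y) : rem x y < y ∧ ∃ q, x = q * y + rem x y := by
  have h : ∃ r, r < y ∧ ∃ q, x = q * y + r := by
    obtain ⟨q, r, h, hr⟩ := exists_quotient_remainder x hy
    exact ⟨r, hr, q, h⟩
  rw [rem, dif_pos h]
  exact h.choose_spec

theorem rem_eq_iff {x y r : N} (hy : 0 < y) : rem x y = r ↔ r < y ∧ ∃ q, x = q * y + r := by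
  obtain ⟨h₁, q, hq⟩ := rem_spec x hy
  refine ⟨fun h => h ▸ rem_spec x hy, fun ⟨h₂, q', hq'⟩ => ?_⟩
  exact (quotient_remainder_unique (hq.symm.trans hq') h₁ h₂).2

theorem rem_zero (x : N) : rem x 0 = 0 :=
  dif_neg fun ⟨_, hr, _⟩ => not_lt_zero hr

theorem rem_add_of_dvd (x : N) {y z : N} (hy : 0 < y) (h : y ∣ z) : rem (x + z) y = rem x y := by
  obtain ⟨h₁, q, hq⟩ := rem_spec x hy
  obtain ⟨c, rfl⟩ := h
  refine (rem_eq_iff hy).mpr ⟨h₁, q + c, ?_⟩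
  calc x + y * c = q * y + rem x y + y * c := by rw [← hq]
    _ = _ := by ring

instance DefFun.rem {f g : (α → N) → N} [DefFun f] [DefFun g] :
    DefFun fun v => rem (f v) (g v) := by
  refine DefFun.comp₂ (DefPred.of_iff (Q := fun w => (0 < w 1 ∧ w 2 < w 1 ∧
    ∃ q, w 0 = q * w 1 + w 2) ∨ (w 1 = 0 ∧ 0 = w 2)) inferInstance fun w => ?_)
  obtain h | h := eq_zero_or_pos (w 1)
  · simp [h, rem_zero]
  · simp [rem_eq_iff h, h, h.ne']

/-- Gödel's beta function. -/
noncomputable def beta (a b i : N) : N := rem a (1 + (i + 1) * b)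

instance DefFun.beta {f g h : (α → N) → N} [DefFun f] [DefFun g] [DefFun h] :
    DefFun fun v => beta (f v) (g v) (h v) :=
  DefFun.rem

instance DefPred.dvd {f g : (α → N) → N} [hf : DefFun f] [hg : DefFun g] :
    DefPred fun v => f v ∣ g v :=
  have := hf.reindex (β := Option α) some
  have := hg.reindex (β := Option α) some
  DefPred.of_iff (Q := fun v => ∃ c, g v = f v * c) inferInstance fun _ => Iff.rfl

theorem exists_bound {R : N → N → Prop} [hR : DefPred fun v : Fin 2 → N => R (v 0) (v 1)] (n : N)
    (h : ∀ i < n, ∃ y, R i y) : ∃ B, ∀ i < n, ∃ y < B, R i y := by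
  have hR' (α : Type) (f g : (α → N) → N) [DefFun f] [DefFun g] : DefPred fun v => R (f v) (g v) :=
    hR.subst₂
  refine induction_on (P := fun n => (∀ i < n, ∃ y, R i y) → ∃ B, ∀ i < n, ∃ y < B, R i y) n
    (fun _ => ⟨0, fun i hi => absurd hi not_lt_zero⟩) ?_ h
  intro n ih h
  obtain ⟨B, hB⟩ := ih fun i hi => h i (hi.trans (lt_add_one n))
  obtain ⟨y, hy⟩ := h n (lt_add_one n)
  refine ⟨max B (y + 1), fun i hi => ?_⟩
  obtain hi | rfl := le_iff_lt_or_eq.mp (lt_add_one_iff'.mp hi)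
  · obtain ⟨z, hz, hz'⟩ := hB i hi
    exact ⟨z, lt_max_of_lt_left hz, hz'⟩
  · exact ⟨y, lt_max_of_lt_right (lt_add_one y), hy⟩

theorem exists_common_multiple (n : N) : ∃ b, 0 < b ∧ ∀ i, 0 < i → i ≤ n → i ∣ b := by
  refine induction_on (P := fun n => ∃ b, 0 < b ∧ ∀ i, 0 < i → i ≤ n → i ∣ b) n
    ⟨1, one_pos, fun i h₁ h₂ => absurd (h₁.trans_le h₂) (lt_irrefl 0)⟩ ?_
  rintro n ⟨b, hb, h⟩
  refine ⟨b * (n + 1), mul_pos hb (by positivity), fun i h₁ h₂ => ?_⟩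
  obtain h₂ | rfl := le_iff_lt_or_eq.mp h₂
  · exact (h i h₁ (lt_add_one_iff'.mp h₂)).mul_right _
  · exact Dvd.intro_left _ rfl

theorem exists_inverse_modulus {b i l : N} (hb : 0 < b) (hil : i < l)
    (h : ∀ e, 0 < e → e ≤ l → e ∣ b) :
    ∃ u w, u * (1 + (i + 1) * b) = w * (1 + (l + 1) * b) + 1 := by
  obtain ⟨e, rfl⟩ := ltM_iff_exists.mp hil
  obtain ⟨t, rfl⟩ := h (e + 1) (by positivity) (by rw [add_assoc]; exact le_add_self)
  have hpos : 0 < (i + e + 1 + 1) * ((e + 1) * t) *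
      ((i + e + 1 + 1) * t * (i + 1) + 1) := by positivity
  obtain ⟨w, hw⟩ := ltM_iff_exists.mp hpos
  refine ⟨(i + e + 1 + 1) ^ 3 * t * ((e + 1) * t), w, ?_⟩
  apply add_right_cancel (b := 1 + (i + e + 1 + 1) * ((e + 1) * t))
  calc _ = (0 + w + 1) * (1 + (i + e + 1 + 1) * ((e + 1) * t)) + 1 := by rw [← hw]; ring
    _ = _ := by ring

/-- A definable multivalued function restricted to an initial segment is uniformized by a
coded sequence. -/
theorem exists_code {R : N → N → Prop} [hR : DefPred fun v : Fin 2 → N => R (v 0) (v 1)] (n : N)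
    (h : ∀ i < n, ∃ y, R i y) : ∃ a b, ∀ i < n, R i (beta a b i) := by
  have hR' (α : Type) (f g : (α → N) → N) [DefFun f] [DefFun g] : DefPred fun v => R (f v) (g v) :=
    hR.subst₂
  obtain ⟨B, hB⟩ := exists_bound n h
  obtain ⟨b₀, hb₀, hdvd₀⟩ := exists_common_multiple n
  obtain ⟨b, hb, hBb, hdvd⟩ : ∃ b, 0 < b ∧ B ≤ b ∧ ∀ i, 0 < i → i ≤ n → i ∣ b := by
    refine ⟨b₀ * (B + 1), by positivity, ?_, fun i h₁ h₂ => (hdvd₀ i h₁ h₂).mul_right _⟩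
    refine le_self_add.trans (le_mul_of_one_le_left zero_le ?_)
    simpa using lt_add_one_iff'.mp (add_lt_add_left hb₀ 1)
  have hpos (i : N) : 0 < 1 + (i + 1) * b := by positivity
  have key (k : N) : k ≤ n → ∃ L a, (∀ i < k, 1 + (i + 1) * b ∣ L) ∧
      (∀ l, k ≤ l → l ≤ n → ∃ u w, u * L = w * (1 + (l + 1) * b) + 1) ∧
      ∀ i < k, R i (beta a b i) := by
    refine induction_on (P := fun k => k ≤ n → ∃ L a, (∀ i < k, 1 + (i + 1) * b ∣ L) ∧
      (∀ l, k ≤ l → l ≤ n → ∃ u w, u * L = w * (1 + (l + 1) * b) + 1) ∧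
      ∀ i < k, R i (beta a b i)) k ?_ ?_
    · exact fun _ => ⟨1, 0, fun i hi => absurd hi not_lt_zero, fun l _ _ => ⟨1, 0, by ring⟩,
        fun i hi => absurd hi not_lt_zero⟩
    · intro k ih hk
      have hkn : k < n := (lt_add_one k).trans_le hk
      obtain ⟨L, a, hL, hinv, ha⟩ := ih hkn.le
      obtain ⟨u, w, huw⟩ := hinv k le_rfl hkn.le
      obtain ⟨y, hyB, hy⟩ := hB k hkn
      refine ⟨L * (1 + (k + 1) * b), a + L * (u * (y + (k + 1) * b * a)), ?_, ?_, ?_⟩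
      · intro i hi
        obtain hi | rfl := le_iff_lt_or_eq.mp (lt_add_one_iff'.mp hi)
        · exact (hL i hi).mul_right _
        · exact Dvd.intro_left _ rfl
      · intro l hkl hln
        have hkl : k < l := (lt_add_one k).trans_le hkl
        obtain ⟨u₁, w₁, h₁⟩ := hinv l hkl.le hln
        obtain ⟨u₂, w₂, h₂⟩ := exists_inverse_modulus hb hkl
          fun e he hel => hdvd e he (hel.trans hln)
        refine ⟨u₁ * u₂, w₁ * w₂ * (1 + (l + 1) * b) + w₁ + w₂, ?_⟩
        calc _ = (u₁ * L) * (u₂ * (1 + (k + 1) * b)) := by ring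
          _ = _ := by rw [h₁, h₂]; ring
      · intro i hi
        obtain hi | rfl := le_iff_lt_or_eq.mp (lt_add_one_iff'.mp hi)
        · rw [beta, rem_add_of_dvd _ (hpos i) ((hL i hi).mul_right _)]
          exact ha i hi
        · convert hy
          refine (rem_eq_iff (hpos i)).mpr ⟨?_, a + w * (y + (i + 1) * b * a), ?_⟩
          · calc y < b := hyB.trans_le hBb
              _ ≤ 1 + (i + 1) * b := by
                rw [show 1 + (i + 1) * b = b + (1 + i * b) by ring]
                exact le_self_add
          · calc _ = a + (u * L) * (y + (i + 1) * b * a) := by ring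
              _ = _ := by rw [huw]; ring
  obtain ⟨-, a, -, -, ha⟩ := key n le_rfl
  exact ⟨a, b, ha⟩

theorem exists_beta_eq_beta (y : N) : ∀ a b, (∀ i < y + 1, beta a b i < y) →
    ∃ i j, i < j ∧ j < y + 1 ∧ beta a b i = beta a b j := by
  refine induction_on (P := fun y => ∀ a b, (∀ i < y + 1, beta a b i < y) →
    ∃ i j, i < j ∧ j < y + 1 ∧ beta a b i = beta a b j) y
    (fun a b h => absurd (h 0 (by simp)) not_lt_zero) ?_
  intro y ih a b h
  by_contra! hinj
  obtain ⟨a', b', h'⟩ := exists_code (R := fun i z => (beta a b i = y ∧ z = beta a b (y + 1)) ∨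
    (beta a b i ≠ y ∧ z = beta a b i)) (y + 1) fun i _ => by
      by_cases hi : beta a b i = y
      · exact ⟨_, .inl ⟨hi, rfl⟩⟩
      · exact ⟨_, .inr ⟨hi, rfl⟩⟩
  have hlt := lt_add_one (y + 1)
  obtain ⟨i, j, hij, hj, heq⟩ := ih a' b' fun i hi => by
    obtain ⟨h₁, h₂⟩ | ⟨h₁, h₂⟩ := h' i hi
    · rw [h₂]
      refine lt_of_le_of_ne (lt_add_one_iff'.mp (h _ hlt)) fun h₃ => ?_
      exact hinj i _ hi hlt (h₁.trans h₃.symm)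
    · rw [h₂]
      exact lt_of_le_of_ne (lt_add_one_iff'.mp (h i (hi.trans hlt))) h₁
  obtain ⟨h₁, h₂⟩ | ⟨h₁, h₂⟩ := h' i (hij.trans hj) <;>
    obtain ⟨h₃, h₄⟩ | ⟨h₃, h₄⟩ := h' j hj
  · exact hinj i j hij (hj.trans hlt) (h₁.trans h₃.symm)
  · exact hinj j _ hj hlt (h₄.symm.trans (heq.symm.trans h₂))
  · exact hinj i _ (hij.trans hj) hlt (h₂.symm.trans (heq.trans h₄))
  · exact hinj i j hij (hj.trans hlt) (h₂.symm.trans (heq.trans h₄))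

/-- The pigeonhole principle for definable relations. -/
theorem le_of_definable_injection {R : N → N → Prop}
    [hR : DefPred fun v : Fin 2 → N => R (v 0) (v 1)] {x y : N}
    (htotal : ∀ i < x, ∃ z < y, R i z)
    (hinj : ∀ i < x, ∀ j < x, ∀ z, R i z → R j z → i = j) : x ≤ y := by
  by_contra! hxy
  have hyx {i : N} (hi : i < y + 1) : i < x := (lt_add_one_iff'.mp hi).trans_lt hxy
  obtain ⟨a, b, h⟩ := exists_code (R := fun i z => z < y ∧ R i z) (y + 1)
    fun i hi => htotal i (hyx hi)
  obtain ⟨i, j, hij, hj, heq⟩ := exists_beta_eq_beta y a b fun i hi => (h i hi).1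
  exact hij.ne (hinj i (hyx (hij.trans hj)) j (hyx hj) _ (h i (hij.trans hj)).2
    (heq ▸ (h j hj).2))

/-- A bounded definable set has an internal cardinality. -/
theorem exists_internalCard {S : Set N} [hS : DefPred fun v : Fin 1 → N => v 0 ∈ S] {B : N}
    (hB : ∀ x ∈ S, x < B) : ∃ c, InternalCard S c := by
  have hS' (α : Type) (f : (α → N) → N) [DefFun f] : DefPred fun v => f v ∈ S :=
    hS.subst₁ (R := (· ∈ S))
  obtain ⟨c, a, b, h₁, h₂, h₃⟩ : ∃ c a b, (∀ i < c, beta a b i ∈ S ∧ beta a b i < B) ∧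
      (∀ i < c, ∀ j < c, beta a b i = beta a b j → i = j) ∧
      ∀ x, x ∈ S → x < B → ∃ i < c, beta a b i = x := by
    refine induction_on (P := fun B => ∃ c a b, (∀ i < c, beta a b i ∈ S ∧ beta a b i < B) ∧
      (∀ i < c, ∀ j < c, beta a b i = beta a b j → i = j) ∧
      ∀ x, x ∈ S → x < B → ∃ i < c, beta a b i = x) B ?_ ?_
    · refine ⟨0, 0, 0, ?_, ?_, ?_⟩ <;> simp
    · rintro B ⟨c, a, b, h₁, h₂, h₃⟩
      by_cases hBS : B ∈ S
      · obtain ⟨a', b', h'⟩ := exists_code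
          (R := fun i z => (i < c ∧ z = beta a b i) ∨ (i = c ∧ z = B)) (c + 1) fun i hi => by
            obtain hi | hi := le_iff_lt_or_eq.mp (lt_add_one_iff'.mp hi)
            · exact ⟨_, .inl ⟨hi, rfl⟩⟩
            · exact ⟨_, .inr ⟨hi, rfl⟩⟩
        refine ⟨c + 1, a', b', ?_, ?_, ?_⟩
        · intro i hi
          obtain ⟨hi, h⟩ | ⟨hi, h⟩ := h' i hi
          · rw [h]
            exact ⟨(h₁ i hi).1, (h₁ i hi).2.trans (lt_add_one B)⟩
          · rw [h]
            exact ⟨hBS, lt_add_one B⟩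
        · intro i hi j hj hij
          obtain ⟨hi, h⟩ | ⟨hi, h⟩ := h' i hi <;> obtain ⟨hj, h'⟩ | ⟨hj, h'⟩ := h' j hj
          · exact h₂ i hi j hj (h.symm.trans (hij.trans h'))
          · exact absurd (h.symm.trans (hij.trans h')) (h₁ i hi).2.ne
          · exact absurd (h'.symm.trans (hij.symm.trans h)) (h₁ j hj).2.ne
          · rw [hi, hj]
        · intro x hxS hx
          obtain hx | rfl := le_iff_lt_or_eq.mp (lt_add_one_iff'.mp hx)
          · obtain ⟨i, hi, rfl⟩ := h₃ x hxS hx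
            have hi' := hi.trans (lt_add_one c)
            refine ⟨i, hi', ?_⟩
            obtain ⟨-, h⟩ | ⟨h, -⟩ := h' i hi'
            · exact h
            · exact absurd h hi.ne
          · refine ⟨c, lt_add_one c, ?_⟩
            obtain ⟨h, -⟩ | ⟨-, h⟩ := h' c (lt_add_one c)
            · exact absurd h (lt_irrefl c)
            · exact h
      · refine ⟨c, a, b, fun i hi => ⟨(h₁ i hi).1, (h₁ i hi).2.trans (lt_add_one B)⟩, h₂, ?_⟩
        intro x hxS hx
        refine h₃ x hxS (lt_of_le_of_ne (lt_add_one_iff'.mp hx) ?_)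
        rintro rfl
        exact hBS hxS
  refine ⟨c, beta a b, (inferInstance :
    DefPred fun v : Fin 2 → N => beta a b (v 0) = v 1).definable, ?_, ?_, ?_⟩
  · exact fun i hi => (h₁ i hi).1
  · exact fun i hi j hj hij => h₂ i hi j hj hij
  · exact fun x hx => h₃ x hx (hB x hx)

theorem internalCard_le_add {A B C : Set N} {a b c : N} (hA : InternalCard A a)
    (hB : InternalCard B b) (hC : InternalCard C c) (h : C ⊆ A ∪ B) : c ≤ a + b := by
  obtain ⟨f, hf, hfA⟩ := hA
  obtain ⟨g, hg, hgB⟩ := hB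
  obtain ⟨k, hk, hkC⟩ := hC
  have hf' (α : Type) (t : (α → N) → N) [DefFun t] : DefFun fun v => f (t v) := hf.defFun
  have hg' (α : Type) (t : (α → N) → N) [DefFun t] : DefFun fun v => g (t v) := hg.defFun
  have hk' (α : Type) (t : (α → N) → N) [DefFun t] : DefFun fun v => k (t v) := hk.defFun
  refine le_of_definable_injection (R := fun i z => (z < a ∧ f z = k i) ∨
    ∃ u < b, z = a + u ∧ g u = k i) ?_ ?_
  · intro i hi
    obtain hi | hi := h (hkC.mapsTo hi)
    · obtain ⟨z, hz, hz'⟩ := hfA.surjOn hi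
      exact ⟨z, lt_of_lt_of_le hz le_self_add, .inl ⟨hz, hz'⟩⟩
    · obtain ⟨u, hu, hu'⟩ := hgB.surjOn hi
      exact ⟨a + u, add_lt_add_right hu a, .inr ⟨u, hu, rfl, hu'⟩⟩
  · rintro i hi j hj z (⟨h₁, h₂⟩ | ⟨u, hu, rfl, h₂⟩) (⟨h₃, h₄⟩ | ⟨w, hw, h₃, h₄⟩)
    · exact hkC.injOn hi hj (h₂.symm.trans h₄)
    · exact absurd h₁ (not_lt.mpr (h₃ ▸ le_self_add))
    · exact absurd h₃ (not_lt.mpr le_self_add)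
    · obtain rfl := add_left_cancel h₃
      exact hkC.injOn hi hj (h₂.symm.trans h₄)

end Coding

end Arith

namespace Arith

section TupleCodes

variable {N : Type*} [arith.Structure N] [PAModel N] {α : Type*}

theorem sum_base_lt {d : N} {K : ℕ} {c : Fin K → N} (hc : ∀ j, c j < d) :
    ∑ j, c j * d ^ (j : ℕ) < d ^ K := by
  induction K with
  | zero => simp
  | succ K ih =>
    rw [Fin.sum_univ_castSucc]
    simp only [Fin.val_castSucc, Fin.val_last]
    obtain ⟨u, hu⟩ := ltM_iff_exists.mp (hc (Fin.last K))
    calc _ < d ^ K + c (Fin.last K) * d ^ K := add_lt_add_left (ih fun j => hc j.castSucc) _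
      _ ≤ d ^ K + c (Fin.last K) * d ^ K + u * d ^ K := le_self_add
      _ = d ^ K * (c (Fin.last K) + u + 1) := by ring
      _ = d ^ (K + 1) := by rw [← hu, pow_succ]

theorem sum_base_injective {d : N} {K : ℕ} {c c' : Fin K → N} (hc : ∀ j, c j < d)
    (hc' : ∀ j, c' j < d) (h : ∑ j, c j * d ^ (j : ℕ) = ∑ j, c' j * d ^ (j : ℕ)) : c = c' := by
  induction K with
  | zero => exact Subsingleton.elim _ _
  | succ K ih =>
    rw [Fin.sum_univ_castSucc, Fin.sum_univ_castSucc, add_comm, add_comm (∑ i : Fin K, _)] at h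
    simp only [Fin.val_castSucc, Fin.val_last] at h
    obtain ⟨h₁, h₂⟩ := quotient_remainder_unique h (sum_base_lt fun j => hc j.castSucc)
      (sum_base_lt fun j => hc' j.castSucc)
    have := ih (fun j => hc j.castSucc) (fun j => hc' j.castSucc) h₂
    funext j
    refine Fin.lastCases h₁ (fun j => congrFun this j) j

theorem tupleCode_eq_sum (d : N) {n : ℕ} (b : (Fin n → Bool) → N) :
    tupleCode d b = ∑ j : Fin (2 ^ n), b (binOfFin j) * d ^ (j : ℕ) := by
  rw [Fin.sum_univ_def, List.sum, List.foldr_map]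
  rfl

theorem binOfFin_bijective (n : ℕ) : Function.Bijective (binOfFin (n := n)) := by
  rw [Fintype.bijective_iff_injective_and_card]
  refine ⟨fun i j h => Fin.ext (Nat.eq_of_testBit_eq fun k => ?_), by simp⟩
  by_cases hk : k < n
  · exact congrFun h ⟨k, hk⟩
  · have hpow : 2 ^ n ≤ 2 ^ k := Nat.pow_le_pow_right two_pos (not_lt.mp hk)
    rw [Nat.testBit_lt_two_pow (i.2.trans_le hpow), Nat.testBit_lt_two_pow (j.2.trans_le hpow)]

theorem tupleCode_lt {d : N} {n : ℕ} {b : (Fin n → Bool) → N} (hb : ∀ τ, b τ < d) :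
    tupleCode d b < d ^ 2 ^ n := by
  rw [tupleCode_eq_sum]
  exact sum_base_lt fun j => hb _

theorem tupleCode_injective {d : N} {n : ℕ} {b b' : (Fin n → Bool) → N} (hb : ∀ τ, b τ < d)
    (hb' : ∀ τ, b' τ < d) (h : tupleCode d b = tupleCode d b') : b = b' := by
  rw [tupleCode_eq_sum, tupleCode_eq_sum] at h
  have := sum_base_injective (fun j => hb _) (fun j => hb' _) h
  exact (binOfFin_bijective n).surjective.injective_comp_right this

theorem DefFun.sum {ι : Type*} (s : Finset ι) {g : ι → (α → N) → N} (hg : ∀ i, DefFun (g i)) :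
    DefFun fun v => ∑ i ∈ s, g i v := by
  classical
  induction s using Finset.induction_on with
  | empty => simpa using DefFun.const 0
  | insert i s hi ih =>
    simp only [Finset.sum_insert hi]
    exact DefFun.add

instance DefFun.tupleCode {d : N} {n : ℕ} {b : (α → N) → (Fin n → Bool) → N}
    [hb : ∀ τ, DefFun fun v => b v τ] : DefFun fun v => tupleCode d (b v) := by
  simp only [tupleCode_eq_sum]
  exact DefFun.sum _ fun j => DefFun.mul

instance DefFun.update {ι : Type*} [DecidableEq ι] {b : (α → N) → ι → N} {f : (α → N) → N}
    {i j : ι} [hb : DefFun fun v => b v j] [hf : DefFun f] :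
    DefFun fun v => Function.update (b v) i (f v) j := by
  by_cases h : j = i
  · subst h
    simpa
  · simpa [h]

theorem digitB_iff {x : N} {i : ℕ} :
    digitB x i ↔ ∃ u v, x = u * 2 ^ (i + 1) + (2 ^ i + v) ∧ v < 2 ^ i := by
  have h (k : ℕ) : numeral N (2 ^ k) = 2 ^ k := (Nat.cast_pow 2 k).trans (by rw [Nat.cast_ofNat])
  unfold digitB
  rw [h, h]
  rfl

instance DefPred.digitB {f : (α → N) → N} [hf : DefFun f] {i : ℕ} :
    DefPred fun v => digitB (f v) i := by
  refine DefPred.subst₁ (R := fun x => Arith.digitB x i) (DefPred.of_iff (Q := fun w => ∃ u v : N,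
    w 0 = u * 2 ^ (i + 1) + (2 ^ i + v) ∧ v < 2 ^ i) inferInstance fun w => digitB_iff)

theorem digitB_even_or_odd {s r : N} {i : ℕ} (hr : r < 2 ^ i) :
    ¬ digitB (2 * s * 2 ^ i + r) i ∧ digitB ((2 * s + 1) * 2 ^ i + r) i := by
  constructor
  · rw [digitB_iff]
    rintro ⟨u, v, h, hv⟩
    have h' : s * 2 ^ (i + 1) + r = u * 2 ^ (i + 1) + (2 ^ i + v) := by rw [← h]; ring
    have hpow : (2 : N) ^ (i + 1) = 2 ^ i + 2 ^ i := by ring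
    obtain ⟨-, rfl⟩ := quotient_remainder_unique h'
      (by rw [hpow]; exact hr.trans_le le_self_add) (by rw [hpow]; exact add_lt_add_right hv _)
    exact absurd hr (not_lt.mpr le_self_add)
  · exact digitB_iff.mpr ⟨s, r, by ring, hr⟩

theorem exists_common_remainder {x y : N} {m : ℕ} (h : ∀ i < m, (digitB x i ↔ digitB y i)) :
    ∃ q q' r, r < 2 ^ m ∧ x = q * 2 ^ m + r ∧ y = q' * 2 ^ m + r := by
  induction m with
  | zero => exact ⟨x, y, 0, by simp, by simp, by simp⟩
  | succ m ih =>
    obtain ⟨q, q', r, hr, rfl, rfl⟩ := ih fun i hi => h i (hi.trans (Nat.lt_succ_self m))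
    have parity (q : N) : ∃ s, q = 2 * s ∨ q = 2 * s + 1 := by
      refine induction_on (P := fun q => ∃ s, q = 2 * s ∨ q = 2 * s + 1) q ⟨0, by simp⟩ ?_
      rintro q ⟨s, rfl | rfl⟩
      · exact ⟨s, .inr rfl⟩
      · exact ⟨s + 1, .inl (by ring)⟩
    obtain ⟨s, hs⟩ := parity q
    obtain ⟨s', hs'⟩ := parity q'
    have hpow : (2 : N) ^ (m + 1) = 2 ^ m + 2 ^ m := by ring
    have hm := h m (Nat.lt_succ_self m)
    obtain rfl | rfl := hs <;> obtain rfl | rfl := hs'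
    · exact ⟨s, s', r, by rw [hpow]; exact hr.trans_le le_self_add, by ring, by ring⟩
    · exact absurd (hm.mpr (digitB_even_or_odd hr).2) (digitB_even_or_odd hr).1
    · exact absurd (hm.mp (digitB_even_or_odd hr).2) (digitB_even_or_odd hr).1
    · exact ⟨s, s', 2 ^ m + r, by rw [hpow]; exact add_lt_add_right hr _, by ring, by ring⟩

theorem internalCard_mul_le {d d' c : N} {n m : ℕ} (hd : d = d' * 2 ^ m)
    {B : ((Fin n → Bool) → N) → Prop} (hB : ∀ b, B b → ∀ τ, b τ < d) (σ : Fin n → Bool)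
    (hσ : ∀ b b', B b → B b' → (∀ τ, τ ≠ σ → b τ = b' τ) →
      ∃ q q' r, r < 2 ^ m ∧ b σ = q * 2 ^ m + r ∧ b' σ = q' * 2 ^ m + r)
    (hc : InternalCard {e | ∃ b, B b ∧ e = tupleCode d b} c) : c * 2 ^ m ≤ d ^ 2 ^ n := by
  obtain ⟨f, hf, hfB⟩ := hc
  have hf' (α : Type) (t : (α → N) → N) [DefFun t] : DefFun fun v => f (t v) := hf.defFun
  have hpos : (0 : N) < 2 ^ m := by positivity
  have hlt {q r t : N} (h : q * 2 ^ m + r < d) (ht : t < 2 ^ m) : q * 2 ^ m + t < d := by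
    have hq : q < d' := by
      by_contra! hq
      refine absurd (le_self_add.trans_lt h) (not_lt.mpr ?_)
      rw [hd]
      gcongr
    obtain ⟨u, rfl⟩ := ltM_iff_exists.mp hq
    calc q * 2 ^ m + t < q * 2 ^ m + 2 ^ m := add_lt_add_right ht _
      _ ≤ q * 2 ^ m + 2 ^ m + u * 2 ^ m := le_self_add
      _ = d := by rw [hd]; ring
  refine le_of_definable_injection (R := fun y z => ∃ x t, y = x * 2 ^ m + t ∧ t < 2 ^ m ∧
    ∃ b : (Fin n → Bool) → N, (∀ τ, b τ < d) ∧ f x = tupleCode d b ∧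
      ∃ q r, b σ = q * 2 ^ m + r ∧ r < 2 ^ m ∧
        z = tupleCode d (Function.update b σ (q * 2 ^ m + t))) ?_ ?_
  · intro y hy
    obtain ⟨x, t, rfl, ht⟩ := exists_quotient_remainder y hpos
    have hx : x < c := lt_of_mul_lt_mul_right (le_self_add.trans_lt hy) zero_le
    obtain ⟨b, hb, hxb⟩ := hfB.mapsTo hx
    obtain ⟨q, r, hqr, hr⟩ := exists_quotient_remainder (b σ) hpos
    refine ⟨_, tupleCode_lt fun τ => ?_, x, t, rfl, ht, b, hB b hb, hxb, q, r, hqr, hr, rfl⟩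
    by_cases hτ : τ = σ
    · subst hτ
      simpa using hlt (hqr ▸ hB b hb τ) ht
    · simpa [hτ] using hB b hb τ
  · rintro _ hy _ hy' z ⟨x, t, rfl, ht, b, hb, hxb, q, r, hqr, hr, rfl⟩
      ⟨x', t', rfl, ht', b', hb', hxb', q', r', hqr', hr', hz⟩
    have hx : x < c := lt_of_mul_lt_mul_right (le_self_add.trans_lt hy) zero_le
    have hx' : x' < c := lt_of_mul_lt_mul_right (le_self_add.trans_lt hy') zero_le
    have hmem {x : N} {b : (Fin n → Bool) → N} (hx : x < c) (hb : ∀ τ, b τ < d)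
        (h : f x = tupleCode d b) : B b := by
      obtain ⟨b₁, hb₁, h₁⟩ := hfB.mapsTo hx
      rwa [tupleCode_injective hb (hB _ hb₁) (h.symm.trans h₁)]
    have hupd {b : (Fin n → Bool) → N} {q r t : N} (hb : ∀ τ, b τ < d) (h : b σ = q * 2 ^ m + r)
        (ht : t < 2 ^ m) (τ) : Function.update b σ (q * 2 ^ m + t) τ < d := by
      by_cases hτ : τ = σ
      · subst hτ
        simpa using hlt (h ▸ hb τ) ht
      · simpa [hτ] using hb τ
    have heq := congrFun (tupleCode_injective (hupd hb hqr ht) (hupd hb' hqr' ht') hz)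
    have hne (τ) (hτ : τ ≠ σ) : b τ = b' τ := by simpa [hτ] using heq τ
    obtain ⟨rfl, rfl⟩ := quotient_remainder_unique (by simpa using heq σ) ht ht'
    obtain ⟨p, p', s, hs, h₁, h₂⟩ := hσ b b' (hmem hx hb hxb) (hmem hx' hb' hxb') hne
    obtain ⟨-, rfl⟩ := quotient_remainder_unique (hqr.symm.trans h₁) hr hs
    obtain ⟨-, rfl⟩ := quotient_remainder_unique (hqr'.symm.trans h₂) hr' hs
    have hbb' : b = b' := by
      funext τ
      by_cases hτ : τ = σ
      · rw [hτ, hqr, hqr']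
      · exact hne τ hτ
    rw [hfB.injOn hx hx' (hxb.trans (hbb' ▸ hxb'.symm))]

theorem exists_eq_mul_two_pow {a d : N} (ha : ¬ IsStd a) (hd : IsPow2 a d) (m : ℕ) :
    ∃ d', d = d' * 2 ^ m := by
  obtain ⟨f, -, -, hf, rfl⟩ := hd
  have hma : (m : N) ≤ a := by
    induction m with
    | zero => simp
    | succ m ih =>
      rw [Nat.cast_succ, ← lt_add_one_iff']
      exact add_lt_add_left (lt_of_le_of_ne ih fun h => ha ⟨m, h.symm⟩) 1
  obtain ⟨e, rfl⟩ := exists_add_of_le hma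
  refine ⟨f e, ?_⟩
  rw [add_comm]
  have key (j : ℕ) (hj : j ≤ m) : f (e + j) = f e * 2 ^ j := by
    induction j with
    | zero => simp
    | succ j ih =>
      have h : e + (j : N) < m + e := by
        rw [add_comm]
        exact add_lt_add_left (Nat.cast_lt.mpr hj) e
      rw [Nat.cast_succ, ← add_assoc]
      refine (hf _ h).trans ?_
      rw [ih (Nat.le_of_succ_le hj)]
      change f e * 2 ^ j + f e * 2 ^ j = _
      ring
  exact key m le_rfl

end TupleCodes

end Arith

namespace Arith

section Counting

variable {N : Type*} [arith.Structure N] [PAModel N]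

theorem exists_internalCard_realizations {d : N} (p : Condition N d)
    {Q : ((Fin p.n → Bool) → N) → Prop} (hQ : DefPred Q) :
    ∃ c, InternalCard {e | ∃ b, RealizesAll p.fmls b ∧ Q b ∧ e = tupleCode d b} c := by
  have h₁ : DefPred fun w : Fin 1 ⊕ (Fin p.n → Bool) → N =>
      RealizesAll p.fmls fun τ => w (.inr τ) := (DefPred.realizesAll p.finite).reindex _
  have h₂ : DefPred fun w : Fin 1 ⊕ (Fin p.n → Bool) → N => Q fun τ => w (.inr τ) :=
    hQ.reindex _
  have h₃ : DefPred fun v : Fin 1 → N =>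
      ∃ b, RealizesAll p.fmls b ∧ Q b ∧ v 0 = tupleCode d b := DefPred.exists_tuple
  refine exists_internalCard (hS := h₃) (B := d ^ 2 ^ p.n) ?_
  rintro _ ⟨b, hb, -, rfl⟩
  exact tupleCode_lt (p.bounded b hb)

theorem eq_zero_of_internalCard_empty {c : N} (h : InternalCard (∅ : Set N) c) : c = 0 := by
  obtain ⟨f, -, hf⟩ := h
  by_contra hc
  exact hf.mapsTo (pos_iff_ne_zero.mpr hc : (0 : N) < c)

theorem mul_internalCard_le {d D : N} (p : Condition N d)
    {P : ℕ → ((Fin p.n → Bool) → N) → Prop} (hP : ∀ i, DefPred (P i)) (K : N)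
    (hK : ∀ i c, InternalCard {e | ∃ b, RealizesAll p.fmls b ∧ P i b ∧ e = tupleCode d b} c →
      K * c ≤ D) (m : ℕ) (c : N)
    (hc : InternalCard
      {e | ∃ b, RealizesAll p.fmls b ∧ (∃ i < m, P i b) ∧ e = tupleCode d b} c) :
    K * c ≤ m * D := by
  induction m generalizing c with
  | zero => simp [eq_zero_of_internalCard_empty (c := c) (by simpa using hc)]
  | succ m ih =>
    obtain ⟨x, hx⟩ := exists_internalCard_realizations p (DefPred.exists_lt_nat hP m)
    obtain ⟨y, hy⟩ := exists_internalCard_realizations p (hP m)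
    have hle : c ≤ x + y := by
      refine internalCard_le_add hx hy hc ?_
      rintro e ⟨b, hb, ⟨i, hi, hib⟩, rfl⟩
      obtain hi | rfl := Nat.lt_succ_iff_lt_or_eq.mp hi
      · exact .inl ⟨b, hb, ⟨i, hi, hib⟩, rfl⟩
      · exact .inr ⟨b, hb, hib, rfl⟩
    calc K * c ≤ K * (x + y) := mul_le_mul_right hle K
      _ = K * x + K * y := by ring
      _ ≤ m * D + D := add_le_add (ih x hx) (hK m y hy)
      _ = _ := by push_cast; ring

theorem two_pow_mul_internalCard_agree_le {a d : N} (ha : ¬ IsStd a) (hd : IsPow2 a d)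
    (p : Condition N d) {k : ℕ} (F : (Fin k → N) → N) (σ : Fin p.n → Bool)
    (σs : Fin k → Fin p.n → Bool) (hσ : ∀ j, σ ≠ σs j) (m : ℕ) (c : N)
    (hc : InternalCard {e : N | ∃ b : (Fin p.n → Bool) → N, RealizesAll p.fmls b ∧
      (∀ i < m, (digitB (b σ) i ↔ digitB (F fun j => b (σs j)) i)) ∧ e = tupleCode d b} c) :
    2 ^ m * c ≤ d ^ 2 ^ p.n := by
  obtain ⟨d', hd'⟩ := exists_eq_mul_two_pow ha hd m
  rw [mul_comm]
  simp only [← and_assoc] at hc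
  refine internalCard_mul_le hd' (fun b hb => p.bounded b hb.1) σ ?_ hc
  intro b b' hb hb' hbb'
  refine exists_common_remainder fun i hi => ?_
  rw [hb.2 i hi, hb'.2 i hi, funext fun j => hbb' (σs j) (hσ j).symm]

end Counting

end Arith

open Arith in
/-- The counting lemma.  Let `p` be a condition with `n = n_p`, `F : N^k → N` definable
in `N`, and `(σ, σ₁, …, σ_k)` a tuple from `2^n` with `σ ∉ {σ₁, …, σ_k}`.  Then for each
`m ∈ ω`, internally in `N`, the set of realizations of `p` on which the first `m` binary
digits of `b_σ` agree with those of `F(b_{σ₁}, …, b_{σ_k})` has cardinality at most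
`2^{-m}·(2^a)^{2^n}`; consequently there are `i ∈ ω` and a positive rational `ε = u/v`
such that the set of realizations with `(b_σ)_i ≠ (F(b_{σ₁}, …, b_{σ_k}))_i` has
internal cardinality greater than `ε·(2^a)^{2^n}`. -/
theorem statement_17 (N : Type*) [arith.Structure N] (hN : NonstandardModel N)
    (a d : N) (ha : ¬ IsStd a) (hd : IsPow2 a d)
    (p : Condition N d) (k : ℕ) (F : (Fin k → N) → N) (hF : DefinableFun F)
    (σ : Fin p.n → Bool) (σs : Fin k → Fin p.n → Bool) (hσ : ∀ j, σ ≠ σs j) :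
    (∀ m : ℕ, ∀ c : N,
      InternalCard {e : N | ∃ b : (Fin p.n → Bool) → N, RealizesAll p.fmls b ∧
          (∀ i < m, (digitB (b σ) i ↔ digitB (F fun j => b (σs j)) i)) ∧
          e = tupleCode d b} c →
        leM (mulM (numeral N (2 ^ m)) c) (powStd d (2 ^ p.n))) ∧
    (∃ (i u v : ℕ) (c : N), 0 < u ∧ 0 < v ∧
      InternalCard {e : N | ∃ b : (Fin p.n → Bool) → N, RealizesAll p.fmls b ∧
          ¬ (digitB (b σ) i ↔ digitB (F fun j => b (σs j)) i) ∧
          e = tupleCode d b} c ∧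
      ltM (mulM (numeral N u) (powStd d (2 ^ p.n))) (mulM (numeral N v) c)) := by
  have : PAModel N := ⟨hN.1⟩
  have agree := two_pow_mul_internalCard_agree_le ha hd p F σ σs hσ
  refine ⟨fun m c hc => ?_, ?_⟩
  · change ((2 ^ m : ℕ) : N) * c ≤ d ^ 2 ^ p.n
    simpa using agree m c hc
  have hFσ : DefFun fun b : (Fin p.n → Bool) → N => F fun j => b (σs j) :=
    hF.defFun fun j => inferInstance
  obtain ⟨u, v, c, hu, hv, hc, hlarge⟩ := p.large
  change (u : N) * d ^ 2 ^ p.n < v * c at hlarge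
  by_contra hsmall
  have hdis (i : ℕ) : DefPred fun b : (Fin p.n → Bool) → N =>
      ¬ (digitB (b σ) i ↔ digitB (F fun j => b (σs j)) i) := inferInstance
  have hdiscard := mul_internalCard_le p hdis ((2 * v * (2 * v) : ℕ) : N) (D := d ^ 2 ^ p.n)
    fun i c hc => by
      have h : ¬ ((1 : ℕ) : N) * d ^ 2 ^ p.n < ((2 * v * (2 * v) : ℕ) : N) * c :=
        fun hlt => hsmall ⟨i, 1, _, c, one_pos, by positivity, hc, hlt⟩
      rwa [Nat.cast_one, one_mul, not_lt] at h
  obtain ⟨t, ht⟩ := exists_internalCard_realizations p (DefPred.exists_lt_nat hdis (2 * v))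
  obtain ⟨s, hs⟩ := exists_internalCard_realizations p
    (DefPred.exists_lt_nat hdis (2 * v)).not
  have hle : c ≤ s + t := by
    refine internalCard_le_add hs ht hc ?_
    rintro e ⟨b, hb, rfl⟩
    by_cases h : ∃ i < 2 * v, ¬ (digitB (b σ) i ↔ digitB (F fun j => b (σs j)) i)
    · exact .inr ⟨b, hb, h, rfl⟩
    · exact .inl ⟨b, hb, h, rfl⟩
  have hs' : ((2 * v : ℕ) : N) * s ≤ d ^ 2 ^ p.n := by
    refine le_trans (mul_le_mul_left ?_ s) (agree (2 * v) s (by simpa using hs))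
    exact_mod_cast (Nat.lt_two_pow_self (n := 2 * v)).le
  have ht' : ((2 * v : ℕ) : N) * t ≤ d ^ 2 ^ p.n := by
    have h := hdiscard (2 * v) t ht
    rw [Nat.cast_mul, mul_assoc] at h
    exact le_of_mul_le_mul_left h (Nat.cast_pos.mpr (by positivity))
  have hvc : (v : N) * c ≤ d ^ 2 ^ p.n := by
    refine le_of_mul_le_mul_left (a := (2 : N)) ?_ two_pos
    calc 2 * ((v : N) * c) = ((2 * v : ℕ) : N) * c := by push_cast; ring
      _ ≤ ((2 * v : ℕ) : N) * (s + t) := mul_le_mul_right hle _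
      _ = ((2 * v : ℕ) : N) * s + ((2 * v : ℕ) : N) * t := by ring
      _ ≤ d ^ 2 ^ p.n + d ^ 2 ^ p.n := add_le_add hs' ht'
      _ = 2 * d ^ 2 ^ p.n := by ring
  refine absurd (hvc.trans ?_) (not_le.mpr hlarge)
  exact le_mul_of_one_le_left zero_le (Nat.one_le_cast.mpr hu)
end
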